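/- arXiv:2410.21700 — 2 statements merged into one kernel-verified Lean document; each statement's English description precedes it below -/
import Mathlib

section
/- There exists a bounded g : ℤ → ℝ with δ(g) = 0 such that the discrete Schrödinger operator H_g has SULE. -/
noncomputable section

open Filter Real

def distToInt (x : ℝ) : ℝ := |x - round x|

def IsDiophantine (α : ℝ) : Prop :=
  ∃ κ τ : ℝ, 0 < κ ∧ 0 < τ ∧ ∀ k : ℤ, k ≠ 0 → τ / |(k : ℝ)| ^ κ ≤ distToInt (k * α)

def deltaPhase (α θ : ℝ) : ℝ :=
  limsup (fun n : ℤ => -Real.log (distToInt (2 * θ + n * α)) / |(n : ℝ)|) cofinite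

def amoPot (lam α θ : ℝ) : ℤ → ℝ := fun n => 2 * lam * Real.cos (2 * Real.pi * (θ + n * α))

def IsEigenfunction (g : ℤ → ℝ) (E : ℝ) (φ : ℤ → ℝ) : Prop :=
  ∀ n : ℤ, φ (n + 1) + φ (n - 1) + g n * φ n = E * φ n

def deltaPot (g : ℤ → ℝ) : ℝ :=
  limsup (fun n : ℤ => -Real.log (⨆ m : ℤ, |g (n - m) - g m|) / |(n : ℝ)|) cofinite

def matNorm (M : Matrix (Fin 2) (Fin 2) ℝ) : ℝ := ⨆ p : Fin 2 × Fin 2, |M p.1 p.2|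

def transfer (g : ℤ → ℝ) (E : ℝ) : ℕ → ℤ → Matrix (Fin 2) (Fin 2) ℝ
  | 0, _ => 1
  | n + 1, k => !![E - g (k + n), -1; 1, 0] * transfer g E n k

def LyapSup (g : ℤ → ℝ) (E : ℝ) : ℝ :=
  limsup (fun n : ℕ => ⨆ k : ℤ, Real.log (matNorm (transfer g E n k)) / n) atTop

def HasSULE (g : ℤ → ℝ) : Prop :=
  ∃ (Φ : HilbertBasis ℕ ℝ (lp (fun _ : ℤ => ℝ) 2)) (ns : ℕ → ℤ) (γ : ℝ),
    0 < γ ∧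
    (∀ s : ℕ, ∃ E : ℝ, IsEigenfunction g E (fun n => Φ s n)) ∧
    ∀ ε : ℝ, 0 < ε → ∃ C : ℝ,
      ∀ (s : ℕ) (n : ℤ),
        |Φ s n| ≤ C * Real.exp (ε * |(ns s : ℝ)|) * Real.exp (-γ * |(n : ℝ) - (ns s : ℝ)|)

open MeasureTheory in
theorem Loc.int_half : ∫⁻ v in Set.Icc (-1:ℝ) 1, (ENNReal.ofReal |v|) ^ (-(1/2):ℝ) ≤ 4 := by
  have h1 : ∫⁻ v in Set.Ioc (0:ℝ) 1, (ENNReal.ofReal |v|) ^ (-(1/2):ℝ) = 2 := by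
    have e : ∀ v ∈ Set.Ioc (0:ℝ) 1, (ENNReal.ofReal |v|) ^ (-(1/2):ℝ)
        = ENNReal.ofReal (v ^ (-(1/2):ℝ)) := by
      intro v hv
      rw [abs_of_pos hv.1, ENNReal.ofReal_rpow_of_pos hv.1]
    rw [setLIntegral_congr_fun measurableSet_Ioc e]
    have hi : IntervalIntegrable (fun v : ℝ => v ^ (-(1/2):ℝ)) volume 0 1 :=
      intervalIntegral.intervalIntegrable_rpow' (by norm_num)
    rw [intervalIntegrable_iff_integrableOn_Ioc_of_le zero_le_one] at hi
    rw [← ofReal_integral_eq_lintegral_ofReal hi, ← intervalIntegral.integral_of_le zero_le_one,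
      integral_rpow (Or.inl (by norm_num))]
    · norm_num
    · filter_upwards [ae_restrict_mem measurableSet_Ioc] with v hv
      exact Real.rpow_nonneg hv.1.le _
  have h2 : ∫⁻ v in Set.Ico (-1:ℝ) 0, (ENNReal.ofReal |v|) ^ (-(1/2):ℝ) = 2 := by
    rw [← h1, ← lintegral_indicator measurableSet_Ico, ← lintegral_indicator measurableSet_Ioc,
      ← lintegral_neg_eq_self]
    congr 1
    ext v
    simp only [Set.indicator, Set.mem_Ico, Set.mem_Ioc, abs_neg]
    congr 1
    apply propext
    constructor <;> rintro ⟨a, b⟩ <;> constructor <;> linarith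
  have h3 : Set.Icc (-1:ℝ) 1 ⊆ (Set.Ico (-1:ℝ) 0 ∪ {0}) ∪ Set.Ioc 0 1 := by
    intro v hv
    rcases lt_trichotomy v 0 with h | h | h
    · exact Or.inl (Or.inl ⟨hv.1, h⟩)
    · exact Or.inl (Or.inr h)
    · exact Or.inr ⟨h, hv.2⟩
  calc _ ≤ ∫⁻ v in (Set.Ico (-1:ℝ) 0 ∪ {0}) ∪ Set.Ioc 0 1, (ENNReal.ofReal |v|) ^ (-(1/2):ℝ) :=
        lintegral_mono_set h3
    _ ≤ _ := lintegral_union_le _ _ _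
    _ ≤ ((∫⁻ v in (Set.Ico (-1:ℝ) 0), (ENNReal.ofReal |v|) ^ (-(1/2):ℝ))
        + ∫⁻ v in ({0} : Set ℝ), (ENNReal.ofReal |v|) ^ (-(1/2):ℝ)) + _ :=
        add_le_add (lintegral_union_le _ _ _) le_rfl
    _ ≤ 4 := by
        rw [h1, h2]
        simp
        norm_num

open MeasureTheory in
theorem Loc.int_shift (e c : ℝ) :
    ∫⁻ v in Set.Icc c (c+1), (ENNReal.ofReal |v - e|) ^ (-(1/2):ℝ) ≤ 5 := by
  have key : ∀ v, (ENNReal.ofReal |v - e|) ^ (-(1/2):ℝ) ≤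
      1 + (Set.Icc (-1:ℝ) 1).indicator (fun v => (ENNReal.ofReal |v|) ^ (-(1/2):ℝ)) (v - e) := by
    intro v
    by_cases h : v - e ∈ Set.Icc (-1:ℝ) 1
    · rw [Set.indicator_of_mem h]; exact le_add_self
    · rw [Set.indicator_of_notMem h, add_zero]
      have h1 : 1 ≤ |v - e| := by
        by_contra hh
        push Not at hh
        exact h ⟨(abs_lt.1 hh).1.le, (abs_lt.1 hh).2.le⟩
      have h2 : (1:ENNReal) ≤ ENNReal.ofReal |v - e| := by
        rw [← ENNReal.ofReal_one]; exact ENNReal.ofReal_le_ofReal h1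
      exact ENNReal.rpow_le_one_of_one_le_of_neg h2 (by norm_num)
  calc _ ≤ ∫⁻ v in Set.Icc c (c+1), (1 + (Set.Icc (-1:ℝ) 1).indicator
          (fun v => (ENNReal.ofReal |v|) ^ (-(1/2):ℝ)) (v - e)) := lintegral_mono key
    _ = 1 + ∫⁻ v in Set.Icc c (c+1), (Set.Icc (-1:ℝ) 1).indicator
          (fun v => (ENNReal.ofReal |v|) ^ (-(1/2):ℝ)) (v - e) := by
        rw [lintegral_add_left measurable_const]; simp
    _ ≤ 1 + ∫⁻ v, (Set.Icc (-1:ℝ) 1).indicator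
          (fun v => (ENNReal.ofReal |v|) ^ (-(1/2):ℝ)) (v - e) := by
        gcongr; exact Measure.restrict_le_self
    _ = 1 + ∫⁻ v, (Set.Icc (-1:ℝ) 1).indicator
          (fun v => (ENNReal.ofReal |v|) ^ (-(1/2):ℝ)) v := by
        congr 1
        exact lintegral_sub_right_eq_self (fun v => (Set.Icc (-1:ℝ) 1).indicator
          (fun v => (ENNReal.ofReal |v|) ^ (-(1/2):ℝ)) v) e
    _ ≤ 1 + 4 := by
        rw [lintegral_indicator measurableSet_Icc]
        gcongr; exact Loc.int_half
    _ = 5 := by norm_num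

open MeasureTheory in
theorem Loc.int_lin (E a b c : ℝ) :
    ∫⁻ v in Set.Icc c (c+1), (ENNReal.ofReal |(E - 400 * v) * a - b|) ^ (-(1/2):ℝ)
      ≤ ENNReal.ofReal (1/4) * (ENNReal.ofReal |a|) ^ (-(1/2):ℝ) := by
  rcases eq_or_ne a 0 with rfl | ha
  · simp [ENNReal.zero_rpow_of_neg, ENNReal.mul_top]
  · have h1 : ∀ v, |(E - 400 * v) * a - b| = (400 * |a|) * |v - (E * a - b)/(400*a)| := by
      intro v
      have : (E - 400 * v) * a - b = -((400 * a) * (v - (E * a - b)/(400*a))) := by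
        field_simp; ring
      rw [this, abs_neg, abs_mul, abs_mul]; norm_num
    have h2 : ∀ v, (ENNReal.ofReal |(E - 400 * v) * a - b|) ^ (-(1/2):ℝ) =
        ENNReal.ofReal (1/20) * (ENNReal.ofReal |a|) ^ (-(1/2):ℝ) *
          (ENNReal.ofReal |v - (E * a - b)/(400*a)|) ^ (-(1/2):ℝ) := by
      intro v
      rw [h1, ENNReal.ofReal_mul (by positivity),
        ENNReal.mul_rpow_of_ne_top ENNReal.ofReal_ne_top ENNReal.ofReal_ne_top,
        ENNReal.ofReal_mul (by positivity), ENNReal.mul_rpow_of_ne_top (by simp) (by simp)]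
      congr 2
      rw [ENNReal.ofReal_rpow_of_pos (by norm_num)]
      congr 1
      rw [Real.rpow_neg (by norm_num), ← Real.sqrt_eq_rpow,
        show (400:ℝ) = 20^2 by norm_num, Real.sqrt_sq (by norm_num)]
      norm_num
    simp_rw [h2]
    rw [lintegral_const_mul _ (by fun_prop)]
    calc _ ≤ ENNReal.ofReal (1/20) * (ENNReal.ofReal |a|) ^ (-(1/2):ℝ) * 5 := by
          gcongr; exact Loc.int_shift _ _
      _ = _ := by
          rw [mul_right_comm]
          congr 1
          rw [show (5:ENNReal) = ENNReal.ofReal 5 by simp, ← ENNReal.ofReal_mul (by norm_num)]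
          norm_num

/-- Solution of the eigenvalue equation started at the end point `σ * N`. -/
def Loc.U (σ N : ℤ) (E : ℝ) (V : ℤ → ℝ) : ℕ → ℝ
  | 0 => 0
  | 1 => 1
  | j + 2 => (E - 400 * V (σ * (N - j))) * Loc.U σ N E V (j + 1) - Loc.U σ N E V j

def Loc.dU (σ N : ℤ) (E : ℝ) (V : ℤ → ℝ) : ℕ → ℝ
  | 0 => 0
  | 1 => 0
  | j + 2 => (E - 400 * V (σ * (N - j))) * Loc.dU σ N E V (j + 1) + Loc.U σ N E V (j + 1)
      - Loc.dU σ N E V j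

theorem Loc.two_step {P : ℕ → Prop} (h0 : P 0) (h1 : P 1)
    (h : ∀ j, P j → P (j + 1) → P (j + 2)) (j : ℕ) : P j := by
  have : P j ∧ P (j + 1) := by
    induction j with
    | zero => exact ⟨h0, h1⟩
    | succ k ih => exact ⟨ih.2, h k ih.1 ih.2⟩
  exact this.1

theorem Loc.U_hasDeriv (σ N : ℤ) (E : ℝ) (V : ℤ → ℝ) (j : ℕ) :
    HasDerivAt (fun E => Loc.U σ N E V j) (Loc.dU σ N E V j) E := by
  induction j using Loc.two_step with
  | h0 => simpa [Loc.U, Loc.dU] using hasDerivAt_const E (0:ℝ)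
  | h1 => simpa [Loc.U, Loc.dU] using hasDerivAt_const E (1:ℝ)
  | h j h1 h2 =>
    simp only [Loc.U, Loc.dU]
    have := (((hasDerivAt_id E).sub_const (400 * V (σ * (N - j)))).mul h2).sub h1
    refine this.congr_deriv ?_
    simp; ring

theorem Loc.wronsk (σ N : ℤ) (E : ℝ) (V : ℤ → ℝ) (j : ℕ) :
    Loc.dU σ N E V (j+1) * Loc.U σ N E V j - Loc.U σ N E V (j+1) * Loc.dU σ N E V j
      = ∑ i ∈ Finset.range (j+1), Loc.U σ N E V i ^ 2 := by
  induction j with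
  | zero => simp [Loc.U, Loc.dU]
  | succ j ih =>
    rw [Finset.sum_range_succ, ← ih]
    simp only [Loc.U, Loc.dU]
    ring

theorem Loc.U_congr (σ N : ℤ) (E : ℝ) (V V' : ℤ → ℝ) (j : ℕ)
    (h : ∀ i : ℕ, i + 1 < j → V (σ * (N - i)) = V' (σ * (N - i))) :
    Loc.U σ N E V j = Loc.U σ N E V' j := by
  induction j using Loc.two_step with
  | h0 => rfl
  | h1 => rfl
  | h j h1 h2 =>
    simp only [Loc.U]
    rw [h j (by omega), h1 (fun i hi => h i (by omega)), h2 (fun i hi => h i (by omega))]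

theorem Loc.U_cont (σ N : ℤ) (j : ℕ) :
    Continuous (fun p : ℝ × (ℤ → ℝ) => Loc.U σ N p.1 p.2 j) := by
  induction j using Loc.two_step with
  | h0 => simpa [Loc.U] using continuous_const
  | h1 => simpa [Loc.U] using continuous_const
  | h j h1 h2 =>
    simp only [Loc.U]
    fun_prop

structure Loc.EigOn (N : ℤ) (V : ℤ → ℝ) (E : ℝ) (φ : ℤ → ℝ) : Prop where
  out : ∀ n, n ∉ Finset.Icc (-N) N → φ n = 0
  eig : ∀ n ∈ Finset.Icc (-N) N, φ (n+1) + φ (n-1) + 400 * V n * φ n = E * φ n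
  norm : ∑ n ∈ Finset.Icc (-N) N, φ n ^ 2 = 1

theorem Loc.EigOn.sol {N : ℤ} {V : ℤ → ℝ} {E : ℝ} {φ : ℤ → ℝ} (h : Loc.EigOn N V E φ)
    {σ : ℤ} (hσ : σ = 1 ∨ σ = -1) (j : ℕ) (hj : (j:ℤ) ≤ 2 * N + 2) :
    φ (σ * (N + 1 - j)) = φ (σ * N) * Loc.U σ N E V j := by
  induction j using Loc.two_step with
  | h0 =>
    simp only [Loc.U, mul_zero]
    apply h.out
    rcases hσ with rfl | rfl <;> simp
  | h1 =>
    simp [Loc.U]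
  | h j h1 h2 =>
    have h1 := h1 (by push_cast at *; omega)
    have h2 := h2 (by push_cast at *; omega)
    have e := h.eig (σ * (N - j)) (by
      push_cast at hj
      rcases hσ with rfl | rfl <;> simp <;> omega)
    simp only [Loc.U]
    push_cast at *
    rcases hσ with rfl | rfl
    · rw [show (1:ℤ) * (N + 1 - (j + 2)) = 1 * (N - j) - 1 by ring]
      rw [show (1:ℤ) * (N + 1 - (j + 1)) = 1 * (N - j) by ring] at h2
      rw [show (1:ℤ) * (N + 1 - j) = 1 * (N - j) + 1 by ring] at h1
      rw [h1, h2] at e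
      linear_combination e
    · rw [show (-1:ℤ) * (N + 1 - (j + 2)) = -1 * (N - j) + 1 by ring]
      rw [show (-1:ℤ) * (N + 1 - (j + 1)) = -1 * (N - j) by ring] at h2
      rw [show (-1:ℤ) * (N + 1 - j) = -1 * (N - j) - 1 by ring] at h1
      rw [h1, h2] at e
      linear_combination e

theorem Loc.sum_split (N x : ℤ) (p p' : ℕ) (hp : (p:ℤ) = N - x) (hp' : (p':ℤ) = N + x)
    (f : ℤ → ℝ) (hf : ∀ n, n ∉ Finset.Icc (-N) N → f n = 0) :
    ∑ n ∈ Finset.Icc (-N) N, f n = f x + ∑ j ∈ Finset.range (p+1), f (1 * (N + 1 - j))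
      + ∑ j ∈ Finset.range (p'+1), f (-1 * (N + 1 - j)) := by
  have h1 : ∑ j ∈ Finset.range (p+1), f (1 * (N + 1 - j)) = ∑ n ∈ Finset.Icc (x+1) (N+1), f n := by
    apply Finset.sum_nbij' (fun j : ℕ => (1 * (N + 1 - j) : ℤ)) (fun n : ℤ => (N + 1 - n).toNat)
    all_goals simp
    all_goals intros
    all_goals omega
  have h2 : ∑ j ∈ Finset.range (p'+1), f (-1 * (N + 1 - j))
      = ∑ n ∈ Finset.Icc (-(N+1)) (x-1), f n := by
    apply Finset.sum_nbij' (fun j : ℕ => (-1 * (N + 1 - j) : ℤ)) (fun n : ℤ => (N + 1 + n).toNat)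
    all_goals simp
    all_goals intros
    all_goals omega
  have h3 : ∑ n ∈ Finset.Icc (-N) N, f n = ∑ n ∈ Finset.Icc (-(N+1)) (N+1), f n := by
    apply Finset.sum_subset
    · intro n; simp; omega
    · intro n _ hn; exact hf n hn
  rw [h1, h2, h3, show Finset.Icc (-(N+1)) (N+1) =
    insert x (Finset.Icc (x+1) (N+1) ∪ Finset.Icc (-(N+1)) (x-1)) by
      ext n; simp; omega, Finset.sum_insert (by simp), Finset.sum_union]
  · ring
  · rw [Finset.disjoint_left]; intro n; simp; omega

def Loc.J : Set ℝ := Set.Icc (-2) 1202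

def Loc.Bad (N x y : ℤ) (w τ : ℝ) : Set (ℤ → ℝ) :=
  {V | ∃ E ∈ Loc.J, ∃ φ, Loc.EigOn N V E φ ∧ w ≤ φ x ^ 2 ∧ τ ^ 2 * |φ x| ≤ |φ y|}

theorem Loc.EigOn.abs_le {N : ℤ} {V : ℤ → ℝ} {E : ℝ} {φ : ℤ → ℝ} (h : Loc.EigOn N V E φ)
    (n : ℤ) : |φ n| ≤ 1 := by
  by_cases hn : n ∈ Finset.Icc (-N) N
  · have := Finset.single_le_sum (f := fun n => φ n ^ 2) (fun i _ => sq_nonneg _) hn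
    simp only [h.norm] at this
    exact (sq_le_one_iff_abs_le_one _).1 this
  · rw [h.out n hn]; simp

theorem Loc.Bad_closed (N x y : ℤ) (w τ : ℝ) : IsClosed (Loc.Bad N x y w τ) := by
  let C : Set (ℤ → ℝ) := Set.univ.pi fun _ => Set.Icc (-1) 1
  have hC : CompactSpace C := isCompact_iff_compactSpace.1
    (isCompact_univ_pi fun _ => isCompact_Icc)
  have hJ : CompactSpace Loc.J := isCompact_iff_compactSpace.1 isCompact_Icc
  let Q : Set ((Loc.J × C) × (ℤ → ℝ)) := {q |
    (∀ n, n ∉ Finset.Icc (-N) N → (q.1.2 : ℤ → ℝ) n = 0) ∧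
    (∀ n, n ∈ Finset.Icc (-N) N → (q.1.2 : ℤ → ℝ) (n+1) + (q.1.2 : ℤ → ℝ) (n-1)
      + 400 * q.2 n * (q.1.2 : ℤ → ℝ) n = q.1.1 * (q.1.2 : ℤ → ℝ) n) ∧
    (∑ n ∈ Finset.Icc (-N) N, (q.1.2 : ℤ → ℝ) n ^ 2 = 1) ∧
    (w ≤ (q.1.2 : ℤ → ℝ) x ^ 2) ∧ τ ^ 2 * |(q.1.2 : ℤ → ℝ) x| ≤ |(q.1.2 : ℤ → ℝ) y|}
  have hφ : ∀ n, Continuous fun q : (Loc.J × C) × (ℤ → ℝ) => (q.1.2 : ℤ → ℝ) n := by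
    exact fun n => (continuous_apply n).comp
      (continuous_subtype_val.comp (continuous_snd.comp continuous_fst))
  have hQ : IsClosed Q := by
    refine IsClosed.inter (s₁ := {q | _}) (s₂ := {q | _}) ?_ (IsClosed.inter (s₁ := {q | _})
      (s₂ := {q | _}) ?_ (IsClosed.inter (s₁ := {q | _}) (s₂ := {q | _}) ?_
      (IsClosed.inter (s₁ := {q | _}) (s₂ := {q | _}) ?_ ?_)))
    · simp only [Set.ofPred_forall]
      exact isClosed_iInter fun n => isClosed_iInter fun _ => isClosed_eq (hφ n) continuous_const
    · simp only [Set.ofPred_forall]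
      refine isClosed_iInter fun n => isClosed_iInter fun _ => isClosed_eq ?_ ?_
      · fun_prop
      · fun_prop
    · exact isClosed_eq (by fun_prop) continuous_const
    · exact isClosed_le continuous_const ((hφ x).pow 2)
    · exact isClosed_le (continuous_const.mul (hφ x).abs) (hφ y).abs
  have : Loc.Bad N x y w τ = Prod.snd '' Q := by
    ext V
    constructor
    · rintro ⟨E, hE, φ, h, h1, h2⟩
      refine ⟨((⟨E, hE⟩, ⟨φ, fun n _ => abs_le.1 (h.abs_le n)⟩), V), ⟨h.out, h.eig, h.norm, h1, h2⟩, rfl⟩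
    · rintro ⟨⟨⟨E, φ⟩, V'⟩, ⟨h1, h2, h3, h4, h5⟩, rfl⟩
      exact ⟨E, E.2, φ, ⟨h1, h2, h3⟩, h4, h5⟩
  rw [this]
  exact isClosedMap_snd_of_compactSpace _ hQ

def Loc.cc (n : ℤ) : ℝ := if n = 0 then 2 else 0

def Loc.mu (n : ℤ) : MeasureTheory.Measure ℝ :=
  MeasureTheory.volume.restrict (Set.Icc (Loc.cc n) (Loc.cc n + 1))

instance Loc.mu_prob (n : ℤ) : MeasureTheory.IsProbabilityMeasure (Loc.mu n) :=
  ⟨by simp [Loc.mu]⟩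

def Loc.h (σ N : ℤ) (r p : ℕ) (E : ℝ) (V : ℤ → ℝ) : ENNReal :=
  (ENNReal.ofReal |Loc.U σ N E V (r+1)|) ^ (1/2:ℝ) *
    (ENNReal.ofReal |Loc.U σ N E V (p+1)|) ^ (-(1/2):ℝ)

theorem Loc.h_meas (σ N : ℤ) (r p : ℕ) :
    Measurable (fun q : ℝ × (ℤ → ℝ) => Loc.h σ N r p q.1 q.2) := by
  have h1 := (Loc.U_cont σ N (r+1)).measurable
  have h2 := (Loc.U_cont σ N (p+1)).measurable
  unfold Loc.h
  fun_prop

def Loc.sites (σ N : ℤ) (r j : ℕ) : Finset ℤ :=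
  (Finset.range j).image (fun i : ℕ => σ * (N - (r + i)))

open MeasureTheory in
theorem Loc.marg {σ : ℤ} (hσ : σ = 1 ∨ σ = -1) (N : ℤ) (r : ℕ) (E : ℝ) (j : ℕ) (V : ℤ → ℝ) :
    lmarginal Loc.mu (Loc.sites σ N r j) (fun V => Loc.h σ N r (r+j) E V) V
      ≤ ENNReal.ofReal (1/4) ^ j := by
  have hinj : ∀ a b : ℤ, σ * a = σ * b → a = b := by
    rcases hσ with rfl | rfl <;> intros <;> omega
  induction j with
  | zero =>
    simp only [Loc.sites, Finset.range_zero, Finset.image_empty, lmarginal_empty, add_zero, pow_zero,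
      Loc.h]
    rcases eq_or_ne (Loc.U σ N E V (r+1)) 0 with h | h
    · rw [h]; simp
    · rw [← ENNReal.rpow_add _ _ (by simpa using h) ENNReal.ofReal_ne_top]; simp
  | succ j ih =>
    have hm : ∀ r p, Measurable fun V => Loc.h σ N r p E V := fun r p =>
      (Loc.h_meas σ N r p).comp (measurable_const.prodMk measurable_id)
    have hs : Loc.sites σ N r (j+1) = insert (σ * (N - (r + j))) (Loc.sites σ N r j) := by
      simp [Loc.sites, Finset.range_add_one, Finset.image_insert]
    have hn : σ * (N - (r + j)) ∉ Loc.sites σ N r j := by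
      simp only [Loc.sites, Finset.mem_image, Finset.mem_range, not_exists, not_and]
      intro i hi h
      have := hinj _ _ h
      omega
    rw [hs, lmarginal_insert' _ (hm _ _) hn]
    have key : (fun V => ∫⁻ a, Loc.h σ N r (r + (j+1)) E
        (Function.update V (σ * (N - (r + j))) a) ∂Loc.mu (σ * (N - (r + j)))) ≤
        fun V => ENNReal.ofReal (1/4) * Loc.h σ N r (r+j) E V := by
      intro V
      have e : ∀ a, Loc.h σ N r (r + (j+1)) E (Function.update V (σ * (N - (r + j))) a) =
          (ENNReal.ofReal |Loc.U σ N E V (r+1)|) ^ (1/2:ℝ) *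
          (ENNReal.ofReal |(E - 400 * a) * Loc.U σ N E V (r+j+1) - Loc.U σ N E V (r+j)|)
            ^ (-(1/2):ℝ) := by
        intro a
        have c : ∀ k, k ≤ r + j + 1 → Loc.U σ N E (Function.update V (σ * (N - (r + j))) a) k
            = Loc.U σ N E V k := by
          intro k hk
          apply Loc.U_congr
          intro i hi
          rw [Function.update_of_ne]
          intro h
          have := hinj _ _ h
          omega
        simp only [Loc.h]
        rw [c _ (by omega), show r + (j+1) + 1 = (r+j) + 2 by ring, Loc.U, c _ (by omega),
          c _ (by omega)]
        push_cast
        rw [Function.update_self]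
      simp_rw [e]
      rw [lintegral_const_mul _ (by fun_prop)]
      calc _ ≤ (ENNReal.ofReal |Loc.U σ N E V (r+1)|) ^ (1/2:ℝ) * (ENNReal.ofReal (1/4) *
              (ENNReal.ofReal |Loc.U σ N E V (r+j+1)|) ^ (-(1/2):ℝ)) := by
            gcongr
            exact Loc.int_lin _ _ _ _
        _ = _ := by simp only [Loc.h]; ring
    refine (lmarginal_mono key V).trans ?_
    have : lmarginal Loc.mu (Loc.sites σ N r j)
        (fun V => ENNReal.ofReal (1/4) * Loc.h σ N r (r+j) E V) V =
        ENNReal.ofReal (1/4) * lmarginal Loc.mu (Loc.sites σ N r j)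
        (fun V => Loc.h σ N r (r+j) E V) V := by
      simp only [lmarginal]
      rw [lintegral_const_mul]
      exact (hm _ _).comp measurable_updateFinset
    rw [this, pow_succ, mul_comm]
    gcongr

open MeasureTheory in
theorem Loc.image_le (S : Set ℝ) (hS : MeasurableSet S) (v v' : ℝ → ℝ) (K : ℝ)
    (hv : ∀ E ∈ S, HasDerivAt v (v' E) E) (hK : ∀ E ∈ S, |v' E| ≤ K) :
    volume (v '' S) ≤ ENNReal.ofReal K * volume S := by
  refine (addHaar_image_le_lintegral_abs_det_fderiv volume hS
    (fun x hx => (hv x hx).hasFDerivAt.hasFDerivWithinAt)).trans ?_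
  calc _ ≤ ∫⁻ x in S, ENNReal.ofReal K := by
        apply setLIntegral_mono' hS
        intro x hx
        apply ENNReal.ofReal_le_ofReal
        simpa using hK x hx
    _ = _ := by simp

open MeasureTheory in
theorem Loc.sect {σ : ℤ} (hσ : σ = 1 ∨ σ = -1) (N x y : ℤ) (p r : ℕ) (hx : x = σ * (N - p))
    (hy : y = σ * (N - r)) (hrp : r < p) (hp : (p:ℤ) ≤ 2 * N) (w τ : ℝ) (hw : 0 < w) (hτ : 0 < τ)
    (V : ℤ → ℝ) :
    ∫⁻ a, (Loc.Bad N x y w τ).indicator 1 (Function.update V x a) ∂(Loc.mu x) ≤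
      ENNReal.ofReal (1/(400*w)) * ((ENNReal.ofReal τ)⁻¹ * ∫⁻ E in Loc.J, Loc.h σ N r p E V) := by
  obtain ⟨q, hq⟩ : ∃ q : ℕ, (q:ℤ) = N - x := ⟨(N-x).toNat, by
    rcases hσ with rfl | rfl <;> omega⟩
  obtain ⟨q', hq'⟩ : ∃ q : ℕ, (q:ℤ) = N + x := ⟨(N+x).toNat, by
    rcases hσ with rfl | rfl <;> omega⟩
  let A : ℝ → ℕ → ℝ := fun E => Loc.U 1 N E V
  let B : ℝ → ℕ → ℝ := fun E => Loc.U (-1) N E V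
  let v : ℝ → ℝ := fun E => (E - A E q / A E (q+1) - B E q' / B E (q'+1)) / 400
  let v' : ℝ → ℝ := fun E => (1 + (∑ i ∈ Finset.range (q+1), A E i ^ 2) / A E (q+1) ^ 2
    + (∑ i ∈ Finset.range (q'+1), B E i ^ 2) / B E (q'+1) ^ 2) / 400
  have hUm : ∀ s j, Measurable fun E => Loc.U s N E V j := fun s j =>
    ((Loc.U_cont s N j).comp (by fun_prop : Continuous fun E : ℝ => (E, V))).measurable
  have hAm : ∀ j, Measurable fun E => A E j := hUm 1
  have hBm : ∀ j, Measurable fun E => B E j := hUm (-1)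
  have hhm : Measurable fun E => Loc.h σ N r p E V :=
    (Loc.h_meas σ N r p).comp (measurable_id.prodMk measurable_const)
  have hv'm : Measurable v' := by
    simp only [v']
    fun_prop
  let S : Set ℝ := (Loc.J ∩ {E | ENNReal.ofReal τ ≤ Loc.h σ N r p E V}) ∩ ({E | A E (q+1) = 0}ᶜ ∩
    ({E | B E (q'+1) = 0}ᶜ ∩ {E | v' E ≤ 1/(400*w)}))
  have hS : MeasurableSet S :=
    (measurableSet_Icc.inter (measurableSet_le measurable_const hhm)).inter
    ((measurableSet_eq_fun (hAm _) measurable_const).compl.inter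
    ((measurableSet_eq_fun (hBm _) measurable_const).compl.inter
      (measurableSet_le hv'm measurable_const)))
  have hder : ∀ E ∈ S, HasDerivAt v (v' E) E := by
    rintro E ⟨-, hA, hB, -⟩
    have hA : A E (q+1) ≠ 0 := hA
    have hB : B E (q'+1) ≠ 0 := hB
    have h1 := (Loc.U_hasDeriv 1 N E V q).div (Loc.U_hasDeriv 1 N E V (q+1)) hA
    have h2 := (Loc.U_hasDeriv (-1) N E V q').div (Loc.U_hasDeriv (-1) N E V (q'+1)) hB
    have h3 := (((hasDerivAt_id E).sub h1).sub h2).div_const 400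
    refine h3.congr_deriv ?_
    simp only [v', A, B, ← Loc.wronsk]
    ring
  have hsub : {a | Function.update V x a ∈ Loc.Bad N x y w τ} ⊆ v '' S := by
    rintro a ⟨E, hE, φ, h, h1, h2⟩
    have hφx : φ x ≠ 0 := by
      intro h0; rw [h0] at h1; norm_num at h1; linarith
    have cU : ∀ (s : ℤ) (k : ℕ), (s = 1 ∧ k ≤ q + 1) ∨ (s = -1 ∧ k ≤ q' + 1) →
        Loc.U s N E (Function.update V x a) k = Loc.U s N E V k := by
      intro s k hk
      apply Loc.U_congr
      intro i hi
      rw [Function.update_of_ne]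
      rcases hk with ⟨rfl, hk⟩ | ⟨rfl, hk⟩ <;> omega
    have sA : ∀ k : ℕ, k ≤ q + 1 → φ (1 * (N + 1 - k)) = φ (1 * N) * A E k := by
      intro k hk
      rw [h.sol (Or.inl rfl) k (by rcases hσ with rfl | rfl <;> omega), cU 1 k (Or.inl ⟨rfl, hk⟩)]
    have sB : ∀ k : ℕ, k ≤ q' + 1 → φ (-1 * (N + 1 - k)) = φ (-1 * N) * B E k := by
      intro k hk
      rw [h.sol (Or.inr rfl) k (by rcases hσ with rfl | rfl <;> omega),
        cU (-1) k (Or.inr ⟨rfl, hk⟩)]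
    have xA : φ x = φ (1 * N) * A E (q+1) := by
      rw [← sA _ le_rfl]; congr 1; push_cast; omega
    have xB : φ x = φ (-1 * N) * B E (q'+1) := by
      rw [← sB _ le_rfl]; congr 1; push_cast; omega
    have xA' : φ (x+1) = φ (1 * N) * A E q := by
      rw [← sA _ (by omega)]; congr 1; omega
    have xB' : φ (x-1) = φ (-1 * N) * B E q' := by
      rw [← sB _ (by omega)]; congr 1; omega
    have hA : A E (q+1) ≠ 0 := by intro h0; rw [h0, mul_zero] at xA; exact hφx xA
    have hB : B E (q'+1) ≠ 0 := by intro h0; rw [h0, mul_zero] at xB; exact hφx xB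
    have hNA : φ (1 * N) ≠ 0 := by intro h0; rw [h0, zero_mul] at xA; exact hφx xA
    have hNB : φ (-1 * N) ≠ 0 := by intro h0; rw [h0, zero_mul] at xB; exact hφx xB
    have rA : ∀ k : ℕ, A E k / A E (q+1) = φ (1 * N) * A E k / φ x := by
      intro k; rw [xA]; field_simp
    have rB : ∀ k : ℕ, B E k / B E (q'+1) = φ (-1 * N) * B E k / φ x := by
      intro k; rw [xB]; field_simp
    refine ⟨E, ⟨⟨hE, ?_⟩, hA, hB, ?_⟩, ?_⟩
    · -- decay part
      have hU : ∀ k : ℕ, k ≤ p + 1 → φ (σ * (N + 1 - k)) = φ (σ * N) * Loc.U σ N E V k := by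
        intro k hk
        rw [h.sol hσ k (by omega)]
        congr 1
        apply Loc.U_congr
        intro i hi
        rw [Function.update_of_ne]
        rw [hx]
        rcases hσ with rfl | rfl <;> omega
      have e1 : φ x = φ (σ * N) * Loc.U σ N E V (p+1) := by
        rw [← hU _ le_rfl, hx]; congr 1; push_cast; ring
      have e2 : φ y = φ (σ * N) * Loc.U σ N E V (r+1) := by
        rw [← hU _ (by omega), hy]; congr 1; push_cast; ring
      have hU0 : Loc.U σ N E V (p+1) ≠ 0 := by intro h0; rw [h0, mul_zero] at e1; exact hφx e1
      have hN0 : φ (σ * N) ≠ 0 := by intro h0; rw [h0, zero_mul] at e1; exact hφx e1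
      rw [e1, e2, abs_mul, abs_mul] at h2
      have h3 : τ ^ 2 * |Loc.U σ N E V (p+1)| ≤ |Loc.U σ N E V (r+1)| := by
        have := abs_pos.2 hN0
        by_contra hc
        push Not at hc
        nlinarith
      have h4 : ENNReal.ofReal τ * (ENNReal.ofReal |Loc.U σ N E V (p+1)|) ^ (1/2:ℝ) ≤
          (ENNReal.ofReal |Loc.U σ N E V (r+1)|) ^ (1/2:ℝ) := by
        have : ENNReal.ofReal τ = (ENNReal.ofReal (τ^2)) ^ (1/2:ℝ) := by
          rw [ENNReal.ofReal_rpow_of_pos (by positivity), ← Real.sqrt_eq_rpow,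
            Real.sqrt_sq hτ.le]
        rw [this, ← ENNReal.mul_rpow_of_ne_top ENNReal.ofReal_ne_top ENNReal.ofReal_ne_top,
          ← ENNReal.ofReal_mul (by positivity)]
        exact ENNReal.rpow_le_rpow (ENNReal.ofReal_le_ofReal h3) (by norm_num)
      show ENNReal.ofReal τ ≤ Loc.h σ N r p E V
      calc ENNReal.ofReal τ = ENNReal.ofReal τ * ((ENNReal.ofReal |Loc.U σ N E V (p+1)|) ^ (1/2:ℝ)
            * (ENNReal.ofReal |Loc.U σ N E V (p+1)|) ^ (-(1/2):ℝ)) := by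
            rw [← ENNReal.rpow_add _ _ (by simpa using hU0) ENNReal.ofReal_ne_top]; simp
        _ ≤ _ := by
            rw [← mul_assoc]
            exact mul_le_mul_left h4 _
    · -- derivative bound
      show v' E ≤ 1/(400*w)
      have hs := Loc.sum_split N x q q' hq hq' (fun n => φ n ^ 2)
        (fun n hn => by simp [h.out n hn])
      rw [h.norm] at hs
      have s1 : ∑ j ∈ Finset.range (q+1), φ (1 * (N + 1 - j)) ^ 2 =
          φ (1*N)^2 * ∑ j ∈ Finset.range (q+1), A E j ^ 2 := by
        rw [Finset.mul_sum]
        apply Finset.sum_congr rfl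
        intro j hj
        rw [Finset.mem_range] at hj
        rw [sA j (by omega)]; ring
      have s2 : ∑ j ∈ Finset.range (q'+1), φ (-1 * (N + 1 - j)) ^ 2 =
          φ (-1*N)^2 * ∑ j ∈ Finset.range (q'+1), B E j ^ 2 := by
        rw [Finset.mul_sum]
        apply Finset.sum_congr rfl
        intro j hj
        rw [Finset.mem_range] at hj
        rw [sB j (by omega)]; ring
      have e3 : v' E = 1 / φ x ^ 2 / 400 := by
        rw [hs]
        simp only [v', s1, s2]
        have a1 : (∑ i ∈ Finset.range (q+1), A E i ^ 2) / A E (q+1) ^ 2 =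
            (φ (1*N)^2 * ∑ i ∈ Finset.range (q+1), A E i ^ 2) / φ x ^ 2 := by
          rw [xA]; field_simp
        have a2 : (∑ i ∈ Finset.range (q'+1), B E i ^ 2) / B E (q'+1) ^ 2 =
            (φ (-1*N)^2 * ∑ i ∈ Finset.range (q'+1), B E i ^ 2) / φ x ^ 2 := by
          rw [xB]; field_simp
        rw [a1, a2]
        field_simp
      rw [e3, div_div, mul_comm]
      gcongr
    · have e := h.eig x (by
        rw [Finset.mem_Icc]; omega)
      rw [Function.update_self] at e
      simp only [v]
      rw [rA, rB, ← xA', ← xB']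
      field_simp
      linear_combination -e
  have hBm' : MeasurableSet {a | Function.update V x a ∈ Loc.Bad N x y w τ} :=
    measurable_update V ((Loc.Bad_closed N x y w τ).measurableSet)
  calc _ ≤ ∫⁻ a, (Loc.Bad N x y w τ).indicator 1 (Function.update V x a) :=
        lintegral_mono' Measure.restrict_le_self le_rfl
    _ = volume {a | Function.update V x a ∈ Loc.Bad N x y w τ} := by
        rw [← lintegral_indicator_one hBm']; rfl
    _ ≤ volume (v '' S) := measure_mono hsub
    _ ≤ ENNReal.ofReal (1/(400*w)) * volume S := by
        apply Loc.image_le S hS v v' _ hder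
        rintro E ⟨-, -, -, hE⟩
        rw [abs_of_nonneg]
        · exact hE
        · simp only [v']; positivity
    _ ≤ _ := by
        gcongr
        have h5 : volume S ≤ (volume.restrict Loc.J) {E | ENNReal.ofReal τ ≤ Loc.h σ N r p E V} := by
          rw [Measure.restrict_apply (measurableSet_le measurable_const hhm), Set.inter_comm]
          exact measure_mono Set.inter_subset_left
        refine h5.trans ?_
        have h6 := mul_meas_ge_le_lintegral (μ := volume.restrict Loc.J) hhm (ENNReal.ofReal τ)
        rw [mul_comm (ENNReal.ofReal τ)⁻¹, ← div_eq_mul_inv, ENNReal.le_div_iff_mul_le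
          (Or.inl (by simpa using hτ)) (Or.inl ENNReal.ofReal_ne_top), mul_comm]
        exact h6

open MeasureTheory in
theorem Loc.lmarg_const (s : Finset ℤ) (c : ENNReal) (V : ℤ → ℝ) :
    lmarginal Loc.mu s (fun _ => c) V = c := by
  simp [lmarginal]

open MeasureTheory in
theorem Loc.bad_marg_aux {σ : ℤ} (hσ : σ = 1 ∨ σ = -1) (N x y : ℤ) (p r j : ℕ)
    (hx : x = σ * (N - p)) (hy : y = σ * (N - r)) (hj : r + j = p) (hj0 : 0 < j)
    (hp : (p:ℤ) ≤ 2 * N) (w τ : ℝ) (hw : 0 < w) (hτ : 0 < τ) (V : ℤ → ℝ) :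
    lmarginal Loc.mu (Finset.Icc (-N) N) ((Loc.Bad N x y w τ).indicator 1) V ≤
      ENNReal.ofReal (1/(400*w)) * ((ENNReal.ofReal τ)⁻¹ * (1204 * ENNReal.ofReal (1/4) ^ j)) := by
  have hxm : x ∈ Finset.Icc (-N) N := by
    rw [Finset.mem_Icc]; rcases hσ with rfl | rfl <;> omega
  have hBm : Measurable ((Loc.Bad N x y w τ).indicator (1 : (ℤ → ℝ) → ENNReal)) :=
    measurable_one.indicator (Loc.Bad_closed N x y w τ).measurableSet
  rw [lmarginal_erase' _ hBm hxm]
  refine (lmarginal_mono (fun V => Loc.sect hσ N x y p r hx hy (by omega) hp w τ hw hτ V) V).trans ?_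
  have hs : Loc.sites σ N r j ⊆ (Finset.Icc (-N) N).erase x := by
    intro n hn
    simp only [Loc.sites, Finset.mem_image, Finset.mem_range] at hn
    obtain ⟨i, hi, rfl⟩ := hn
    rw [Finset.mem_erase, Finset.mem_Icc, hx]
    rcases hσ with rfl | rfl <;> omega
  have hhm : Measurable (fun V => ∫⁻ E in Loc.J, Loc.h σ N r p E V) := by
    apply Measurable.lintegral_prod_right (f := fun (V : ℤ → ℝ) (E : ℝ) => Loc.h σ N r p E V)
    exact (Loc.h_meas σ N r p).comp measurable_swap
  rw [← Finset.sdiff_union_of_subset hs, lmarginal_union _ _ (by fun_prop) Finset.sdiff_disjoint]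
  refine (lmarginal_mono (g := fun _ => ENNReal.ofReal (1/(400*w)) * ((ENNReal.ofReal τ)⁻¹ *
    (1204 * ENNReal.ofReal (1/4) ^ j))) ?_ V).trans (Loc.lmarg_const _ _ _).le
  intro V
  have e : lmarginal Loc.mu (Loc.sites σ N r j) (fun V => ENNReal.ofReal (1/(400*w)) *
      ((ENNReal.ofReal τ)⁻¹ * ∫⁻ E in Loc.J, Loc.h σ N r p E V)) V =
      ENNReal.ofReal (1/(400*w)) * ((ENNReal.ofReal τ)⁻¹ *
        ∫⁻ E in Loc.J, lmarginal Loc.mu (Loc.sites σ N r j) (fun V => Loc.h σ N r p E V) V) := by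
    simp only [lmarginal]
    rw [lintegral_const_mul, lintegral_const_mul, lintegral_lintegral_swap]
    · apply Measurable.aemeasurable
      exact (Loc.h_meas σ N r p).comp
        (measurable_snd.prodMk (measurable_updateFinset.comp measurable_fst))
    · exact hhm.comp measurable_updateFinset
    · exact (hhm.comp measurable_updateFinset).const_mul _
  dsimp only
  rw [e]
  gcongr
  calc _ ≤ ∫⁻ E in Loc.J, ENNReal.ofReal (1/4) ^ j := by
        apply lintegral_mono
        intro E
        subst hj
        exact Loc.marg hσ N r E j V
    _ = _ := by
        rw [lintegral_const, mul_comm]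
        congr 1
        simp [Loc.J]
        norm_num

open MeasureTheory in
theorem Loc.bad_marg (N x y : ℤ) (hx : x ∈ Finset.Icc (-N) N) (hy : y ∈ Finset.Icc (-N) N)
    (hxy : x ≠ y) (w τ : ℝ) (hw : 0 < w) (hτ : 0 < τ) (V : ℤ → ℝ) :
    lmarginal Loc.mu (Finset.Icc (-N) N) ((Loc.Bad N x y w τ).indicator 1) V ≤
      ENNReal.ofReal (1/(400*w)) *
        ((ENNReal.ofReal τ)⁻¹ * (1204 * ENNReal.ofReal (1/4) ^ (x-y).natAbs)) := by
  rw [Finset.mem_Icc] at hx hy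
  rcases lt_or_gt_of_ne hxy with h | h
  · apply Loc.bad_marg_aux (Or.inl rfl) N x y (N-x).toNat (N-y).toNat (x-y).natAbs <;> first | assumption | omega
  · apply Loc.bad_marg_aux (Or.inr rfl) N x y (N+x).toNat (N+y).toNat (x-y).natAbs <;> first | assumption | omega

theorem Loc.geom_le (s : Finset ℤ) (x : ℤ) : ∑ y ∈ s, (1/2:ℝ) ^ (x-y).natAbs ≤ 4 := by
  have hh : ∀ t : Finset ℤ, Set.InjOn (fun y => (x-y).natAbs) t →
      ∑ y ∈ t, (1/2:ℝ) ^ (x-y).natAbs ≤ 2 := by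
    intro t ht
    rw [← Finset.sum_image (f := fun k => (1/2:ℝ)^k) ht]
    exact (summable_geometric_two.sum_le_tsum _ (fun _ _ => by positivity)).trans
      tsum_geometric_two.le
  rw [← Finset.sum_filter_add_sum_filter_not s (fun y => x ≤ y)]
  have h1 := hh (s.filter (fun y => x ≤ y)) (by
    intro a ha b hb hab
    simp at ha hb hab
    omega)
  have h2 := hh (s.filter (fun y => ¬ x ≤ y)) (by
    intro a ha b hb hab
    simp at ha hb hab
    omega)
  linarith

open MeasureTheory in
theorem Loc.exists_good (w : ℤ → ℝ) (hw : ∀ x, 0 < w x) (hw1 : ∀ s : Finset ℤ, ∑ x ∈ s, w x ≤ 1)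
    (N : ℤ) : ∃ V : ℤ → ℝ, (∀ n, V n ∈ Set.Icc (Loc.cc n) (Loc.cc n + 1)) ∧
      ∀ x ∈ Finset.Icc (-N) N, ∀ y ∈ Finset.Icc (-N) N, x ≠ y →
        V ∉ Loc.Bad N x y (w x) (18 / w x ^ 2 * (1/2) ^ (x-y).natAbs) := by
  by_contra hcon
  push Not at hcon
  let box := Finset.Icc (-N) N
  let pairs := (box ×ˢ box).filter (fun q => q.1 ≠ q.2)
  let τ : ℤ × ℤ → ℝ := fun q => 18 / w q.1 ^ 2 * (1/2) ^ (q.1-q.2).natAbs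
  have hτ : ∀ q, 0 < τ q := fun q => by have := hw q.1; positivity
  let f : ℤ × ℤ → (ℤ → ℝ) → ENNReal := fun q => (Loc.Bad N q.1 q.2 (w q.1) (τ q)).indicator 1
  have hfm : ∀ q, Measurable (f q) := fun q =>
    measurable_one.indicator (Loc.Bad_closed _ _ _ _ _).measurableSet
  have h1 : (1:ENNReal) ≤ lmarginal Loc.mu box (fun V => ∑ q ∈ pairs, f q V) Loc.cc := by
    simp only [lmarginal]
    calc (1:ENNReal) = ∫⁻ y, 1 ∂(Measure.pi fun i : box => Loc.mu i) := by simp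
      _ ≤ _ := by
        apply lintegral_mono_ae
        have hae : ∀ᵐ y ∂(Measure.pi fun i : box => Loc.mu i),
            ∀ i : box, y i ∈ Set.Icc (Loc.cc i) (Loc.cc i + 1) := by
          rw [eventually_all]
          intro i
          exact (Measure.tendsto_eval_ae_ae (μ := fun i : box => Loc.mu i) (i := i)).eventually
            (ae_restrict_mem measurableSet_Icc)
        filter_upwards [hae] with y hy
        obtain ⟨a, ha, b, hb, hab, hbad⟩ := hcon (Function.updateFinset Loc.cc box y) (by
          intro n
          by_cases hn : n ∈ box
          · simp only [Function.updateFinset, hn, dif_pos]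
            exact hy ⟨n, hn⟩
          · simp [Function.updateFinset, hn])
        have hm : (a, b) ∈ pairs := by exact Finset.mem_filter.2 ⟨Finset.mem_product.2 ⟨ha, hb⟩, hab⟩
        calc (1:ENNReal) = f (a, b) (Function.updateFinset Loc.cc box y) := by
              simp only [f]
              rw [Set.indicator_of_mem hbad]; rfl
          _ ≤ _ := Finset.single_le_sum (f := fun q => f q (Function.updateFinset Loc.cc box y))
              (fun _ _ => bot_le) hm
  have h2 : lmarginal Loc.mu box (fun V => ∑ q ∈ pairs, f q V) Loc.cc
      = ∑ q ∈ pairs, lmarginal Loc.mu box (f q) Loc.cc := by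
    simp only [lmarginal]
    rw [lintegral_finsetSum]
    intro q _
    exact (hfm q).comp measurable_updateFinset
  have h3 : ∀ q ∈ pairs, lmarginal Loc.mu box (f q) Loc.cc ≤
      ENNReal.ofReal (1/5 * (w q.1 * (1/2) ^ (q.1-q.2).natAbs)) := by
    rintro ⟨x, y⟩ hq
    simp only [pairs, Finset.mem_filter, Finset.mem_product] at hq
    refine (Loc.bad_marg N x y hq.1.1 hq.1.2 hq.2 (w x) (τ (x,y)) (hw x) (hτ _) _).trans ?_
    have hwx := hw x
    rw [← ENNReal.ofReal_inv_of_pos (hτ _), ← ENNReal.ofReal_pow (by norm_num),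
      show (1204:ENNReal) = ENNReal.ofReal 1204 by simp, ← ENNReal.ofReal_mul (by norm_num),
      ← ENNReal.ofReal_mul (inv_nonneg.2 (hτ _).le), ← ENNReal.ofReal_mul (by positivity)]
    apply ENNReal.ofReal_le_ofReal
    simp only [τ]
    have : ((1:ℝ)/4) ^ (x-y).natAbs = (1/2) ^ (x-y).natAbs * (1/2) ^ (x-y).natAbs := by
      rw [← mul_pow]; norm_num
    rw [this]
    have hp : (0:ℝ) < (1/2) ^ (x-y).natAbs := by positivity
    generalize ((1:ℝ)/2) ^ (x-y).natAbs = t at hp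
    have : 1 / (400 * w x) * ((18 / w x ^ 2 * t)⁻¹ * (1204 * (t * t))) = (1204/7200) * (w x * t) := by
      field_simp; norm_num
    rw [this]
    have := mul_pos hwx hp
    nlinarith
  have h4 : ∑ q ∈ pairs, (1/5 * (w q.1 * (1/2:ℝ) ^ (q.1-q.2).natAbs)) ≤ 4/5 := by
    calc _ ≤ ∑ q ∈ box ×ˢ box, (1/5 * (w q.1 * (1/2:ℝ) ^ (q.1-q.2).natAbs)) := by
          apply Finset.sum_le_sum_of_subset_of_nonneg (Finset.filter_subset _ _)
          intro q _ _
          have := hw q.1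
          positivity
      _ = ∑ x ∈ box, (1/5 * w x) * ∑ y ∈ box, (1/2:ℝ) ^ (x-y).natAbs := by
          rw [Finset.sum_product]
          apply Finset.sum_congr rfl
          intro x _
          rw [Finset.mul_sum]
          apply Finset.sum_congr rfl
          intro y _
          ring
      _ ≤ ∑ x ∈ box, (1/5 * w x) * 4 := by
          apply Finset.sum_le_sum
          intro x _
          have := hw x
          gcongr
          exact Loc.geom_le _ _
      _ = (4/5) * ∑ x ∈ box, w x := by
          rw [Finset.mul_sum]
          apply Finset.sum_congr rfl
          intro x _
          ring
      _ ≤ 4/5 := by have := hw1 box; linarith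
  have h5 : (1:ENNReal) ≤ ENNReal.ofReal (4/5) := by
    refine h1.trans (h2.le.trans ((Finset.sum_le_sum h3).trans ?_))
    rw [← ENNReal.ofReal_sum_of_nonneg]
    · exact ENNReal.ofReal_le_ofReal h4
    · intro q _
      have := hw q.1
      positivity
  rw [ENNReal.one_le_ofReal] at h5
  norm_num at h5

theorem Loc.EigOn.energy {N : ℤ} {V : ℤ → ℝ} {E : ℝ} {φ : ℤ → ℝ} (h : Loc.EigOn N V E φ)
    (hV : ∀ n, V n ∈ Set.Icc (Loc.cc n) (Loc.cc n + 1)) : E ∈ Loc.J := by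
  have hne : (Finset.Icc (-N) N).Nonempty := by
    by_contra hc
    rw [Finset.not_nonempty_iff_eq_empty] at hc
    have := h.norm
    rw [hc] at this
    simp at this
  obtain ⟨n, hn, hmax⟩ := Finset.exists_max_image (Finset.Icc (-N) N) (fun n => |φ n|) hne
  have hmax' : ∀ m, |φ m| ≤ |φ n| := by
    intro m
    by_cases hm : m ∈ Finset.Icc (-N) N
    · exact hmax m hm
    · rw [h.out m hm]; simp
  have hpos : 0 < |φ n| := by
    rw [abs_pos]
    intro h0
    have : ∀ m, φ m = 0 := by
      intro m
      have := hmax' m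
      rw [h0] at this
      simpa using this
    have := h.norm
    simp [*] at this
  have e := h.eig n hn
  have e2 : |E - 400 * V n| * |φ n| ≤ 2 * |φ n| := by
    rw [← abs_mul, show (E - 400 * V n) * φ n = φ (n+1) + φ (n-1) by linear_combination -e]
    have := abs_add_le (φ (n+1)) (φ (n-1))
    linarith [hmax' (n+1), hmax' (n-1)]
  have e3 := _root_.abs_le.1 (le_of_mul_le_mul_right e2 hpos)
  have hv := hV n
  simp only [Loc.cc, Set.mem_Icc] at hv
  simp only [Loc.J, Set.mem_Icc]
  split_ifs at hv <;> constructor <;> linarith [hv.1, hv.2, e3.1, e3.2]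

theorem Loc.eigenbasis (N : ℤ) (V : ℤ → ℝ) :
    ∃ (ψ : ↥(Finset.Icc (-N) N) → ℤ → ℝ) (E : ↥(Finset.Icc (-N) N) → ℝ),
      (∀ s, Loc.EigOn N V (E s) (ψ s)) ∧
      (∀ s t, ∑ n ∈ Finset.Icc (-N) N, ψ s n * ψ t n = if s = t then 1 else 0) ∧
      (∀ m ∈ Finset.Icc (-N) N, ∀ n ∈ Finset.Icc (-N) N,
        ∑ s, ψ s m * ψ s n = if m = n then 1 else 0) := by
  classical
  let M : Matrix ↥(Finset.Icc (-N) N) ↥(Finset.Icc (-N) N) ℝ := Matrix.of fun i j =>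
    (if (j:ℤ) = i + 1 then 1 else 0) + (if (j:ℤ) = i - 1 then 1 else 0)
      + (if (j:ℤ) = i then 400 * V i else 0)
  have hMa : ∀ i j, M i j = (if (j:ℤ) = i + 1 then 1 else 0) + (if (j:ℤ) = i - 1 then 1 else 0)
      + (if (j:ℤ) = i then 400 * V i else 0) := fun i j => rfl
  clear_value M
  have hM : M.IsHermitian := by
    ext i j
    simp only [Matrix.conjTranspose_apply, star_trivial, hMa]
    have a1 : ((i:ℤ) = j + 1) ↔ ((j:ℤ) = i - 1) := by omega
    have a2 : ((i:ℤ) = j - 1) ↔ ((j:ℤ) = i + 1) := by omega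
    simp only [a1, a2]
    by_cases h : (i:ℤ) = j
    · simp [h]
    · rw [if_neg h, if_neg (Ne.symm h)]; ring
  have hW3 : ∀ s i, ∑ j, M i j * hM.eigenvectorUnitary.1 j s
      = hM.eigenvalues s * hM.eigenvectorUnitary.1 i s := by
    intro s i
    have := congrFun (hM.mulVec_eigenvectorBasis s) i
    simpa [Matrix.mulVec, dotProduct, Matrix.IsHermitian.eigenvectorUnitary_apply] using this
  have hU1 := Matrix.mem_unitaryGroup_iff.1 hM.eigenvectorUnitary.2
  have hU2 := Matrix.mem_unitaryGroup_iff'.1 hM.eigenvectorUnitary.2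
  generalize hM.eigenvectorUnitary.1 = W at hU1 hU2 hW3
  have hW1 : ∀ s t, ∑ i, W i s * W i t = if s = t then 1 else 0 := by
    intro s t
    have := congrFun (congrFun hU2 s) t
    simpa only [Matrix.mul_apply, Matrix.one_apply, Matrix.star_apply, star_trivial] using this
  have hW2 : ∀ i j, ∑ s, W i s * W j s = if i = j then 1 else 0 := by
    intro s t
    have := congrFun (congrFun hU1 s) t
    simpa only [Matrix.mul_apply, Matrix.one_apply, Matrix.star_apply, star_trivial] using this
  let ψ : ↥(Finset.Icc (-N) N) → ℤ → ℝ := fun s n =>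
    if h : n ∈ Finset.Icc (-N) N then W ⟨n, h⟩ s else 0
  have hψ : ∀ s (i : ↥(Finset.Icc (-N) N)), ψ s i = W i s := by
    intro s i
    simp only [ψ, i.2, dif_pos]
  have hout : ∀ s n, n ∉ Finset.Icc (-N) N → ψ s n = 0 := by
    intro s n hn
    simp only [ψ, hn, dif_neg, not_false_eq_true]
  have horth : ∀ s t, ∑ n ∈ Finset.Icc (-N) N, ψ s n * ψ t n = if s = t then 1 else 0 := by
    intro s t
    rw [← hW1 s t, ← Finset.sum_coe_sort]
    simp only [hψ]
  refine ⟨ψ, hM.eigenvalues, ?_, horth, ?_⟩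
  · intro s
    refine ⟨hout s, ?_, ?_⟩
    · intro n hn
      have := hW3 s ⟨n, hn⟩
      rw [← hψ] at this
      simp only [← hψ, hMa] at this
      rw [← this, Finset.sum_coe_sort (Finset.Icc (-N) N) (fun j : ℤ =>
        ((if j = n + 1 then (1:ℝ) else 0) + (if j = n - 1 then 1 else 0)
          + (if j = n then 400 * V n else 0)) * ψ s j)]
      simp only [add_mul, Finset.sum_add_distrib, ite_mul, one_mul, zero_mul, Finset.sum_ite_eq', hn,
        if_true]
      congr 2
      · split_ifs with h
        · rfl
        · exact hout s _ h
      · split_ifs with h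
        · rfl
        · exact hout s _ h
    · have := horth s s
      simp only [if_true] at this
      simpa [sq] using this
  · intro m hm n hn
    have := hW2 ⟨m, hm⟩ ⟨n, hn⟩
    simp only [← hψ, Subtype.mk.injEq] at this
    exact this

theorem Loc.exists_w : ∃ w : ℤ → ℝ, (∀ x, 0 < w x) ∧ (∀ s : Finset ℤ, ∑ x ∈ s, w x ≤ 1) ∧
    ∀ (k : ℕ) (ε : ℝ), 0 < ε → ∃ C : ℝ, 0 ≤ C ∧ ∀ x : ℤ, (1 / w x) ^ k ≤ C * exp (ε * |(x:ℝ)|) := by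
  have hsum : Summable (fun x : ℤ => 1 / (1 + (x:ℝ)^2)) := by
    have h2 : Summable (fun x : ℤ => 1 / (x:ℝ)^2) := Real.summable_one_div_int_pow.2 (by norm_num)
    refine Summable.of_norm_bounded_eventually h2 ?_
    rw [Filter.eventually_cofinite]
    apply (Set.finite_singleton (0:ℤ)).subset
    intro x hx
    by_contra h0
    apply hx
    have h0 : (x:ℝ) ≠ 0 := by exact_mod_cast h0
    rw [Real.norm_of_nonneg (by positivity)]
    gcongr
    linarith
  set T := ∑' x : ℤ, 1 / (1 + (x:ℝ)^2) with hT
  have hTpos : 0 < T := hsum.tsum_pos (fun x => by positivity) 0 (by norm_num)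
  refine ⟨fun x => 1 / (1 + (x:ℝ)^2) / T, fun x => by positivity, ?_, ?_⟩
  · intro s
    rw [← Finset.sum_div, div_le_one hTpos]
    exact hsum.sum_le_tsum s (fun x _ => by positivity)
  · intro k ε hε
    let δ := ε / (k+1)
    have hδ : 0 < δ := by positivity
    refine ⟨(T * (1 + 2/δ^2)) ^ k, by positivity, fun x => ?_⟩
    have h1 : 1 / (1 / (1 + (x:ℝ)^2) / T) = T * (1 + (x:ℝ)^2) := by field_simp
    have h2 : 1 + (x:ℝ)^2 ≤ (1 + 2/δ^2) * exp (δ * |(x:ℝ)|) := by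
      have h3 := Real.quadratic_le_exp_of_nonneg (x := δ * |(x:ℝ)|) (by positivity)
      have h4 : (x:ℝ)^2 = 2/δ^2 * ((δ * |(x:ℝ)|)^2/2) := by
        rw [mul_pow, sq_abs]; field_simp
      have h5 : 0 ≤ δ * |(x:ℝ)| := by positivity
      have h6 : (0:ℝ) ≤ 2/δ^2 := by positivity
      have h7 : 1 ≤ exp (δ * |(x:ℝ)|) := by nlinarith [sq_nonneg (δ * |(x:ℝ)|)]
      have h8 : (δ * |(x:ℝ)|)^2/2 ≤ exp (δ * |(x:ℝ)|) := by linarith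
      rw [h4]
      nlinarith [mul_le_mul_of_nonneg_left h8 h6]
    rw [h1]
    calc (T * (1 + (x:ℝ)^2))^k ≤ (T * ((1 + 2/δ^2) * exp (δ * |(x:ℝ)|)))^k := by gcongr
      _ = (T * (1 + 2/δ^2)) ^ k * exp (k * (δ * |(x:ℝ)|)) := by
        rw [← mul_assoc, mul_pow _ (exp _), ← Real.exp_nat_mul]
      _ ≤ _ := by
        apply mul_le_mul_of_nonneg_left _ (by positivity)
        apply Real.exp_le_exp.2
        rw [← mul_assoc]
        apply mul_le_mul_of_nonneg_right _ (abs_nonneg _)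
        simp only [δ]
        rw [← mul_div_assoc, div_le_iff₀ (by positivity)]
        nlinarith

structure Loc.Pkg (w : ℤ → ℝ) (N : ℤ) (V : ℤ → ℝ) (Φ : ℤ × ℕ → ℤ → ℝ) (E : ℤ × ℕ → ℝ)
    (used : Set (ℤ × ℕ)) : Prop where
  V_mem : ∀ n, V n ∈ Set.Icc (Loc.cc n) (Loc.cc n + 1)
  eig : ∀ i, ∀ n ∈ Finset.Icc (-N) N, Φ i (n+1) + Φ i (n-1) + 400 * V n * Φ i n = E i * Φ i n
  E_mem : ∀ i, E i ∈ Loc.J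
  decay : ∀ i n, |Φ i n| ≤ 324 * (1 / w i.1) ^ 4 * (1/4) ^ (i.1 - n).natAbs
  le_one : ∀ i n, |Φ i n| ≤ 1
  mult : ∀ i n, (i.2 + 1) * w i.1 ≤ 1 ∨ Φ i n = 0
  orth : ∀ i j, i ≠ j → ∑' n, Φ i n * Φ j n = 0
  norm_used : ∀ i ∈ used, ∑' n, Φ i n * Φ i n = 1
  norm_unused : ∀ i ∉ used, ∑' n, Φ i n * Φ i n = 0
  compl : ∀ m ∈ Finset.Icc (-N) N, ∀ n ∈ Finset.Icc (-N) N,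
    ∑' i, Φ i m * Φ i n = if m = n then 1 else 0

theorem Loc.exists_pkg (w : ℤ → ℝ) (hw : ∀ x, 0 < w x) (hw1 : ∀ s : Finset ℤ, ∑ x ∈ s, w x ≤ 1)
    (N : ℤ) : ∃ V Φ E used, Loc.Pkg w N V Φ E used := by
  classical
  obtain ⟨V, hV, hgood⟩ := Loc.exists_good w hw hw1 N
  obtain ⟨ψ, E, hψ, horth, hcompl⟩ := Loc.eigenbasis N V
  have hctr : ∀ s, ∃ x ∈ Finset.Icc (-N) N, w x ≤ ψ s x ^ 2 := by
    intro s
    by_contra hc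
    push Not at hc
    have hne : (Finset.Icc (-N) N).Nonempty := ⟨s.1, s.2⟩
    have := Finset.sum_lt_sum_of_nonempty hne hc
    rw [(hψ s).norm] at this
    linarith [hw1 (Finset.Icc (-N) N)]
  choose ctr hctr1 hctr2 using hctr
  have hw_le : ∀ x, w x ≤ 1 := fun x => by simpa using hw1 {x}
  have hdecay : ∀ s n, |ψ s n| ≤ 324 * (1 / w (ctr s)) ^ 4 * (1/4) ^ (ctr s - n).natAbs := by
    intro s n
    have hwp := hw (ctr s)
    by_cases hn : n ∈ Finset.Icc (-N) N
    · by_cases hcn : ctr s = n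
      · rw [← hcn]
        simp only [sub_self, Int.natAbs_zero, pow_zero, mul_one]
        have h1 := (hψ s).abs_le (ctr s)
        have h2 : 1 ≤ (1 / w (ctr s))^4 := one_le_pow₀ (by
          rw [le_div_iff₀ hwp]; linarith [hw_le (ctr s)])
        linarith
      · have hb := hgood (ctr s) (hctr1 s) n hn hcn
        have h3 : |ψ s n| < (18 / w (ctr s) ^ 2 * (1/2) ^ (ctr s - n).natAbs)^2 * |ψ s (ctr s)| := by
          by_contra hc
          push Not at hc
          exact hb ⟨E s, (hψ s).energy hV, ψ s, hψ s, hctr2 s, hc⟩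
        have h4 := (hψ s).abs_le (ctr s)
        have h5 : (18 / w (ctr s) ^ 2 * (1/2:ℝ) ^ (ctr s - n).natAbs)^2 =
            324 * (1 / w (ctr s)) ^ 4 * (1/4) ^ (ctr s - n).natAbs := by
          rw [show (1/4:ℝ) = (1/2)^2 by norm_num, ← pow_mul, mul_comm 2, pow_mul, mul_pow]
          congr 1
          field_simp; norm_num
        rw [← h5]
        refine h3.le.trans ?_
        exact mul_le_of_le_one_right (sq_nonneg _) h4
    · rw [(hψ s).out n hn, abs_zero]; positivity
  let ι := ↥(Finset.Icc (-N) N)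
  let rk : ι → ℕ := fun s => (Finset.univ.filter (fun t : ι => t < s ∧ ctr t = ctr s)).card
  let e : ι → ℤ × ℕ := fun s => (ctr s, rk s)
  have hlt : ∀ s t : ι, s < t → ctr s = ctr t → rk s < rk t := by
    intro s t hst hc
    apply Finset.card_lt_card
    rw [Finset.ssubset_iff_of_subset]
    · refine ⟨s, ?_, ?_⟩
      · simp [hst, hc]
      · exact fun h => lt_irrefl s (Finset.mem_filter.1 h).2.1
    · intro u hu
      simp only [Finset.mem_filter, Finset.mem_univ, true_and] at hu ⊢
      exact ⟨hu.1.trans hst, hu.2.trans hc⟩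
  have he : Function.Injective e := by
    intro s t hst
    simp only [e, Prod.mk.injEq] at hst
    rcases lt_trichotomy s t with h | h | h
    · have := hlt s t h hst.1; omega
    · exact h
    · have := hlt t s h hst.1.symm; omega
  have hrk : ∀ s, ((rk s : ℝ) + 1) * w (ctr s) ≤ 1 := by
    intro s
    have h1 : rk s + 1 ≤ (Finset.univ.filter (fun t : ι => ctr t = ctr s)).card := by
      apply Finset.card_lt_card
      rw [Finset.ssubset_iff_of_subset]
      · exact ⟨s, by simp, fun h => lt_irrefl s (Finset.mem_filter.1 h).2.1⟩
      · intro u hu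
        simp only [Finset.mem_filter, Finset.mem_univ, true_and] at hu ⊢
        exact hu.2
    have h2 : ((Finset.univ.filter (fun t : ι => ctr t = ctr s)).card : ℝ) * w (ctr s) ≤ 1 := by
      rw [← nsmul_eq_mul, ← Finset.sum_const]
      calc _ ≤ ∑ t ∈ Finset.univ.filter (fun t : ι => ctr t = ctr s), ψ t (ctr s) * ψ t (ctr s) := by
            apply Finset.sum_le_sum
            intro t ht
            simp only [Finset.mem_filter, Finset.mem_univ, true_and] at ht
            rw [← ht, ← sq]
            exact hctr2 t
        _ ≤ ∑ t, ψ t (ctr s) * ψ t (ctr s) :=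
            Finset.sum_le_sum_of_subset_of_nonneg (Finset.filter_subset _ _)
              (fun _ _ _ => mul_self_nonneg _)
        _ = 1 := by rw [hcompl _ (hctr1 s) _ (hctr1 s)]; simp
    have h3 : ((rk s : ℝ) + 1) ≤ ((Finset.univ.filter (fun t : ι => ctr t = ctr s)).card : ℝ) := by
      exact_mod_cast h1
    nlinarith [hw (ctr s)]
  let Φ : ℤ × ℕ → ℤ → ℝ := Function.extend e ψ 0
  let F : ℤ × ℕ → ℝ := Function.extend e E 0
  have hΦ : ∀ s, Φ (e s) = ψ s := fun s => he.extend_apply _ _ _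
  have hF : ∀ s, F (e s) = E s := fun s => he.extend_apply _ _ _
  have hΦ0 : ∀ i, i ∉ Set.range e → Φ i = 0 := fun i hi => Function.extend_apply' _ _ _ hi
  have hF0 : ∀ i, i ∉ Set.range e → F i = 0 := fun i hi => Function.extend_apply' _ _ _ hi
  have htsum : ∀ s t, ∑' n, ψ s n * ψ t n = if s = t then 1 else 0 := by
    intro s t
    rw [← horth s t, tsum_eq_sum]
    intro n hn
    rw [(hψ s).out n hn, zero_mul]
  refine ⟨V, Φ, F, Set.range e, hV, ?_, ?_, ?_, ?_, ?_, ?_, ?_, ?_, ?_⟩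
  · intro i n hn
    by_cases hi : i ∈ Set.range e
    · obtain ⟨s, rfl⟩ := hi
      rw [hΦ, hF]; exact (hψ s).eig n hn
    · rw [hΦ0 i hi]; simp
  · intro i
    by_cases hi : i ∈ Set.range e
    · obtain ⟨s, rfl⟩ := hi
      rw [hF]; exact (hψ s).energy hV
    · rw [hF0 i hi]; simp [Loc.J]
  · intro i n
    by_cases hi : i ∈ Set.range e
    · obtain ⟨s, rfl⟩ := hi
      rw [hΦ]; exact hdecay s n
    · rw [hΦ0 i hi]
      have := hw i.1
      simp only [Pi.zero_apply, abs_zero]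
      positivity
  · intro i n
    by_cases hi : i ∈ Set.range e
    · obtain ⟨s, rfl⟩ := hi
      rw [hΦ]; exact (hψ s).abs_le n
    · rw [hΦ0 i hi]; simp
  · intro i n
    by_cases hi : i ∈ Set.range e
    · obtain ⟨s, rfl⟩ := hi
      exact Or.inl (hrk s)
    · rw [hΦ0 i hi]; simp
  · intro i j hij
    by_cases hi : i ∈ Set.range e
    · by_cases hj : j ∈ Set.range e
      · obtain ⟨s, rfl⟩ := hi
        obtain ⟨t, rfl⟩ := hj
        rw [hΦ, hΦ, htsum, if_neg]
        rintro rfl; exact hij rfl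
      · rw [hΦ0 j hj]; simp
    · rw [hΦ0 i hi]; simp
  · rintro _ ⟨s, rfl⟩
    rw [hΦ, htsum, if_pos rfl]
  · intro i hi
    rw [hΦ0 i hi]; simp
  · intro m hm n hn
    rw [← hcompl m hm n hn, ← he.tsum_eq, tsum_fintype]
    · simp only [hΦ]
      rfl
    · intro i hi
      by_contra hc
      apply hi
      simp [hΦ0 i hc]

theorem Loc.ulim (f : ℕ → ℝ) (a b : ℝ) (hf : ∀ N, f N ∈ Set.Icc a b) :
    ∃ l, Tendsto f (hyperfilter ℕ : Filter ℕ) (nhds l) := by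
  obtain ⟨l, _, hl⟩ := (isCompact_Icc (a := a) (b := b)).ultrafilter_le_nhds
    ((hyperfilter ℕ).map f) (by
      rw [Filter.le_principal_iff]
      exact Filter.mem_map.2 (Filter.Eventually.of_forall hf))
  exact ⟨l, hl⟩

structure Loc.Lim (w : ℤ → ℝ) (V : ℤ → ℝ) (Φ : ℤ × ℕ → ℤ → ℝ) (E : ℤ × ℕ → ℝ)
    (I : Set (ℤ × ℕ)) : Prop where
  V_mem : ∀ n, V n ∈ Set.Icc (Loc.cc n) (Loc.cc n + 1)
  eig : ∀ i n, Φ i (n+1) + Φ i (n-1) + 400 * V n * Φ i n = E i * Φ i n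
  decay : ∀ i n, |Φ i n| ≤ 324 * (1 / w i.1) ^ 4 * (1/4) ^ (i.1 - n).natAbs
  orth : ∀ i j, i ≠ j → HasSum (fun n => Φ i n * Φ j n) 0
  norm_one : ∀ i ∈ I, HasSum (fun n => Φ i n * Φ i n) 1
  zero : ∀ i ∉ I, ∀ n, Φ i n = 0
  compl : ∀ m n, HasSum (fun i => Φ i m * Φ i n) (if m = n then 1 else 0)

theorem Loc.summable_half (x : ℤ) : Summable (fun y : ℤ => (1/2:ℝ)^(x-y).natAbs) :=
  summable_of_sum_le (fun _ => by positivity) (fun s => Loc.geom_le s x)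

theorem Loc.summable_quarter (x : ℤ) : Summable (fun y : ℤ => (1/4:ℝ)^(x-y).natAbs) :=
  Summable.of_nonneg_of_le (fun _ => by positivity)
    (fun y => pow_le_pow_left₀ (by norm_num) (by norm_num) _) (Loc.summable_half x)

theorem Loc.exists_lim (w : ℤ → ℝ) (hw : ∀ x, 0 < w x) (hw1 : ∀ s : Finset ℤ, ∑ x ∈ s, w x ≤ 1)
    (hwk : ∀ (k : ℕ) (ε : ℝ), 0 < ε → ∃ C : ℝ, 0 ≤ C ∧ ∀ x : ℤ, (1 / w x) ^ k ≤ C * exp (ε * |(x:ℝ)|)) :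
    ∃ V Φ E I, Loc.Lim w V Φ E I := by
  classical
  have hp := fun N : ℕ => Loc.exists_pkg w hw hw1 (N:ℤ)
  choose V Φ E used hP using hp
  have hV : ∀ n, ∃ l, Tendsto (fun N => V N n) (hyperfilter ℕ : Filter ℕ) (nhds l) :=
    fun n => Loc.ulim _ _ _ (fun N => (hP N).V_mem n)
  have hΦ : ∀ i n, ∃ l, Tendsto (fun N => Φ N i n) (hyperfilter ℕ : Filter ℕ) (nhds l) :=
    fun i n => Loc.ulim _ (-1) 1 (fun N => abs_le.1 ((hP N).le_one i n))
  have hE : ∀ i, ∃ l, Tendsto (fun N => E N i) (hyperfilter ℕ : Filter ℕ) (nhds l) :=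
    fun i => Loc.ulim _ _ _ (fun N => (hP N).E_mem i)
  choose V' hV using hV
  choose Φ' hΦ using hΦ
  choose E' hE using hE
  have hbox : ∀ n : ℤ, ∀ᶠ N : ℕ in (hyperfilter ℕ : Filter ℕ), n ∈ Finset.Icc (-(N:ℤ)) (N:ℤ) := by
    intro n
    have h : ∀ᶠ N : ℕ in atTop, n ∈ Finset.Icc (-(N:ℤ)) (N:ℤ) := by
      filter_upwards [eventually_ge_atTop n.natAbs] with N hN
      rw [Finset.mem_Icc]; omega
    exact (Nat.hyperfilter_le_atTop) h
  have hdec : ∀ i n, |Φ' i n| ≤ 324 * (1 / w i.1) ^ 4 * (1/4) ^ (i.1 - n).natAbs := fun i n =>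
    le_of_tendsto (hΦ i n).abs (Eventually.of_forall fun N => (hP N).decay i n)
  have hle1 : ∀ i n, |Φ' i n| ≤ 1 := fun i n =>
    le_of_tendsto (hΦ i n).abs (Eventually.of_forall fun N => (hP N).le_one i n)
  have hsb : ∀ i : ℤ × ℕ, Summable (fun n : ℤ => 324 * (1 / w i.1) ^ 4 * (1/4:ℝ) ^ (i.1 - n).natAbs) :=
    fun i => (Loc.summable_quarter i.1).mul_left _
  have hinner : ∀ i j, Tendsto (fun N => ∑' n, Φ N i n * Φ N j n) (hyperfilter ℕ : Filter ℕ)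
      (nhds (∑' n, Φ' i n * Φ' j n)) := by
    intro i j
    refine tendsto_tsum_of_dominated_convergence (hsb i) (fun n => (hΦ i n).mul (hΦ j n)) ?_
    refine Eventually.of_forall fun N n => ?_
    rw [norm_mul, Real.norm_eq_abs, Real.norm_eq_abs]
    exact (mul_le_of_le_one_right (abs_nonneg _) ((hP N).le_one j n)).trans ((hP N).decay i n)
  have hsum : ∀ i j, Summable (fun n => Φ' i n * Φ' j n) := by
    intro i j
    refine Summable.of_norm_bounded (hsb i) (fun n => ?_)
    rw [norm_mul, Real.norm_eq_abs, Real.norm_eq_abs]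
    exact (mul_le_of_le_one_right (abs_nonneg _) (hle1 j n)).trans (hdec i n)
  let I : Set (ℤ × ℕ) := {i | ∀ᶠ N in (hyperfilter ℕ : Filter ℕ), i ∈ used N}
  -- domination for completeness
  obtain ⟨C, hC0, hC⟩ := hwk 6 (Real.log 2) (Real.log_pos (by norm_num))
  let B : ℤ → ℤ × ℕ → ℝ := fun m i =>
    (324 * (C * 2 ^ m.natAbs) * (1/2) ^ (m - i.1).natAbs) * (1 / ((i.2:ℝ) + 1)^2)
  have hBs : ∀ m, Summable (B m) := by
    intro m
    have h1 : Summable (fun x : ℤ => 324 * (C * 2 ^ m.natAbs) * (1/2:ℝ) ^ (m - x).natAbs) :=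
      (Loc.summable_half m).mul_left _
    have h2 : Summable (fun j : ℕ => 1 / ((j:ℝ) + 1)^2) := by
      have := (summable_nat_add_iff 1).2 (Real.summable_one_div_nat_pow.2 (by norm_num : 1 < 2))
      simpa using this
    exact h1.mul_of_nonneg h2 (fun x => by positivity) (fun x => by positivity)
  have hB : ∀ N m i, |Φ N i m| ≤ B m i := by
    intro N m i
    rcases (hP N).mult i m with h | h
    · have hwi := hw i.1
      have h1 : 1 ≤ (1 / w i.1)^2 * (1 / ((i.2:ℝ) + 1)^2) := by
        rw [← one_div_pow, ← mul_pow]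
        apply one_le_pow₀
        rw [div_mul_div_comm, one_mul, le_div_iff₀ (by positivity)]
        linarith
      have h2 : (1 / w i.1)^6 ≤ C * 2 ^ m.natAbs * 2 ^ (m - i.1).natAbs := by
        refine (hC i.1).trans ?_
        rw [mul_assoc]
        apply mul_le_mul_of_nonneg_left _ hC0
        rw [Real.exp_mul, Real.exp_log (by norm_num), ← pow_add]
        have : |(i.1:ℝ)| = ((i.1.natAbs : ℕ) : ℝ) := by
          rw [Nat.cast_natAbs]; simp
        rw [this, Real.rpow_natCast]
        apply pow_le_pow_right₀ (by norm_num)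
        omega
      have h3 := (hP N).decay i m
      have h4 : (i.1 - m).natAbs = (m - i.1).natAbs := by omega
      rw [h4] at h3
      refine h3.trans ?_
      have h5 : (1/4:ℝ)^(m - i.1).natAbs = (1/2) ^ (m - i.1).natAbs * (1/2) ^ (m - i.1).natAbs := by
        rw [← mul_pow]; norm_num
      have h6 : (2:ℝ)^(m - i.1).natAbs * (1/2) ^ (m - i.1).natAbs = 1 := by
        rw [← mul_pow]; norm_num
      set q := (1/2:ℝ) ^ (m - i.1).natAbs with hq
      have hqp : 0 < q := by positivity
      calc 324 * (1 / w i.1)^4 * (1/4:ℝ)^(m - i.1).natAbs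
          ≤ 324 * (1 / w i.1)^4 * (1/4:ℝ)^(m - i.1).natAbs * ((1 / w i.1)^2 * (1 / ((i.2:ℝ) + 1)^2)) :=
            le_mul_of_one_le_right (by positivity) h1
        _ = 324 * (1 / w i.1)^6 * (q * q) * (1 / ((i.2:ℝ) + 1)^2) := by rw [h5]; ring
        _ ≤ 324 * (C * 2 ^ m.natAbs * 2 ^ (m - i.1).natAbs) * (q * q) * (1 / ((i.2:ℝ) + 1)^2) := by
            gcongr
        _ = 324 * (C * 2 ^ m.natAbs) * q * (1 / ((i.2:ℝ) + 1)^2) * (2 ^ (m - i.1).natAbs * q) := by ring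
        _ = B m i := by rw [h6, mul_one]
    · rw [h, abs_zero]; positivity
  have hB' : ∀ m i, |Φ' i m| ≤ B m i := fun m i =>
    le_of_tendsto (hΦ i m).abs (Eventually.of_forall fun N => hB N m i)
  refine ⟨V', Φ', E', I, ?_, ?_, hdec, ?_, ?_, ?_, ?_⟩
  · intro n
    exact isClosed_Icc.mem_of_tendsto (hV n) (Eventually.of_forall fun N => (hP N).V_mem n)
  · intro i n
    have h1 : Tendsto (fun N => Φ N i (n+1) + Φ N i (n-1) + 400 * V N n * Φ N i n)
        (hyperfilter ℕ : Filter ℕ) (nhds (Φ' i (n+1) + Φ' i (n-1) + 400 * V' n * Φ' i n)) :=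
      ((hΦ i (n+1)).add (hΦ i (n-1))).add (((hV n).const_mul 400).mul (hΦ i n))
    refine tendsto_nhds_unique (h1.congr' ?_) ((hE i).mul (hΦ i n))
    filter_upwards [hbox n] with N hN
    exact (hP N).eig i n hN
  · intro i j hij
    have := hinner i j
    simp only [fun N => (hP N).orth i j hij] at this
    rw [tendsto_nhds_unique tendsto_const_nhds this]
    exact (hsum i j).hasSum
  · intro i hi
    have : Tendsto (fun _ : ℕ => (1:ℝ)) (hyperfilter ℕ : Filter ℕ)
      (nhds (∑' n, Φ' i n * Φ' i n)) := by
      refine (hinner i i).congr' ?_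
      filter_upwards [hi] with N hN
      exact (hP N).norm_used i hN
    rw [tendsto_nhds_unique tendsto_const_nhds this]
    exact (hsum i i).hasSum
  · intro i hi n
    have hi' : ∀ᶠ N in (hyperfilter ℕ : Filter ℕ), i ∉ used N := Ultrafilter.eventually_not.2 hi
    have : Tendsto (fun _ : ℕ => (0:ℝ)) (hyperfilter ℕ : Filter ℕ)
      (nhds (∑' n, Φ' i n * Φ' i n)) := by
      refine (hinner i i).congr' ?_
      filter_upwards [hi'] with N hN
      exact (hP N).norm_unused i hN
    have h0 := tendsto_nhds_unique tendsto_const_nhds this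
    have h1 := (hsum i i).le_tsum n (fun _ _ => mul_self_nonneg _)
    rw [← h0] at h1
    exact mul_self_eq_zero.1 (le_antisymm h1 (mul_self_nonneg _))
  · intro m n
    have hs : Summable (fun i => Φ' i m * Φ' i n) := by
      refine Summable.of_norm_bounded (hBs m) (fun i => ?_)
      rw [norm_mul, Real.norm_eq_abs, Real.norm_eq_abs]
      exact (mul_le_of_le_one_right (abs_nonneg _) (hle1 i n)).trans (hB' m i)
    have : Tendsto (fun N => ∑' i, Φ N i m * Φ N i n) (hyperfilter ℕ : Filter ℕ)
        (nhds (∑' i, Φ' i m * Φ' i n)) := by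
      refine tendsto_tsum_of_dominated_convergence (hBs m) (fun i => (hΦ i m).mul (hΦ i n)) ?_
      refine Eventually.of_forall fun N i => ?_
      rw [norm_mul, Real.norm_eq_abs, Real.norm_eq_abs]
      exact (mul_le_of_le_one_right (abs_nonneg _) ((hP N).le_one i n)).trans (hB N m i)
    have h2 : Tendsto (fun _ : ℕ => if m = n then (1:ℝ) else 0) (hyperfilter ℕ : Filter ℕ)
        (nhds (∑' i, Φ' i m * Φ' i n)) := by
      refine this.congr' ?_
      filter_upwards [hbox m, hbox n] with N h1 h2
      exact (hP N).compl m h1 n h2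
    rw [tendsto_nhds_unique tendsto_const_nhds h2]
    exact hs.hasSum

theorem Loc.Lim.infinite {w V Φ E I} (h : Loc.Lim w V Φ E I) : I.Infinite := by
  intro hfin
  have hkey : ∀ s : Finset ℤ, (s.card : ℝ) ≤ hfin.toFinset.card := by
    intro s
    have h1 : ∀ m, ∑ i ∈ hfin.toFinset, Φ i m * Φ i m = 1 := by
      intro m
      have h2 := h.compl m m
      rw [if_pos rfl] at h2
      refine (hasSum_sum_of_ne_finset_zero ?_).unique h2
      intro i hi
      rw [h.zero i (by simpa using hi), zero_mul]
    calc (s.card : ℝ) = ∑ m ∈ s, ∑ i ∈ hfin.toFinset, Φ i m * Φ i m := by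
          rw [Finset.sum_congr rfl (fun m _ => h1 m)]; simp
      _ = ∑ i ∈ hfin.toFinset, ∑ m ∈ s, Φ i m * Φ i m := Finset.sum_comm
      _ ≤ ∑ i ∈ hfin.toFinset, 1 := by
          apply Finset.sum_le_sum
          intro i hi
          exact sum_le_hasSum s (fun _ _ => mul_self_nonneg _) (h.norm_one i (by simpa using hi))
      _ = _ := by simp
  obtain ⟨s, hs⟩ := Infinite.exists_subset_card_eq ℤ (hfin.toFinset.card + 1)
  have := hkey s
  rw [hs] at this
  push_cast at this
  linarith

theorem Loc.Lim.sule {w V Φ E I} (h : Loc.Lim w V Φ E I)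
    (hwk : ∀ (k : ℕ) (ε : ℝ), 0 < ε → ∃ C : ℝ, 0 ≤ C ∧ ∀ x : ℤ, (1 / w x) ^ k ≤ C * exp (ε * |(x:ℝ)|)) :
    HasSULE (fun n => 400 * V n) := by
  classical
  have : Infinite I := h.infinite.to_subtype
  obtain ⟨e⟩ : Nonempty (ℕ ≃ I) := nonempty_equiv_of_countable
  have hmem : ∀ i : I, Memℓp (Φ i.1) 2 := by
    intro i
    apply memℓp_gen
    have := (h.norm_one i.1 i.2).summable
    convert this using 2 with n
    simp [sq]
  let v : ℕ → lp (fun _ : ℤ => ℝ) 2 := fun k => ⟨Φ (e k).1, hmem (e k)⟩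
  have hv_apply : ∀ k n, v k n = Φ (e k).1 n := fun k n => rfl
  have hinner : ∀ k l, inner ℝ (v k) (v l) = ∑' n, Φ (e k).1 n * Φ (e l).1 n := by
    intro k l
    rw [lp.inner_eq_tsum]
    apply tsum_congr
    intro n
    simp only [hv_apply, RCLike.inner_apply, conj_trivial]
    ring
  have hv : Orthonormal ℝ v := by
    rw [orthonormal_iff_ite]
    intro k l
    rw [hinner]
    split_ifs with hkl
    · subst hkl
      exact (h.norm_one _ (e k).2).tsum_eq
    · refine (h.orth _ _ ?_).tsum_eq
      intro hc
      exact hkl (e.injective (Subtype.ext hc))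
  have hcompl : ∀ m, HasSum (fun k => Φ (e k).1 m * Φ (e k).1 m) 1 := by
    intro m
    have h2 := h.compl m m
    rw [if_pos rfl] at h2
    have hinj : Function.Injective (fun k => (e k).1) := Subtype.val_injective.comp e.injective
    refine (hinj.hasSum_iff ?_).2 h2
    intro i hi
    rw [h.zero i ?_, zero_mul]
    intro hiI
    exact hi ⟨e.symm ⟨i, hiI⟩, by simp⟩
  have hbot : (Submodule.span ℝ (Set.range v))ᗮ = ⊥ := by
    rw [Submodule.eq_bot_iff]
    intro f hf
    have hf0 : ∀ k, inner ℝ (v k) f = 0 := fun k =>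
      (Submodule.mem_orthogonal _ _).1 hf _ (Submodule.subset_span ⟨k, rfl⟩)
    apply lp.ext
    funext m
    have hkey : ∀ F : Finset ℕ, (f m)^2 ≤ (1 - ∑ k ∈ F, Φ (e k).1 m * Φ (e k).1 m) * ‖f‖^2 := by
      intro F
      let d : lp (fun _ : ℤ => ℝ) 2 := lp.single 2 m (1:ℝ)
      let p : lp (fun _ : ℤ => ℝ) 2 := ∑ k ∈ F, Φ (e k).1 m • v k
      have hd : ∀ u : lp (fun _ : ℤ => ℝ) 2, inner ℝ d u = u m := by
        intro u
        simp only [d]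
        rw [lp.inner_single_left]
        simp
      have h1 : inner ℝ (d - p) f = f m := by
        rw [inner_sub_left, hd, sum_inner]
        simp [inner_smul_left, hf0]
      have h2 : inner ℝ d p = ∑ k ∈ F, Φ (e k).1 m * Φ (e k).1 m := by
        simp only [p]
        rw [inner_sum]
        apply Finset.sum_congr rfl
        intro k _
        rw [inner_smul_right, hd]
      have h3 : inner ℝ p p = ∑ k ∈ F, Φ (e k).1 m * Φ (e k).1 m := by
        simp only [p]
        rw [hv.inner_sum]
        simp
      have h4 : inner ℝ d d = (1:ℝ) := by
        rw [hd]; simp [d]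
      have h5 : ‖d - p‖^2 = 1 - ∑ k ∈ F, Φ (e k).1 m * Φ (e k).1 m := by
        rw [norm_sub_sq_real, ← real_inner_self_eq_norm_sq, ← real_inner_self_eq_norm_sq, h2, h3, h4]
        ring
      rw [← h5, ← mul_pow, ← h1, ← sq_abs]
      exact pow_le_pow_left₀ (abs_nonneg _) (abs_real_inner_le_norm _ _) 2
    have hlim : Tendsto (fun F : Finset ℕ => (1 - ∑ k ∈ F, Φ (e k).1 m * Φ (e k).1 m) * ‖f‖^2) atTop
        (nhds ((1 - 1) * ‖f‖^2)) := ((hcompl m).const_sub 1).mul_const _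
    have := ge_of_tendsto hlim (Eventually.of_forall hkey)
    rw [sub_self, zero_mul] at this
    exact pow_eq_zero_iff (by norm_num) |>.1 (le_antisymm this (sq_nonneg _))
  refine ⟨HilbertBasis.mkOfOrthogonalEqBot hv hbot, fun k => (e k).1.1, Real.log 4,
    Real.log_pos (by norm_num), ?_, ?_⟩
  · intro s
    refine ⟨E (e s).1, ?_⟩
    rw [HilbertBasis.coe_mkOfOrthogonalEqBot]
    exact fun n => h.eig (e s).1 n
  · intro ε hε
    obtain ⟨C, hC0, hC⟩ := hwk 4 ε hε
    refine ⟨324 * C, fun s n => ?_⟩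
    rw [HilbertBasis.coe_mkOfOrthogonalEqBot, hv_apply]
    refine (h.decay _ _).trans ?_
    have h1 : exp (-Real.log 4 * |(n:ℝ) - ((e s).1.1 : ℝ)|) = (1/4) ^ ((e s).1.1 - n).natAbs := by
      have : |(n:ℝ) - ((e s).1.1 : ℝ)| = ((((e s).1.1 - n).natAbs : ℕ) : ℝ) := by
        rw [Nat.cast_natAbs, abs_sub_comm]; push_cast; rfl
      rw [this, Real.exp_mul, ← Real.log_inv, Real.exp_log (by norm_num), Real.rpow_natCast]
      norm_num
    rw [h1]
    have := hC (e s).1.1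
    apply mul_le_mul_of_nonneg_right _ (by positivity)
    linarith

theorem Loc.deltaPot_zero (V : ℤ → ℝ) (hV : ∀ n, V n ∈ Set.Icc (Loc.cc n) (Loc.cc n + 1)) :
    deltaPot (fun n => 400 * V n) = 0 := by
  have h0 : ∀ n, 0 ≤ V n ∧ V n ≤ 3 := by
    intro n
    have := hV n
    unfold Loc.cc at this
    split_ifs at this <;> constructor <;> linarith [this.1, this.2]
  have hle : ∀ n m, |400 * V (n - m) - 400 * V m| ≤ 1200 := by
    intro n m
    rw [abs_le]
    constructor <;> linarith [(h0 (n-m)).1, (h0 (n-m)).2, (h0 m).1, (h0 m).2]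
  have hlog : ∀ n : ℤ, n ≠ 0 → |Real.log (⨆ m : ℤ, |400 * V (n - m) - 400 * V m|)| ≤ Real.log 1200 := by
    intro n hn
    have hS1 : (⨆ m : ℤ, |400 * V (n - m) - 400 * V m|) ≤ 1200 := ciSup_le (hle n)
    have hS2 : 1 ≤ ⨆ m : ℤ, |400 * V (n - m) - 400 * V m| := by
      have hb : BddAbove (Set.range fun m : ℤ => |400 * V (n - m) - 400 * V m|) :=
        ⟨1200, by rintro _ ⟨m, rfl⟩; exact hle n m⟩
      refine le_trans ?_ (le_ciSup hb 0)
      have a := hV n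
      have b := hV 0
      simp only [Loc.cc, hn, if_false, if_true] at a b
      rw [sub_zero, abs_sub_comm]
      refine le_trans ?_ (le_abs_self _)
      linarith [a.2, b.1]
    rw [abs_of_nonneg (Real.log_nonneg hS2)]
    exact Real.log_le_log (by linarith) hS1
  apply Tendsto.limsup_eq
  have habs : Tendsto (fun n : ℤ => |(n:ℝ)|) cofinite atTop := by
    have := tendsto_norm_cocompact_atTop (E := ℤ)
    rw [cocompact_eq_cofinite] at this
    exact this.congr (fun n => by rw [Int.norm_eq_abs])
  refine squeeze_zero_norm' (a := fun n : ℤ => Real.log 1200 / |(n:ℝ)|) ?_ (habs.const_div_atTop _)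
  have hne : ∀ᶠ n : ℤ in cofinite, n ≠ 0 := (Set.finite_singleton (0:ℤ)).eventually_cofinite_notMem
  filter_upwards [hne] with n hn
  rw [norm_div, norm_neg, Real.norm_eq_abs, Real.norm_eq_abs, abs_abs]
  exact div_le_div_of_nonneg_right (hlog n hn) (abs_nonneg _)

theorem exists_SULE_with_deltaPot_zero :
    ∃ g : ℤ → ℝ, (∃ M : ℝ, ∀ n : ℤ, |g n| ≤ M) ∧
      deltaPot g = 0 ∧ HasSULE g := by
  obtain ⟨w, hw, hw1, hwk⟩ := Loc.exists_w
  obtain ⟨V, Φ, E, I, h⟩ := Loc.exists_lim w hw hw1 hwk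
  refine ⟨fun n => 400 * V n, ⟨1200, fun n => ?_⟩, Loc.deltaPot_zero V h.V_mem, h.sule hwk⟩
  have := h.V_mem n
  unfold Loc.cc at this
  rw [abs_le]
  split_ifs at this <;> constructor <;> linarith [this.1, this.2]
end
end

section
/- Let λ > 1, let α be Diophantine, and let θ ∈ ℝ satisfy δ(α,θ) > ln λ. Then the almost Mathieu operator H_{λ,α,θ} has no eigenvalues: for every E ∈ ℝ, every u ∈ ℓ²(ℤ) satisfying u(n+1) + u(n−1) + 2λcos(2π(θ + nα))u(n) = E·u(n) for all n is identically zero. -/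
noncomputable section

open Filter Real

/-! Part A -/

def vp (x : UnitAddCircle) : ℝ := 2 * (fourier 1 x : ℂ).re

lemma vp_eq (x : UnitAddCircle) : (vp x : ℂ) = fourier 1 x + fourier (-1) x := by
  rw [fourier_neg, Complex.add_conj, vp]

lemma vp_abs (x : UnitAddCircle) : |vp x| ≤ 2 := by
  have h1 : ‖(fourier 1 x : ℂ)‖ = 1 := by rw [fourier_one]; exact Circle.norm_coe _
  have := Complex.abs_re_le_norm (fourier 1 x : ℂ)
  rw [vp, abs_mul, abs_two]; linarith

def jac (a b : ℝ) (α x : UnitAddCircle) (n : ℕ) : Matrix (Fin n) (Fin n) ℂ := fun i j =>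
  (if j = i then ((b * vp (x + (i : ℕ) • α) : ℝ) : ℂ) else 0) +
  (if (j : ℕ) = i + 1 then (a : ℂ) else 0) + (if (i : ℕ) = j + 1 then (a : ℂ) else 0)

lemma jac_herm (a b : ℝ) (α x : UnitAddCircle) (n : ℕ) : (jac a b α x n).IsHermitian := by
  ext i j
  simp only [Matrix.conjTranspose_apply, jac]
  by_cases h : i = j
  · subst h; simp
  · have h' : ¬ j = i := fun e => h e.symm
    simp only [h, h', if_false]
    split_ifs <;> simp 

def Hop (a b : ℝ) (α x : UnitAddCircle) (f : ℤ → ℂ) : ℤ → ℂ := fun n =>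
  a * (f (n + 1) + f (n - 1)) + b * vp (x + n • α) * f n

lemma jac_sum (a b : ℝ) (α x : UnitAddCircle) (n : ℕ) (g : ℤ → ℂ) (h1 : g (-1) = 0)
    (h2 : g n = 0) (i : Fin n) :
    ∑ l : Fin n, jac a b α x n i l * g (l : ℕ) = Hop a b α x g (i : ℕ) := by
  simp only [jac, add_mul, Finset.sum_add_distrib, ite_mul, zero_mul, Finset.sum_ite_eq',
    Finset.mem_univ, if_true, Hop]
  have e1 : ∑ l : Fin n, (if (l : ℕ) = i + 1 then (a : ℂ) * g (l : ℕ) else 0)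
      = a * g ((i : ℕ) + 1) := by
    by_cases hi : (i : ℕ) + 1 < n
    · rw [Finset.sum_eq_single ⟨i + 1, hi⟩]
      · simp
      · intro l _ hl; rw [if_neg]; intro e; exact hl (Fin.ext e)
      · simp
    · have : (i : ℕ) + 1 = n := by omega
      rw [Finset.sum_eq_zero]
      · have h3 : ((i : ℕ) : ℤ) + 1 = n := by exact_mod_cast this
        rw [h3, h2, mul_zero]
      · intro l _; rw [if_neg]; omega
  have e2 : ∑ l : Fin n, (if (i : ℕ) = l + 1 then (a : ℂ) * g (l : ℕ) else 0)
      = a * g ((i : ℕ) - 1) := by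
    by_cases hi : 0 < (i : ℕ)
    · rw [Finset.sum_eq_single ⟨i - 1, by omega⟩]
      · rw [if_pos (by simp; omega)]; congr 2; simp; omega
      · intro l _ hl; rw [if_neg]; intro e; exact hl (Fin.ext (by simp; omega))
      · simp
    · have : (i : ℕ) = 0 := by omega
      rw [Finset.sum_eq_zero]
      · rw [this]; simp [h1]
      · intro l _; rw [if_neg]; omega
  rw [e1, e2]; push_cast; rw [natCast_zsmul]; ring

lemma Hop_supp (a b : ℝ) (α x : UnitAddCircle) (j : ℤ) (k : ℕ) (m : ℤ) (hm : (k : ℤ) < |m - j|) :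
    ((Hop a b α x)^[k] (Pi.single j 1)) m = 0 := by
  induction k generalizing m with
  | zero =>
    simp only [Function.iterate_zero, id]
    rw [Pi.single_eq_of_ne]; rintro rfl; simp at hm
  | succ k ih =>
    rw [Function.iterate_succ_apply', Hop, ih, ih, ih]
    · simp
    all_goals push_cast at hm; grind

lemma jac_pow (a b : ℝ) (α x : UnitAddCircle) (n : ℕ) (k : ℕ) (i j : Fin n)
    (h1 : k ≤ j) (h2 : j + k < n) :
    (jac a b α x n ^ k) i j = ((Hop a b α x)^[k] (Pi.single ((j : ℕ) : ℤ) 1)) (i : ℕ) := by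
  induction k generalizing i with
  | zero => 
    simp only [pow_zero, Function.iterate_zero, id, Matrix.one_apply, Pi.single_apply]
    simp [Fin.ext_iff]
  | succ k ih =>
    rw [pow_succ', Matrix.mul_apply, Function.iterate_succ_apply', ← jac_sum]
    · exact Finset.sum_congr rfl fun l _ => by rw [ih l (by omega) (by omega)]
    · apply Hop_supp; grind
    · apply Hop_supp; grind

lemma Hop_shift (a b : ℝ) (α x : UnitAddCircle) (j : ℤ) (k : ℕ) (m : ℤ) :
    ((Hop a b α x)^[k] (Pi.single j 1)) (m + j) =
      ((Hop a b α (x + j • α))^[k] (Pi.single 0 1)) m := by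
  induction k generalizing m with
  | zero => simp [Pi.single_apply]
  | succ k ih =>
    simp only [Function.iterate_succ_apply', Hop]
    rw [← ih, ← ih, ← ih, add_zsmul, add_right_comm m j 1, add_sub_right_comm, add_comm (m • α), ← add_assoc x]

/-! Laurent -/
open LaurentPolynomial in
def HL (a b : ℝ) (α : UnitAddCircle) (f : ℤ → LaurentPolynomial ℂ) : ℤ → LaurentPolynomial ℂ :=
  fun n => C (a : ℂ) * (f (n + 1) + f (n - 1)) +
    C (b : ℂ) * (C (fourier n α) * T 1 + C (fourier (-n) α) * T (-1)) * f n

def evx (x : UnitAddCircle) : LaurentPolynomial ℂ →ₐ[ℂ] ℂ :=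
  AddMonoidAlgebra.lift ℂ ℂ ℤ
    { toFun := fun n => fourier (Multiplicative.toAdd n) x
      map_one' := by simp
      map_mul' := by intro m n; simp [add_zsmul, AddCircle.toCircle_add] }

lemma evx_T (x : UnitAddCircle) (m : ℤ) : evx x (LaurentPolynomial.T m) = fourier m x := by
  rw [evx, LaurentPolynomial.T, AddMonoidAlgebra.lift_single]; simp

lemma evx_C (x : UnitAddCircle) (c : ℂ) : evx x (LaurentPolynomial.C c) = c := by
  rw [← LaurentPolynomial.single_eq_C, evx, AddMonoidAlgebra.lift_single]; simp

lemma fourier_shift (m n : ℤ) (α x : UnitAddCircle) :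
    (fourier m (x + n • α) : ℂ) = fourier (m * n) α * fourier m x := by
  simp only [fourier_apply, smul_add, smul_smul, AddCircle.toCircle_add]
  push_cast; ring

lemma evx_HL (a b : ℝ) (α x : UnitAddCircle) (f : ℤ → LaurentPolynomial ℂ) (n : ℤ) :
    evx x (HL a b α f n) = Hop a b α x (fun m => evx x (f m)) n := by
  simp only [HL, Hop, map_add, map_mul, evx_T, evx_C, vp_eq, fourier_shift]
  simp

lemma evx_iter (a b : ℝ) (α x : UnitAddCircle) (k : ℕ) (n : ℤ) :
    evx x (((HL a b α)^[k] (Pi.single 0 1)) n) = ((Hop a b α x)^[k] (Pi.single 0 1)) n := by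
  induction k generalizing n with
  | zero => by_cases h : n = 0 <;> simp [Pi.single_apply, h]
  | succ k ih =>
    rw [Function.iterate_succ_apply', evx_HL, Function.iterate_succ_apply']
    congr 1
    ext m; exact ih m

def h2 (a b : ℝ) (α : UnitAddCircle) (F : ℤ → ℤ → ℂ) : ℤ → ℤ → ℂ := fun n m =>
  a * (F (n + 1) m + F (n - 1) m) + b * (fourier n α * F n (m - 1) + fourier (-n) α * F n (m + 1))

lemma HL_coeff (a b : ℝ) (α : UnitAddCircle) (f : ℤ → LaurentPolynomial ℂ) (n m : ℤ) :
    (HL a b α f n).coeff m = h2 a b α (fun n m => (f n).coeff m) n m := by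
  have key : ∀ (r : ℤ) (c : ℂ) (g : LaurentPolynomial ℂ),
      (LaurentPolynomial.C c * LaurentPolynomial.T r * g).coeff m = c * g.coeff (m - r) := by
    intro r c g
    rw [← LaurentPolynomial.single_eq_C_mul_T, AddMonoidAlgebra.coeff_single_mul_apply]
    rw [neg_add_eq_sub]
  have key0 : ∀ (c : ℂ) (g : LaurentPolynomial ℂ),
      (LaurentPolynomial.C c * g).coeff m = c * g.coeff m := by
    intro c g
    have := key 0 c g
    simpa using this
  simp only [HL, h2]
  rw [mul_assoc (LaurentPolynomial.C (b : ℂ)), AddMonoidAlgebra.coeff_add, Finsupp.add_apply, key0, key0, AddMonoidAlgebra.coeff_add,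
    Finsupp.add_apply, add_mul, AddMonoidAlgebra.coeff_add, Finsupp.add_apply, key, key]
  simp


def rot (α : UnitAddCircle) (F : ℤ → ℤ → ℂ) : ℤ → ℤ → ℂ := fun n m => fourier (n * m) α * F m (-n)

lemma h2_rot (a b : ℝ) (α : UnitAddCircle) (F : ℤ → ℤ → ℂ) :
    h2 a b α (rot α F) = rot α (h2 b a α F) := by
  ext n m
  simp only [h2, rot]
  have e : ∀ i j : ℤ, (fourier (i + j) α : ℂ) = fourier i α * fourier j α := fun i j => fourier_add
  have e1 : (fourier ((n + 1) * m) α : ℂ) = fourier (n * m) α * fourier m α := by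
    rw [← e]; congr 2; ring
  have e2 : (fourier ((n - 1) * m) α : ℂ) = fourier (n * m) α * fourier (-m) α := by
    rw [← e]; congr 2; ring
  have e3 : (fourier n α : ℂ) * fourier (n * (m - 1)) α = fourier (n * m) α := by
    rw [← e]; congr 2; ring
  have e4 : (fourier (-n) α : ℂ) * fourier (n * (m + 1)) α = fourier (n * m) α := by
    rw [← e]; congr 2; ring
  rw [e1, e2, ← mul_assoc (fourier n α), ← mul_assoc (fourier (-n) α), e3, e4]
  have e5 : -(n + 1) = -n - 1 := by ring
  have e6 : -(n - 1) = -n + 1 := by ring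
  rw [e5, e6]
  ring

lemma h2_rot_iter (a b : ℝ) (α : UnitAddCircle) (F : ℤ → ℤ → ℂ) (k : ℕ) :
    (h2 a b α)^[k] (rot α F) = rot α ((h2 b a α)^[k] F) := by
  induction k with
  | zero => rfl
  | succ k ih => rw [Function.iterate_succ_apply', ih, h2_rot, Function.iterate_succ_apply']

def d00 : ℤ → ℤ → ℂ := fun n m => if n = 0 ∧ m = 0 then 1 else 0

lemma HL_iter_coeff (a b : ℝ) (α : UnitAddCircle) (k : ℕ) :
    (fun n m => (((HL a b α)^[k] (Pi.single 0 1)) n).coeff m) = (h2 a b α)^[k] d00 := by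
  induction k with
  | zero =>
    ext n m
    simp only [Function.iterate_zero, id, d00]
    by_cases h : n = 0
    · subst h
      simp only [Pi.single_eq_same, ← LaurentPolynomial.T_zero, LaurentPolynomial.T_apply]
      simp [eq_comm]
    · simp [Pi.single_apply, h]
  | succ k ih =>
    ext n m
    rw [Function.iterate_succ_apply', HL_coeff, ih, Function.iterate_succ_apply']

def cst (a b : ℝ) (α : UnitAddCircle) (k : ℕ) : ℂ := (((HL a b α)^[k] (Pi.single 0 1)) 0).coeff 0

lemma cst_dual (a b : ℝ) (α : UnitAddCircle) (k : ℕ) : cst a b α k = cst b a α k := by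
  have h := HL_iter_coeff a b α k
  have h' := HL_iter_coeff b a α k
  have e : rot α d00 = d00 := by
    ext n m
    simp only [rot, d00]
    by_cases h : m = 0 <;> by_cases h' : n = 0 <;> simp [h, h']
  have e1 := h2_rot_iter a b α d00 k
  rw [e, ← h, ← h'] at e1
  have e2 := congrFun (congrFun e1 0) 0
  simpa [rot, cst] using e2

def Irr (α : UnitAddCircle) : Prop := ∀ m : ℤ, m ≠ 0 → (fourier m α : ℂ) ≠ 1

lemma fourier_norm1 (m : ℤ) (x : UnitAddCircle) : ‖(fourier m x : ℂ)‖ = 1 := by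
  rw [fourier_apply]; exact Circle.norm_coe _

lemma orbit_T {α : UnitAddCircle} (hα : Irr α) (m : ℤ) (hm : m ≠ 0) :
    ∃ C : ℝ, ∀ (n : ℕ) (x : UnitAddCircle),
      ‖∑ j ∈ Finset.range n, (fourier m (x + j • α) : ℂ)‖ ≤ C := by
  refine ⟨2 / ‖(fourier m α : ℂ) - 1‖, fun n x => ?_⟩
  have e : ∀ j ∈ Finset.range n, (fourier m (x + j • α) : ℂ) = fourier m x * (fourier m α) ^ j := by
    intro j _
    have := fourier_shift m j α x
    rw [natCast_zsmul] at this
    rw [this, mul_comm]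
    congr 1
    rw [mul_comm]
    simp only [fourier_apply, mul_smul, natCast_zsmul, AddCircle.toCircle_nsmul]
    push_cast; rfl
  rw [Finset.sum_congr rfl e, ← Finset.mul_sum, geom_sum_eq (hα m hm), norm_mul, fourier_norm1,
    one_mul, norm_div]
  gcongr
  refine (norm_sub_le _ _).trans ?_
  rw [norm_pow, fourier_norm1]; norm_num

lemma orbit_poly {α : UnitAddCircle} (hα : Irr α) (f : LaurentPolynomial ℂ) :
    ∃ C : ℝ, ∀ (n : ℕ) (x : UnitAddCircle),
      ‖∑ j ∈ Finset.range n, evx (x + j • α) f - n * f.coeff 0‖ ≤ C := by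
  induction f using LaurentPolynomial.induction_on' with
  | add p q hp hq =>
    obtain ⟨C1, h1⟩ := hp
    obtain ⟨C2, h2⟩ := hq
    refine ⟨C1 + C2, fun n x => ?_⟩
    refine le_trans (le_of_eq ?_) ((norm_add_le _ _).trans (add_le_add (h1 n x) (h2 n x)))
    congr 1
    simp only [map_add, Finset.sum_add_distrib, AddMonoidAlgebra.coeff_add, Finsupp.add_apply]
    ring
  | C_mul_T m c =>
    by_cases hm : m = 0
    · subst hm
      refine ⟨0, fun n x => ?_⟩
      simp [evx_C]
    · obtain ⟨C, hC⟩ := orbit_T hα m hm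
      refine ⟨‖c‖ * C, fun n x => ?_⟩
      have : (LaurentPolynomial.C c * LaurentPolynomial.T m).coeff 0 = 0 := by
        rw [← LaurentPolynomial.single_eq_C_mul_T, AddMonoidAlgebra.coeff_single,
          Finsupp.single_eq_of_ne (Ne.symm hm)]
      simp only [this, map_mul, evx_C, evx_T, mul_zero, sub_zero, ← Finset.mul_sum, norm_mul]
      exact mul_le_mul_of_nonneg_left (hC n x) (norm_nonneg _)

section
attribute [local instance] Matrix.linftyOpNormedRing Matrix.linftyOpNormedAlgebra

lemma entry_le {n : ℕ} (A : Matrix (Fin n) (Fin n) ℂ) (i j : Fin n) : ‖A i j‖ ≤ ‖A‖ := by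
  rw [Matrix.linfty_opNorm_def]
  have h1 : ‖A i j‖₊ ≤ ∑ j, ‖A i j‖₊ := Finset.single_le_sum (f := fun j => ‖A i j‖₊) (by simp) (Finset.mem_univ j)
  have h2 : ∑ j, ‖A i j‖₊ ≤ Finset.univ.sup fun i => ∑ j, ‖A i j‖₊ :=
    Finset.le_sup (f := fun i => ∑ j, ‖A i j‖₊) (Finset.mem_univ i)
  exact_mod_cast h1.trans h2

lemma jac_norm (a b : ℝ) (α x : UnitAddCircle) (n : ℕ) :
    ‖jac a b α x n‖ ≤ 2 * |a| + 2 * |b| := by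
  have hR : 0 ≤ 2 * |a| + 2 * |b| := by positivity
  rw [Matrix.linfty_opNorm_def, ← NNReal.coe_mk _ hR, NNReal.coe_le_coe]
  refine Finset.sup_le fun i _ => ?_
  rw [← NNReal.coe_le_coe]
  push_cast
  have : ∀ j : Fin n, ‖jac a b α x n i j‖ ≤ (if j = i then |b| * 2 else 0) +
    (if (j : ℕ) = i + 1 then |a| else 0) + (if (i : ℕ) = j + 1 then |a| else 0) := by
    intro j
    refine (norm_add_le _ _).trans (add_le_add ((norm_add_le _ _).trans (add_le_add ?_ ?_)) ?_)
    · split_ifs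
      · rw [Complex.norm_real, norm_mul]
        exact mul_le_mul_of_nonneg_left (vp_abs _) (norm_nonneg _)
      · simp
    · split_ifs <;> simp
    · split_ifs <;> simp
  refine (Finset.sum_le_sum fun j _ => this j).trans ?_
  simp only [Finset.sum_add_distrib, Finset.sum_ite_eq', Finset.mem_univ, if_true]
  have s1 : ∑ j : Fin n, (if (j : ℕ) = i + 1 then |a| else 0) ≤ |a| := by
    by_cases hi : (i : ℕ) + 1 < n
    · rw [Finset.sum_eq_single ⟨i + 1, hi⟩]
      · simp
      · intro l _ hl; rw [if_neg]; intro e; exact hl (Fin.ext e)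
      · simp
    · rw [Finset.sum_eq_zero]
      · positivity
      · intro l _; rw [if_neg]; omega
  have s2 : ∑ j : Fin n, (if (i : ℕ) = j + 1 then |a| else 0) ≤ |a| := by
    by_cases hi : 0 < (i : ℕ)
    · rw [Finset.sum_eq_single ⟨i - 1, by omega⟩]
      · split_ifs <;> simp
      · intro l _ hl; rw [if_neg]; intro e; exact hl (Fin.ext (by simp; omega))
      · simp
    · rw [Finset.sum_eq_zero]
      · positivity
      · intro l _; rw [if_neg]; omega
  linarith

lemma jac_pow_norm (a b : ℝ) (α x : UnitAddCircle) (n k : ℕ) (i j : Fin n) :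
    ‖(jac a b α x n ^ k) i j‖ ≤ (2 * |a| + 2 * |b|) ^ k := by
  haveI : Nonempty (Fin n) := ⟨i⟩
  refine (entry_le _ i j).trans ((norm_pow_le _ _).trans ?_)
  exact pow_le_pow_left₀ (norm_nonneg _) (jac_norm a b α x n) k

lemma jac_eig (a b : ℝ) (α x : UnitAddCircle) (n : ℕ) (i : Fin n) :
    |(jac_herm a b α x n).eigenvalues i| ≤ 2 * |a| + 2 * |b| := by
  haveI : Nonempty (Fin n) := ⟨i⟩
  have h := (jac_herm a b α x n).eigenvalues_mem_spectrum_real i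
  have h2 : (((jac_herm a b α x n).eigenvalues i : ℝ) : ℂ) ∈ spectrum ℂ (jac a b α x n) := by
    rw [(jac_herm a b α x n).spectrum_eq_image_range]
    exact ⟨_, ⟨i, rfl⟩, rfl⟩
  have := spectrum.norm_le_norm_of_mem h2
  rw [Complex.norm_real] at this
  exact this.trans (jac_norm a b α x n)
end

lemma Hop_bound (a b : ℝ) (α x : UnitAddCircle) (j : ℤ) (k : ℕ) (m : ℤ) :
    ‖((Hop a b α x)^[k] (Pi.single j 1)) m‖ ≤ (2 * |a| + 2 * |b|) ^ k := by
  induction k generalizing m with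
  | zero => by_cases h : m = j <;> simp [Pi.single_apply, h]
  | succ k ih =>
    rw [Function.iterate_succ_apply', Hop]
    refine (norm_add_le _ _).trans ?_
    rw [norm_mul, norm_mul, norm_mul, Complex.norm_real, Complex.norm_real, Complex.norm_real, pow_succ]
    have h1 := (norm_add_le _ _).trans (add_le_add (ih (m+1)) (ih (m-1)))
    have h2 := ih m
    have h3 := vp_abs (x + m • α)
    simp only [Real.norm_eq_abs]
    have h4 := mul_le_mul_of_nonneg_left h1 (abs_nonneg a)
    have h5 : |b| * |vp (x + m • α)| ≤ |b| * 2 := mul_le_mul_of_nonneg_left h3 (abs_nonneg b)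
    have h6 := mul_le_mul h5 h2 (norm_nonneg _) (by positivity)
    linarith

lemma trace_asym (a b : ℝ) {α : UnitAddCircle} (hα : Irr α) (k : ℕ) :
    ∃ C : ℝ, ∀ (n : ℕ) (x : UnitAddCircle),
      ‖(jac a b α x n ^ k).trace - n * cst a b α k‖ ≤ C := by
  obtain ⟨C, hC⟩ := orbit_poly hα (((HL a b α)^[k] (Pi.single 0 1)) 0)
  set R := (2 * |a| + 2 * |b|) ^ k
  have hR : 0 ≤ R := by positivity
  refine ⟨2 * k * (2 * R) + C, fun n x => ?_⟩
  have h1 := hC n x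
  have e : ∑ j ∈ Finset.range n, evx (x + j • α) (((HL a b α)^[k] (Pi.single 0 1)) 0) =
      ∑ j : Fin n, ((Hop a b α x)^[k] (Pi.single ((j : ℕ) : ℤ) 1)) (j : ℕ) := by
    rw [← Fin.sum_univ_eq_sum_range (fun j => evx (x + j • α) (((HL a b α)^[k] (Pi.single 0 1)) 0))]
    refine Finset.sum_congr rfl fun j _ => ?_
    have := Hop_shift a b α x (j : ℕ) k 0
    rw [zero_add] at this
    rw [this, evx_iter, natCast_zsmul]
  rw [e] at h1
  have h2 : ‖(jac a b α x n ^ k).trace -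
      ∑ j : Fin n, ((Hop a b α x)^[k] (Pi.single ((j : ℕ) : ℤ) 1)) (j : ℕ)‖ ≤ 2 * k * (2 * R) := by
    rw [Matrix.trace, ← Finset.sum_sub_distrib]
    simp only [Matrix.diag_apply]
    have : ∀ j : Fin n, ‖(jac a b α x n ^ k) j j -
        ((Hop a b α x)^[k] (Pi.single ((j : ℕ) : ℤ) 1)) (j : ℕ)‖ ≤
        if ((j : ℕ) < k ∨ n ≤ j + k) then 2 * R else 0 := by
      intro j
      split_ifs with h
      · refine (norm_sub_le _ _).trans ?_
        have := jac_pow_norm a b α x n k j j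
        have := Hop_bound a b α x (j : ℕ) k (j : ℕ)
        linarith
      · push Not at h
        rw [jac_pow a b α x n k j j h.1 h.2]; simp
    refine (norm_sum_le _ _).trans ((Finset.sum_le_sum fun j _ => this j).trans ?_)
    rw [← Finset.sum_filter, Finset.sum_const, nsmul_eq_mul]
    refine mul_le_mul_of_nonneg_right ?_ (by positivity)
    have : (Finset.univ.filter fun j : Fin n => ((j : ℕ) < k ∨ n ≤ j + k)).card ≤ 2 * k := by
      rw [← Finset.card_map Fin.valEmbedding]
      refine (Finset.card_le_card (t := Finset.range k ∪ Finset.Ico (n - k) n) ?_).trans ?_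
      · intro i hi
        simp at hi ⊢
        obtain ⟨j, hj, rfl⟩ := hi
        omega
      · refine (Finset.card_union_le _ _).trans ?_
        simp; omega
    exact_mod_cast this
  calc _ = ‖((jac a b α x n ^ k).trace -
      ∑ j : Fin n, ((Hop a b α x)^[k] (Pi.single ((j : ℕ) : ℤ) 1)) (j : ℕ)) + (∑ j : Fin n, ((Hop a b α x)^[k] (Pi.single ((j : ℕ) : ℤ) 1)) (j : ℕ) - n * cst a b α k)‖ := by congr 1; ring
    _ ≤ _ := (norm_add_le _ _).trans (add_le_add h2 h1)

lemma trace_pow_eig {n : ℕ} {A : Matrix (Fin n) (Fin n) ℂ} (hA : A.IsHermitian) (k : ℕ) :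
    (A ^ k).trace = ∑ i, ((hA.eigenvalues i : ℝ) : ℂ) ^ k := by
  conv_lhs => rw [hA.spectral_theorem]
  rw [← map_pow, Unitary.conjStarAlgAut_apply, Matrix.trace_mul_comm, ← mul_assoc]
  simp [Matrix.diagonal_pow, Matrix.trace_diagonal]

lemma poly_dual (a b : ℝ) {α : UnitAddCircle} (hα : Irr α) (p : Polynomial ℝ) :
    ∃ C : ℝ, ∀ (n : ℕ) (x y : UnitAddCircle),
      |∑ i, p.eval ((jac_herm a b α x n).eigenvalues i) -
        ∑ i, p.eval ((jac_herm b a α y n).eigenvalues i)| ≤ C := by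
  induction p using Polynomial.induction_on' with
  | add p q hp hq =>
    obtain ⟨C1, h1⟩ := hp
    obtain ⟨C2, h2⟩ := hq
    refine ⟨C1 + C2, fun n x y => ?_⟩
    refine le_trans (le_of_eq ?_) ((abs_add_le _ _).trans (add_le_add (h1 n x y) (h2 n x y)))
    congr 1
    simp only [Polynomial.eval_add, Finset.sum_add_distrib]
    ring
  | monomial k c =>
    obtain ⟨C1, h1⟩ := trace_asym a b hα k
    obtain ⟨C2, h2⟩ := trace_asym b a hα k
    refine ⟨|c| * (C1 + C2), fun n x y => ?_⟩
    simp only [Polynomial.eval_monomial]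
    rw [← Finset.mul_sum, ← Finset.mul_sum, ← mul_sub, abs_mul]
    refine mul_le_mul_of_nonneg_left ?_ (abs_nonneg _)
    have h3 := h1 n x
    have h4 := h2 n y
    rw [trace_pow_eig (jac_herm _ _ _ _ _)] at h3 h4
    rw [cst_dual b a] at h4
    rw [← Real.norm_eq_abs, ← Complex.norm_real]
    refine le_trans (le_of_eq ?_) ((norm_sub_le _ _).trans (add_le_add h3 h4))
    congr 1
    push_cast
    ring

lemma cont_dual (a b : ℝ) {α : UnitAddCircle} (hα : Irr α) (f : ℝ → ℝ) (hf : Continuous f)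
    (ε : ℝ) (hε : 0 < ε) : ∃ N : ℕ, ∀ n ≥ N, ∀ x y : UnitAddCircle,
      ∑ i, f ((jac_herm a b α x n).eigenvalues i) ≤
        ∑ i, f ((jac_herm b a α y n).eigenvalues i) + ε * n := by
  set R := 2 * |a| + 2 * |b| with hR
  obtain ⟨p, hp⟩ := exists_polynomial_near_of_continuousOn (-R) R f hf.continuousOn (ε / 4) (by positivity)
  obtain ⟨C, hC⟩ := poly_dual a b hα p
  obtain ⟨N, hN⟩ := exists_nat_ge (C / (ε / 4))
  refine ⟨N, fun n hn x y => ?_⟩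
  have h1 : ∑ i, f ((jac_herm a b α x n).eigenvalues i) ≤
      ∑ i, (p.eval ((jac_herm a b α x n).eigenvalues i) + ε / 4) := by
    refine Finset.sum_le_sum fun i _ => ?_
    have := hp _ (abs_le.mp (jac_eig a b α x n i))
    have := abs_lt.mp this
    linarith
  have h2 : ∑ i, p.eval ((jac_herm b a α y n).eigenvalues i) ≤
      ∑ i, (f ((jac_herm b a α y n).eigenvalues i) + ε / 4) := by
    refine Finset.sum_le_sum fun i _ => ?_
    have h0 := jac_eig b a α y n i
    rw [add_comm (2 * |b|), ← hR] at h0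
    have := hp _ (abs_le.mp h0)
    have := abs_lt.mp this
    linarith
  rw [Finset.sum_add_distrib] at h1 h2
  simp at h1 h2
  have h3 := (abs_le.mp (hC n x y)).2
  have h4 : C ≤ ε / 4 * n := by
    have : C / (ε / 4) ≤ n := hN.trans (by exact_mod_cast hn)
    rwa [div_le_iff₀ (by positivity), mul_comm] at this
  nlinarith


def Tm (a b : ℝ) (z : ℂ) (x : UnitAddCircle) : Matrix (Fin 2) (Fin 2) ℂ :=
  !![z - b * vp x, -a; a, 0]

def TT (a b : ℝ) (z : ℂ) (α : UnitAddCircle) : ℕ → UnitAddCircle → Matrix (Fin 2) (Fin 2) ℂ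
  | 0, _ => 1
  | n + 1, x => Tm a b z (x + n • α) * TT a b z α n x

lemma TT_add (a b : ℝ) (z : ℂ) (α : UnitAddCircle) (m n : ℕ) (x : UnitAddCircle) :
    TT a b z α (m + n) x = TT a b z α m (x + n • α) * TT a b z α n x := by
  induction m with
  | zero => simp [TT]
  | succ m ih =>
    rw [add_right_comm, TT, ih, TT, ← mul_assoc, add_nsmul, add_comm (m • α), add_assoc]

lemma TT_succ' (a b : ℝ) (z : ℂ) (α : UnitAddCircle) (n : ℕ) (x : UnitAddCircle) :
    TT a b z α (n + 1) x = TT a b z α n (x + α) * Tm a b z x := by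
  rw [TT_add, one_nsmul]; simp [TT]

def dn (a b : ℝ) (z : ℂ) (α : UnitAddCircle) (n : ℕ) (x : UnitAddCircle) : ℂ :=
  (Matrix.scalar (Fin n) z - jac a b α x n).det

lemma jac_succ (a b : ℝ) (α x : UnitAddCircle) (n : ℕ) (i j : Fin n) :
    jac a b α x (n + 1) i.succ j.succ = jac a b α (x + α) n i j := by
  simp only [jac, Fin.succ_inj, Fin.val_succ, add_left_inj]
  rw [add_comm (i : ℕ) 1, add_nsmul, one_nsmul, add_assoc]

lemma sc_succ (a b : ℝ) (z : ℂ) (α x : UnitAddCircle) (n : ℕ) (i j : Fin n) :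
    (Matrix.scalar (Fin (n + 1)) z - jac a b α x (n + 1)) i.succ j.succ =
      (Matrix.scalar (Fin n) z - jac a b α (x + α) n) i j := by
  simp only [Matrix.sub_apply, jac_succ, Matrix.scalar_apply, Matrix.diagonal_apply, Fin.succ_inj]

lemma dn_rec (a b : ℝ) (z : ℂ) (α : UnitAddCircle) (n : ℕ) (x : UnitAddCircle) :
    dn a b z α (n + 2) x = (z - b * vp x) * dn a b z α (n + 1) (x + α)
      - a ^ 2 * dn a b z α n (x + α + α) := by
  rw [dn, Matrix.det_succ_row_zero, Fin.sum_univ_succ, Fin.sum_univ_succ, Finset.sum_eq_zero]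
  · have e0 : (Matrix.scalar (Fin (n + 2)) z - jac a b α x (n + 2)) 0 0 = z - b * vp x := by
      simp [jac]
    have e1 : (Matrix.scalar (Fin (n + 2)) z - jac a b α x (n + 2)) 0 (Fin.succ 0) = -a := by
      simp [jac]
    have s0 : (Matrix.scalar (Fin (n + 2)) z - jac a b α x (n + 2)).submatrix Fin.succ
        (Fin.succAbove 0) = Matrix.scalar (Fin (n + 1)) z - jac a b α (x + α) (n + 1) := by
      ext i j
      rw [Matrix.submatrix_apply, Fin.succAbove_zero, sc_succ]
    have s1 : ((Matrix.scalar (Fin (n + 2)) z - jac a b α x (n + 2)).submatrix Fin.succ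
        (Fin.succAbove (Fin.succ 0))).det = -a * dn a b z α n (x + α + α) := by
      rw [Matrix.det_succ_column_zero, Fin.sum_univ_succ, Finset.sum_eq_zero]
      · have s2 : ((Matrix.scalar (Fin (n + 2)) z - jac a b α x (n + 2)).submatrix Fin.succ
          (Fin.succAbove (Fin.succ 0))).submatrix (Fin.succAbove 0) Fin.succ =
            Matrix.scalar (Fin n) z - jac a b α (x + α + α) n := by
          ext i j
          simp only [Matrix.submatrix_apply, Fin.succAbove_zero, Fin.succ_succAbove_succ]
          rw [sc_succ, sc_succ]
        rw [s2]
        simp [jac, dn]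
      · intro i _
        simp [jac, Fin.ext_iff]
    rw [s0, e0, e1, s1]
    simp [dn]; ring
  · intro i _
    simp [jac, Fin.ext_iff]

lemma TT_eq_dn (a b : ℝ) (z : ℂ) (α : UnitAddCircle) (n : ℕ) (x : UnitAddCircle) :
    TT a b z α n x 0 0 = dn a b z α n x ∧ TT a b z α (n + 1) x 0 0 = dn a b z α (n + 1) x := by
  induction n generalizing x with
  | zero => simp [TT, dn, Tm, jac]
  | succ n ih =>
    refine ⟨(ih x).2, ?_⟩
    have h01 : TT a b z α (n + 1) (x + α) 0 1 = -a * dn a b z α n (x + α + α) := by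
      rw [TT_succ', Matrix.mul_apply, Fin.sum_univ_two, (ih _).1]
      simp [Tm]; ring
    rw [TT_succ', Matrix.mul_apply, Fin.sum_univ_two, (ih _).2, h01, dn_rec]
    simp [Tm]; ring

lemma dn_prod (a b : ℝ) (z : ℂ) (α : UnitAddCircle) (n : ℕ) (x : UnitAddCircle) :
    dn a b z α n x = ∏ i, (z - ((jac_herm a b α x n).eigenvalues i : ℂ)) := by
  rw [dn, ← Matrix.eval_charpoly, (jac_herm a b α x n).charpoly_eq, Polynomial.eval_prod]
  simp

lemma norm_z_pos (E η t : ℝ) (hη : 0 < η) : 0 < ‖(E + η * Complex.I : ℂ) - t‖ := by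
  rw [norm_pos_iff]
  intro h
  have := congrArg Complex.im h
  simp at this
  linarith

lemma dn_dual (a b : ℝ) {α : UnitAddCircle} (hα : Irr α) (E η ε : ℝ) (hη : 0 < η) (hε : 0 < ε) :
    ∃ N : ℕ, ∀ n ≥ N, ∀ x y : UnitAddCircle,
      Real.log ‖dn a b (E + η * Complex.I) α n x‖ ≤ Real.log ‖dn b a (E + η * Complex.I) α n y‖ + ε * n := by
  have hf : Continuous fun t : ℝ => Real.log ‖(E + η * Complex.I : ℂ) - t‖ := by
    refine Continuous.log (by fun_prop) fun t => (norm_z_pos E η t hη).ne'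
  obtain ⟨N, hN⟩ := cont_dual a b hα _ hf ε hε
  refine ⟨N, fun n hn x y => ?_⟩
  have := hN n hn x y
  rw [dn_prod, dn_prod, norm_prod, norm_prod, Real.log_prod, Real.log_prod]
  · exact this
  · exact fun i _ => (norm_z_pos E η _ hη).ne'
  · exact fun i _ => (norm_z_pos E η _ hη).ne'

lemma dn_pos (a b : ℝ) (α : UnitAddCircle) (E η : ℝ) (hη : 0 < η) (n : ℕ) (x : UnitAddCircle) :
    0 < ‖dn a b (E + η * Complex.I) α n x‖ := by
  rw [dn_prod, norm_prod]
  exact Finset.prod_pos fun i _ => norm_z_pos E η _ hη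

lemma dn_mono (a b : ℝ) (α : UnitAddCircle) (E η : ℝ) (n : ℕ) (x : UnitAddCircle) :
    ‖dn a b E α n x‖ ≤ ‖dn a b (E + η * Complex.I) α n x‖ := by
  rw [dn_prod, dn_prod, norm_prod, norm_prod]
  refine Finset.prod_le_prod (fun _ _ => norm_nonneg _) fun i _ => ?_
  set t := (jac_herm a b α x n).eigenvalues i
  have := Complex.abs_re_le_norm ((E + η * Complex.I : ℂ) - t)
  simp at this
  rw [← Complex.ofReal_sub, Complex.norm_real]
  exact this

attribute [local instance] Matrix.linftyOpNormedRing Matrix.linftyOpNormedAlgebra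

lemma norm_le_four (M : Matrix (Fin 2) (Fin 2) ℂ) (c : ℝ) (h : ∀ i j, ‖M i j‖ ≤ c) : ‖M‖ ≤ 2 * c := by
  have hc : 0 ≤ c := (norm_nonneg _).trans (h 0 0)
  have hR : 0 ≤ 2 * c := by positivity
  rw [Matrix.linfty_opNorm_def, ← NNReal.coe_mk _ hR, NNReal.coe_le_coe]
  refine Finset.sup_le fun i _ => ?_
  rw [← NNReal.coe_le_coe]
  push_cast
  rw [Fin.sum_univ_two]
  have := h i 0
  have := h i 1
  linarith

lemma TT_norm (a b : ℝ) (z : ℂ) (α : UnitAddCircle) (n : ℕ) (x : UnitAddCircle) (c : ℝ)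
    (h : ∀ m ≤ n + 2, ∀ y, ‖dn a b z α m y‖ ≤ c) : ‖TT a b z α (n + 2) x‖ ≤ 2 * ((1 + |a|) ^ 2 * c) := by
  have hc : 0 ≤ c := (norm_nonneg _).trans (h 0 (by omega) x)
  have t00 : ∀ m ≤ n + 2, ∀ y, ‖TT a b z α m y 0 0‖ ≤ c := fun m hm y => by
    rw [(TT_eq_dn a b z α m y).1]; exact h m hm y
  have t01 : ∀ m ≤ n + 1, ∀ y, ‖TT a b z α (m + 1) y 0 1‖ ≤ |a| * c := fun m hm y => by
    rw [TT_succ', Matrix.mul_apply, Fin.sum_univ_two]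
    simp [Tm]
    rw [mul_comm]
    exact mul_le_mul_of_nonneg_left (t00 m (by omega) _) (abs_nonneg a)
  have t1 : ∀ j, TT a b z α (n + 2) x 1 j = a * TT a b z α (n + 1) x 0 j := fun j => by
    rw [TT, Matrix.mul_apply, Fin.sum_univ_two]
    simp [Tm]
  have ha := abs_nonneg a
  have hac := mul_nonneg ha hc
  have haac := mul_nonneg ha hac
  apply norm_le_four
  intro i j
  fin_cases i <;> fin_cases j
  · refine (t00 (n + 2) le_rfl x).trans ?_
    nlinarith
  · refine (t01 (n + 1) le_rfl x).trans ?_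
    nlinarith
  · simp only [Fin.mk_one, Fin.zero_eta]
    rw [t1, norm_mul, Complex.norm_real]
    have := mul_le_mul_of_nonneg_left (t00 (n + 1) (by omega) x) ha
    rw [Real.norm_eq_abs]
    nlinarith
  · simp only [Fin.mk_one]
    rw [t1, norm_mul, Complex.norm_real]
    have := mul_le_mul_of_nonneg_left (t01 n (by omega) x) ha
    rw [Real.norm_eq_abs]
    nlinarith

lemma dn_le_TT (a b : ℝ) (z : ℂ) (α : UnitAddCircle) (n : ℕ) (x : UnitAddCircle) :
    ‖dn a b z α n x‖ ≤ ‖TT a b z α n x‖ := by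
  rw [← (TT_eq_dn a b z α n x).1]; exact entry_le _ _ _

open Filter Real MeasureTheory

attribute [local instance] Matrix.linftyOpNormedRing Matrix.linftyOpNormedAlgebra

abbrev hm : Measure UnitAddCircle := AddCircle.haarAddCircle

lemma one_norm2 : ‖(1 : Matrix (Fin 2) (Fin 2) ℂ)‖ = 1 := norm_one

lemma vp_cont : Continuous vp := by
  unfold vp
  fun_prop

lemma TT_cont (a b : ℝ) (z : ℂ) (α : UnitAddCircle) (n : ℕ) : Continuous (TT a b z α n) := by
  induction n with
  | zero => exact continuous_const
  | succ n ih =>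
    have h1 : Continuous (Tm a b z) := by
      refine continuous_matrix fun i j => ?_
      have := vp_cont
      fin_cases i <;> fin_cases j <;> simp [Tm] <;> fun_prop
    have h2 : Continuous fun x => Tm a b z (x + n • α) := h1.comp (continuous_id.add continuous_const)
    exact h2.mul ih

def KC (a b : ℝ) (z : ℂ) : ℝ := ‖z‖ + 2 * |b| + |a| + 1

lemma KC_ge (a b : ℝ) (z : ℂ) : 1 ≤ KC a b z := by
  unfold KC; have := norm_nonneg z; have := abs_nonneg a; have := abs_nonneg b; linarith

lemma norm2_le (M : Matrix (Fin 2) (Fin 2) ℂ) (c : ℝ) (h : ∀ i, ‖M i 0‖ + ‖M i 1‖ ≤ c) : ‖M‖ ≤ c := by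
  have hR : 0 ≤ c := (add_nonneg (norm_nonneg _) (norm_nonneg _)).trans (h 0)
  rw [Matrix.linfty_opNorm_def, ← NNReal.coe_mk _ hR, NNReal.coe_le_coe]
  refine Finset.sup_le fun i _ => ?_
  rw [← NNReal.coe_le_coe]
  push_cast
  rw [Fin.sum_univ_two]
  exact h i

lemma row_le (M : Matrix (Fin 2) (Fin 2) ℂ) (i : Fin 2) : ‖M i 0‖ + ‖M i 1‖ ≤ ‖M‖ := by
  rw [Matrix.linfty_opNorm_def]
  have h2 : ∑ j, ‖M i j‖₊ ≤ Finset.univ.sup fun i => ∑ j, ‖M i j‖₊ :=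
    Finset.le_sup (f := fun i => ∑ j, ‖M i j‖₊) (Finset.mem_univ i)
  rw [Fin.sum_univ_two] at h2
  exact_mod_cast h2

lemma Tm_norm (a b : ℝ) (z : ℂ) (x : UnitAddCircle) : ‖Tm a b z x‖ ≤ KC a b z := by
  have h : ‖z - b * vp x‖ ≤ ‖z‖ + 2 * |b| := by
    refine (norm_sub_le _ _).trans ?_
    rw [norm_mul, Complex.norm_real, Complex.norm_real, Real.norm_eq_abs, Real.norm_eq_abs]
    have := mul_le_mul_of_nonneg_left (vp_abs x) (abs_nonneg b)
    linarith
  apply norm2_le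
  intro i
  have := norm_nonneg z
  have := abs_nonneg b
  have := abs_nonneg a
  fin_cases i
  · simp [Tm, KC]; linarith
  · simp [Tm, KC]; linarith

lemma TT_le (a b : ℝ) (z : ℂ) (α : UnitAddCircle) (n : ℕ) (x : UnitAddCircle) :
    ‖TT a b z α n x‖ ≤ KC a b z ^ n := by
  induction n with
  | zero => rw [TT, one_norm2, pow_zero]
  | succ n ih =>
    rw [TT, pow_succ']
    have := KC_ge a b z
    exact (norm_mul_le _ _).trans (mul_le_mul (Tm_norm _ _ _ _) ih (norm_nonneg _) (by linarith))

lemma TT_det (a b : ℝ) (z : ℂ) (α : UnitAddCircle) (n : ℕ) (x : UnitAddCircle) :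
    (TT a b z α n x).det = (a : ℂ) ^ (2 * n) := by
  induction n with
  | zero => simp [TT]
  | succ n ih =>
    rw [TT, Matrix.det_mul, ih]
    simp [Tm, Matrix.det_fin_two]; ring

lemma TT_ge (a b : ℝ) (ha : 1 ≤ a) (z : ℂ) (α : UnitAddCircle) (n : ℕ) (x : UnitAddCircle) :
    1 ≤ ‖TT a b z α n x‖ := by
  set M := TT a b z α n x with hM
  have h := TT_det a b z α n x
  rw [← hM, Matrix.det_fin_two] at h
  have h1 : 1 ≤ ‖M 0 0 * M 1 1 - M 0 1 * M 1 0‖ := by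
    rw [h, norm_pow, Complex.norm_real, Real.norm_eq_abs]
    exact one_le_pow₀ (ha.trans (le_abs_self a))
  have h2 := norm_sub_le (M 0 0 * M 1 1) (M 0 1 * M 1 0)
  rw [norm_mul, norm_mul] at h2
  have r0 := row_le M 0
  have r1 := row_le M 1
  by_contra hlt
  push Not at hlt
  have := norm_nonneg (M 0 0)
  have := norm_nonneg (M 0 1)
  have := norm_nonneg (M 1 0)
  have := norm_nonneg (M 1 1)
  nlinarith [norm_nonneg M]

def In (a b : ℝ) (z : ℂ) (α : UnitAddCircle) (n : ℕ) : ℝ := ∫ x, Real.log ‖TT a b z α n x‖ ∂hm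

lemma logTT_int (a b : ℝ) (ha : 1 ≤ a) (z : ℂ) (α : UnitAddCircle) (n : ℕ) :
    Integrable (fun x => Real.log ‖TT a b z α n x‖) hm := by
  apply Continuous.integrable_of_hasCompactSupport
  · exact (TT_cont a b z α n).norm.log fun x => by have := TT_ge a b ha z α n x; linarith
  · exact HasCompactSupport.of_compactSpace _

lemma In_sub (a b : ℝ) (ha : 1 ≤ a) (z : ℂ) (α : UnitAddCircle) : Subadditive (In a b z α) := by
  intro m n
  have h1 : In a b z α m = ∫ x, Real.log ‖TT a b z α m (x + n • α)‖ ∂hm :=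
    (integral_add_right_eq_self (μ := hm) (fun x => Real.log ‖TT a b z α m x‖) (n • α)).symm
  have hi : Integrable (fun x => Real.log ‖TT a b z α m (x + n • α)‖) hm :=
    (logTT_int a b ha z α m).comp_add_right (n • α)
  rw [h1, In, In, ← integral_add hi (logTT_int a b ha z α n)]
  refine integral_mono (logTT_int a b ha z α _) (hi.add (logTT_int a b ha z α n)) fun x => ?_
  have g1 := TT_ge a b ha z α m (x + n • α)
  have g2 := TT_ge a b ha z α n x
  have g3 := TT_ge a b ha z α (m + n) x
  simp only [Pi.add_apply]
  rw [← Real.log_mul (by linarith) (by linarith)]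
  apply Real.log_le_log (by linarith)
  rw [TT_add]
  exact norm_mul_le _ _

lemma TT_diff (a b : ℝ) (z w : ℂ) (α : UnitAddCircle) (K : ℝ) (hz : KC a b z ≤ K) (hw : KC a b w ≤ K)
    (n : ℕ) (x : UnitAddCircle) :
    ‖TT a b w α n x - TT a b z α n x‖ ≤ n * K ^ n * ‖w - z‖ := by
  have hK : 1 ≤ K := (KC_ge a b z).trans hz
  induction n with
  | zero => simp [TT]
  | succ n ih =>
    have e : TT a b w α (n + 1) x - TT a b z α (n + 1) x =
      Tm a b w (x + n • α) * (TT a b w α n x - TT a b z α n x) +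
      (Tm a b w (x + n • α) - Tm a b z (x + n • α)) * TT a b z α n x := by
      rw [TT, TT]; noncomm_ring
    have h1 : ‖Tm a b w (x + n • α) - Tm a b z (x + n • α)‖ ≤ ‖w - z‖ := by
      apply norm2_le
      intro i
      fin_cases i <;> simp [Tm]
    have h2 : ‖TT a b z α n x‖ ≤ K ^ n :=
      (TT_le a b z α n x).trans (pow_le_pow_left₀ (by have := KC_ge a b z; linarith) hz n)
    rw [e]
    refine (norm_add_le _ _).trans ((add_le_add (norm_mul_le _ _) (norm_mul_le _ _)).trans ?_)
    have h3 := mul_le_mul ((Tm_norm a b w (x + n • α)).trans hw) ih (norm_nonneg _) (by linarith)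
    have h4 := mul_le_mul h1 h2 (norm_nonneg _) (norm_nonneg _)
    have h5 : K ^ n * ‖w - z‖ ≤ K ^ (n + 1) * ‖w - z‖ :=
      mul_le_mul_of_nonneg_right (pow_le_pow_right₀ hK (by omega)) (norm_nonneg _)
    push_cast
    calc _ ≤ K * (n * K ^ n * ‖w - z‖) + ‖w - z‖ * K ^ n := add_le_add h3 h4
      _ ≤ n * K ^ (n+1) * ‖w - z‖ + K ^ (n + 1) * ‖w - z‖ := by rw [pow_succ] at *; nlinarith
      _ = _ := by ring

lemma In_pert (a b : ℝ) (ha : 1 ≤ a) (E : ℝ) (α : UnitAddCircle) (m : ℕ) (ε : ℝ) (hε : 0 < ε) :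
    ∃ η : ℝ, 0 < η ∧ In a b (E + η * Complex.I) α m ≤ In a b E α m + ε := by
  set K := KC a b E + 1 with hK
  have hK1 : 1 ≤ K := by have := KC_ge a b E; linarith
  set D := m * K ^ m + 1 with hD
  have hD1 : 1 ≤ D := by have : 0 ≤ m * K ^ m := by positivity
                         linarith
  refine ⟨min 1 (ε / D), by positivity, ?_⟩
  set η := min 1 (ε / D) with hη
  have hη0 : 0 < η := by positivity
  have hη1 : η ≤ 1 := min_le_left _ _
  have hη2 : η * D ≤ ε := by
    have : η ≤ ε / D := min_le_right _ _
    rwa [le_div_iff₀ (by linarith)] at this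
  have hn : ‖(E + η * Complex.I : ℂ) - E‖ = η := by simp [abs_of_pos hη0]
  have hw : KC a b (E + η * Complex.I) ≤ K := by
    have := norm_add_le (E : ℂ) (η * Complex.I)
    have h2 : ‖(η * Complex.I : ℂ)‖ = η := by simp [abs_of_pos hη0]
    simp only [hK, KC]; linarith
  rw [In, In]
  have e : ∫ x, Real.log ‖TT a b E α m x‖ ∂hm + ε = ∫ x, (Real.log ‖TT a b E α m x‖ + ε) ∂hm := by
    rw [integral_add (logTT_int a b ha _ α m) (integrable_const _)]; simp
  rw [e]
  refine integral_mono (logTT_int a b ha _ α _) ((logTT_int a b ha _ α m).add (integrable_const _)) fun x => ?_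
  have g1 := TT_ge a b ha E α m x
  have g2 := TT_ge a b ha (E + η * Complex.I) α m x
  have d := TT_diff a b E (E + η * Complex.I) α K (by linarith) hw m x
  rw [hn] at d
  have tri : ‖TT a b (E + η * Complex.I) α m x‖ ≤ ‖TT a b E α m x‖ + ε := by
    have := norm_le_norm_add_norm_sub (TT a b E α m x) (TT a b (E + η * Complex.I) α m x)
    have : m * K ^ m * η ≤ ε := by nlinarith
    linarith [norm_le_norm_add_norm_sub' (TT a b (E + η * Complex.I) α m x) (TT a b E α m x)]
  simp only
  have h3 : ‖TT a b (E + η * Complex.I) α m x‖ ≤ ‖TT a b E α m x‖ * Real.exp ε := by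
    have := Real.add_one_le_exp ε
    nlinarith
  calc _ ≤ Real.log (‖TT a b E α m x‖ * Real.exp ε) := Real.log_le_log (by linarith) h3
    _ = _ := by rw [Real.log_mul (by linarith) (Real.exp_pos ε).ne', Real.log_exp]

lemma main_bound (lam : ℝ) (hlam : 1 < lam) (E : ℝ) {α : UnitAddCircle} (hα : Irr α)
    (hI : ∀ ε > 0, ∃ m : ℕ, m ≠ 0 ∧ In lam 1 E α m / m ≤ Real.log lam + ε) (ε : ℝ) (hε : 0 < ε) :
    ∃ C : ℝ, 0 < C ∧ ∀ (n : ℕ) (x : UnitAddCircle),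
      ‖TT 1 lam E α n x‖ ≤ C * Real.exp (n * (Real.log lam + ε)) := by
  have hll : 0 < Real.log lam := Real.log_pos hlam
  obtain ⟨m, hm0, hmI⟩ := hI (ε / 4) (by positivity)
  have hm1 : (0 : ℝ) < m := by positivity
  obtain ⟨η, hη, hη2⟩ := In_pert lam 1 hlam.le E α m (m * (ε / 4)) (by positivity)
  have h1 : In lam 1 (E + η * Complex.I) α m / m < Real.log lam + 3 * ε / 4 := by
    rw [div_lt_iff₀ hm1]
    rw [div_le_iff₀ hm1] at hmI
    nlinarith
  have h2 := (In_sub lam 1 hlam.le (E + η * Complex.I) α).eventually_div_lt_of_div_lt hm0 h1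
  obtain ⟨N1, hN1⟩ := eventually_atTop.mp h2
  obtain ⟨N2, hN2⟩ := dn_dual 1 lam hα E η (ε / 4) hη (by positivity)
  set N := max (max N1 N2) 2 with hN
  set K := KC 1 lam E with hK
  have hK1 : 1 ≤ K := KC_ge _ _ _
  have big : ∀ n ≥ N, ∀ y, ‖dn 1 lam E α n y‖ ≤ Real.exp (n * (Real.log lam + ε)) := by
    intro n hn y
    have hn1 : N1 ≤ n := (le_max_left _ _).trans ((le_max_left _ _).trans hn)
    have hn2 : N2 ≤ n := (le_max_right _ _).trans ((le_max_left _ _).trans hn)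
    have hn3 : 0 < n := lt_of_lt_of_le (by norm_num) ((le_max_right _ _).trans hn)
    have hn4 : (0 : ℝ) < n := by exact_mod_cast hn3
    have a1 := hN1 n hn1
    rw [div_lt_iff₀ hn4] at a1
    have a2 : Real.log ‖dn 1 lam (E + η * Complex.I) α n y‖ - ε / 4 * n ≤
        In lam 1 (E + η * Complex.I) α n := by
      have : Real.log ‖dn 1 lam (E + η * Complex.I) α n y‖ - ε / 4 * n =
        ∫ _x : UnitAddCircle, (Real.log ‖dn 1 lam (E + η * Complex.I) α n y‖ - ε / 4 * n) ∂hm := by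
        simp
      rw [this, In]
      refine integral_mono (integrable_const _) (logTT_int lam 1 hlam.le _ α _) fun x => ?_
      have := hN2 n hn2 y x
      have p := dn_pos lam 1 α E η hη n x
      have := Real.log_le_log p (dn_le_TT lam 1 (E + η * Complex.I) α n x)
      simp only
      linarith
    refine (dn_mono 1 lam α E η n y).trans ?_
    rw [← Real.log_le_iff_le_exp (dn_pos 1 lam α E η hη n y)]
    nlinarith
  have all : ∀ n y, ‖dn 1 lam E α n y‖ ≤ K ^ N * Real.exp (n * (Real.log lam + ε)) := by
    intro n y
    have hKN : 1 ≤ K ^ N := one_le_pow₀ hK1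
    have he : 1 ≤ Real.exp (n * (Real.log lam + ε)) := Real.one_le_exp (by positivity)
    by_cases hn : N ≤ n
    · have := big n hn y
      nlinarith
    · have h3 := (dn_le_TT 1 lam E α n y).trans (TT_le 1 lam E α n y)
      have h4 : K ^ n ≤ K ^ N := pow_le_pow_right₀ hK1 (by omega)
      nlinarith
  have hKN : 1 ≤ K ^ N := one_le_pow₀ hK1
  have hK2 : 1 ≤ K ^ 2 := one_le_pow₀ hK1
  refine ⟨8 * K ^ N * K ^ 2, by positivity, fun n x => ?_⟩
  have he : 1 ≤ Real.exp (n * (Real.log lam + ε)) := Real.one_le_exp (by positivity)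
  rcases lt_or_ge n 2 with hn | hn
  · have h3 := TT_le 1 lam E α n x
    have h4 : K ^ n ≤ K ^ 2 := pow_le_pow_right₀ hK1 (by omega)
    calc _ ≤ K ^ 2 := h3.trans h4
      _ ≤ (8 * K ^ N) * K ^ 2 := le_mul_of_one_le_left (by positivity) (by linarith)
      _ ≤ _ := le_mul_of_one_le_right (by positivity) he
  · obtain ⟨k, rfl⟩ : ∃ k, n = k + 2 := ⟨n - 2, by omega⟩
    have h3 := TT_norm 1 lam E α k x (K ^ N * Real.exp ((k + 2 : ℕ) * (Real.log lam + ε))) (fun m hm y => by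
      refine (all m y).trans ?_
      gcongr)
    refine h3.trans ?_
    calc _ = 8 * K ^ N * 1 * Real.exp ((k + 2 : ℕ) * (Real.log lam + ε)) := by norm_num; ring
      _ ≤ _ := by gcongr


attribute [local instance] Matrix.linftyOpNormedRing Matrix.linftyOpNormedAlgebra

lemma decomp (Φ Ψ : Fin 2 → ℂ) (δ w : ℝ) (hδ : 0 < δ) (h : δ ≤ ‖Ψ‖)
    (hw : ‖Φ 0 * Ψ 1 - Φ 1 * Ψ 0‖ ≤ w) : ∃ c : ℂ, ‖Φ - c • Ψ‖ ≤ w / δ := by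
  have hw0 : 0 ≤ w := (norm_nonneg _).trans hw
  have key : ∀ k l : Fin 2, (∀ i, i = k ∨ i = l) → δ ≤ ‖Ψ k‖ → ‖Φ k * Ψ l - Φ l * Ψ k‖ ≤ w →
      ∃ c : ℂ, ‖Φ - c • Ψ‖ ≤ w / δ := by
    intro k l hkl hk hw
    have hk0 : Ψ k ≠ 0 := by intro h0; rw [h0, norm_zero] at hk; linarith
    refine ⟨Φ k / Ψ k, (pi_norm_le_iff_of_nonneg (by positivity)).mpr fun i => ?_⟩
    rcases hkl i with rfl | rfl
    · simp only [Pi.sub_apply, Pi.smul_apply, smul_eq_mul]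
      rw [div_mul_cancel₀ _ hk0, sub_self, norm_zero]; positivity
    · have : (Φ - (Φ k / Ψ k) • Ψ) i = -(Φ k * Ψ i - Φ i * Ψ k) / Ψ k := by
        simp only [Pi.sub_apply, Pi.smul_apply, smul_eq_mul]; field_simp; ring
      rw [this, norm_div, norm_neg]
      exact div_le_div₀ hw0 hw hδ hk
  by_cases h0 : δ ≤ ‖Ψ 0‖
  · exact key 0 1 (by intro i; fin_cases i <;> simp) h0 hw
  · have h1 : δ ≤ ‖Ψ 1‖ := by
      by_contra h1
      push Not at h0 h1
      have : ‖Ψ‖ < δ := (pi_norm_lt_iff hδ).mpr fun i => by fin_cases i <;> assumption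
      linarith
    refine key 1 0 (by intro i; fin_cases i <;> simp) h1 ?_
    rwa [norm_sub_rev]

lemma wr_const (A : Matrix (Fin 2) (Fin 2) ℂ) (hA : A.det = 1) (Φ Ψ : Fin 2 → ℂ) :
    (A.mulVec Φ) 0 * (A.mulVec Ψ) 1 - (A.mulVec Φ) 1 * (A.mulVec Ψ) 0 = Φ 0 * Ψ 1 - Φ 1 * Ψ 0 := by
  rw [Matrix.det_fin_two] at hA
  simp only [Matrix.mulVec, dotProduct, Fin.sum_univ_two]
  linear_combination (Φ 0 * Ψ 1 - Φ 1 * Ψ 0) * hA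

open Classical in
lemma gap (A : ℕ → Matrix (Fin 2) (Fin 2) ℂ) (K δ : ℝ) (hK : 1 ≤ K) (hδ : 0 < δ)
    (hdet : ∀ i, (A i).det = 1) (hA : ∀ i, ‖A i‖ ≤ K) (Φ Ψ : ℕ → Fin 2 → ℂ)
    (hΦ : ∀ i, Φ (i + 1) = (A i).mulVec (Φ i)) (hΨ : ∀ i, Ψ (i + 1) = (A i).mulVec (Ψ i))
    (hΦ0 : ‖Φ 0‖ ≤ 1) (n : ℕ) (h0 : δ ≤ ‖Ψ 0‖ ∧ ‖Ψ 0‖ ≤ δ⁻¹) (hn : δ ≤ ‖Ψ n‖ ∧ ‖Ψ n‖ ≤ δ⁻¹) :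
    ‖Φ n‖ ≤ (((2 / δ / δ + 1) / δ + 2 * K * (2 / δ / δ) / δ) / δ + 2 / δ / δ) * ((n + 1) *
      K ^ (∑ i ∈ Finset.range (n + 1), if (δ ≤ ‖Ψ i‖ ∧ ‖Ψ i‖ ≤ δ⁻¹) then 0 else 1)) := by
  set β : ℕ → ℕ := fun n => ∑ i ∈ Finset.range (n + 1), if (δ ≤ ‖Ψ i‖ ∧ ‖Ψ i‖ ≤ δ⁻¹) then 0 else 1 with hβ
  set ρ := 2 / δ / δ with hρ
  have hρ0 : 0 < ρ := by positivity
  have hW : ∀ i, ‖Φ i 0 * Ψ i 1 - Φ i 1 * Ψ i 0‖ ≤ 2 / δ := by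
    intro i
    induction i with
    | zero =>
      have a0 := norm_le_pi_norm (Φ 0) 0
      have a1 := norm_le_pi_norm (Φ 0) 1
      have b0 := norm_le_pi_norm (Ψ 0) 0
      have b1 := norm_le_pi_norm (Ψ 0) 1
      refine (norm_sub_le _ _).trans ?_
      rw [norm_mul, norm_mul]
      have c0 := mul_le_mul (a0.trans hΦ0) (b1.trans h0.2) (norm_nonneg _) zero_le_one
      have c1 := mul_le_mul (a1.trans hΦ0) (b0.trans h0.2) (norm_nonneg _) zero_le_one
      rw [div_eq_mul_inv]
      linarith
    | succ i ih => rw [hΦ, hΨ, wr_const _ (hdet i)]; exact ih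
  have hmono : Monotone β := by
    refine monotone_nat_of_le_succ fun i => ?_
    simp only [hβ]
    rw [Finset.sum_range_succ _ (i + 1)]; omega
  have hstep : ∀ i v, ‖(A i).mulVec v‖ ≤ K * ‖v‖ := fun i v =>
    (Matrix.linfty_opNorm_mulVec (A i) v).trans (mul_le_mul_of_nonneg_right (hA i) (norm_nonneg _))
  set D := 2 * K * K ^ β n * ρ / δ with hD
  have hD0 : 0 ≤ D := by positivity
  have main : ∀ i ≤ n, ∃ c : ℂ, ‖c‖ ≤ (ρ + 1) / δ + i * D ∧ ‖Φ i - c • Ψ i‖ ≤ ρ * K ^ β i := by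
    intro i
    induction i with
    | zero =>
      intro _
      obtain ⟨c, hc⟩ := decomp (Φ 0) (Ψ 0) δ _ hδ h0.1 (hW 0)
      have hK0 : (1 : ℝ) ≤ K ^ β 0 := one_le_pow₀ hK
      refine ⟨c, ?_, hc.trans (by rw [← hρ]; nlinarith)⟩
      have h1 : ‖c • Ψ 0‖ ≤ ρ + 1 := by
        have := norm_sub_norm_le (c • Ψ 0) (Φ 0)
        rw [norm_sub_rev] at this
        linarith
      rw [norm_smul] at h1
      simp only [Nat.cast_zero, zero_mul, add_zero]
      rw [le_div_iff₀ hδ]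
      exact (mul_le_mul_of_nonneg_left h0.1 (norm_nonneg c)).trans h1
    | succ i ih =>
      intro hi
      obtain ⟨c, hc1, hc2⟩ := ih (by omega)
      have e : ‖Φ (i + 1) - c • Ψ (i + 1)‖ ≤ K * (ρ * K ^ β i) := by
        rw [hΦ, hΨ, ← Matrix.mulVec_smul, ← Matrix.mulVec_sub]
        exact (hstep i _).trans (mul_le_mul_of_nonneg_left hc2 (by linarith))
      by_cases hg : δ ≤ ‖Ψ (i + 1)‖ ∧ ‖Ψ (i + 1)‖ ≤ δ⁻¹
      · obtain ⟨c', hc'⟩ := decomp (Φ (i + 1)) (Ψ (i + 1)) δ _ hδ hg.1 (hW (i + 1))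
        rw [← hρ] at hc'
        have hK0 : (1 : ℝ) ≤ K ^ β (i + 1) := one_le_pow₀ hK
        have hK1 : (1 : ℝ) ≤ K ^ β i := one_le_pow₀ hK
        have hK2 : K ^ β i ≤ K ^ β n := pow_le_pow_right₀ hK (hmono (by omega))
        refine ⟨c', ?_, hc'.trans (by nlinarith)⟩
        have h1 : ‖(c' - c) • Ψ (i + 1)‖ ≤ 2 * K * K ^ β n * ρ := by
          have e2 : (c' - c) • Ψ (i + 1) = (Φ (i + 1) - c • Ψ (i + 1)) - (Φ (i + 1) - c' • Ψ (i + 1)) := by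
            rw [sub_smul]; abel
          rw [e2]
          refine (norm_sub_le _ _).trans ((add_le_add e hc').trans ?_)
          have f1 : K * (ρ * K ^ β i) ≤ K * (ρ * K ^ β n) := by gcongr
          have f2 : ρ ≤ K * (ρ * K ^ β n) := by
            have : 1 ≤ K * K ^ β n := one_le_mul_of_one_le_of_one_le hK (one_le_pow₀ hK)
            nlinarith
          linarith
        rw [norm_smul] at h1
        have h2 : ‖c' - c‖ ≤ D := by
          rw [hD, le_div_iff₀ hδ]
          exact (mul_le_mul_of_nonneg_left hg.1 (norm_nonneg _)).trans h1
        have h3 := norm_le_norm_add_norm_sub' c' c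
        push_cast
        linarith
      · refine ⟨c, ?_, e.trans ?_⟩
        · push_cast; linarith
        · have : β (i + 1) = β i + 1 := by
            simp only [hβ]
            rw [Finset.sum_range_succ _ (i + 1), if_neg hg]
          rw [this, pow_succ]; apply le_of_eq; ring
  obtain ⟨c, hc1, hc2⟩ := main n le_rfl
  have h1 := norm_le_norm_add_norm_sub' (Φ n) (c • Ψ n)
  rw [norm_smul] at h1
  have h2 : ‖c‖ * ‖Ψ n‖ ≤ ((ρ + 1) / δ + n * D) / δ := by
    rw [div_eq_mul_inv _ δ]
    exact mul_le_mul hc1 hn.2 (norm_nonneg _) (by positivity)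
  have hKn : (1 : ℝ) ≤ K ^ β n := one_le_pow₀ hK
  refine h1.trans ((add_le_add h2 hc2).trans ?_)
  have hX : (1 : ℝ) ≤ (n + 1) * K ^ β n := one_le_mul_of_one_le_of_one_le (by linarith [Nat.cast_nonneg (α := ℝ) n]) hKn
  have hY : K ^ β n ≤ (n + 1) * K ^ β n := le_mul_of_one_le_left (by positivity) (by linarith [Nat.cast_nonneg (α := ℝ) n])
  have hZ : n * K ^ β n ≤ (n + 1) * K ^ β n := by gcongr; linarith
  have e1 : n * D = (2 * K * ρ / δ) * (n * K ^ β n) := by rw [hD]; ring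
  rw [e1]
  have q1 : (ρ + 1) / δ ≤ (ρ + 1) / δ * ((n + 1) * K ^ β n) := le_mul_of_one_le_right (by positivity) hX
  have q2 : (2 * K * ρ / δ) * (n * K ^ β n) ≤ (2 * K * ρ / δ) * ((n + 1) * K ^ β n) := by gcongr
  have q3 : ρ * K ^ β n ≤ ρ * ((n + 1) * K ^ β n) := by gcongr
  calc ((ρ+1)/δ + 2*K*ρ/δ*(n*K^β n))/δ + ρ*K^β n
      ≤ ((ρ+1)/δ*((n+1)*K^β n) + 2*K*ρ/δ*((n+1)*K^β n))/δ + ρ*((n+1)*K^β n) := add_le_add (div_le_div_of_nonneg_right (add_le_add q1 q2) hδ.le) q3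
    _ = (((ρ + 1) / δ + 2 * K * ρ / δ) / δ + ρ) * ((n + 1) * K ^ β n) := by ring


attribute [local instance] Matrix.linftyOpNormedRing Matrix.linftyOpNormedAlgebra

lemma coeff_trans (g : UnitAddCircle → ℂ) (a : UnitAddCircle) (n : ℤ) :
    fourierCoeff (fun x => g (x + a)) n = fourier n a * fourierCoeff g n := by
  simp only [fourierCoeff]
  rw [← integral_const_mul]
  rw [← integral_add_right_eq_self (fun t => (fourier n a : ℂ) * ((fourier (-n) t : ℂ) • g t)) a]
  congr 1
  ext t
  have h := fourier_shift (-n) 1 a t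
  rw [one_zsmul, mul_one] at h
  have h2 : (fourier n a : ℂ) * fourier (-n) a = 1 := by
    rw [← fourier_add]; simp
  rw [h, smul_eq_mul, smul_eq_mul]
  linear_combination (-(fourier (-n) t : ℂ) * g (t + a)) * h2

lemma coeff_mod (g : UnitAddCircle → ℂ) (k n : ℤ) :
    fourierCoeff (fun x => fourier k x * g x) n = fourierCoeff g (n - k) := by
  simp only [fourierCoeff]
  congr 1
  ext t
  have : (fourier (-(n - k)) t : ℂ) = fourier (-n) t * fourier k t := by
    rw [← fourier_add]; congr 2; ring
  rw [this, smul_eq_mul, smul_eq_mul]; ring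

lemma coeff_zero (F : UnitAddCircle → ℂ) (hF : MemLp F 2 hm) (h : ∀ n, fourierCoeff F n = 0) :
    F =ᵐ[hm] 0 := by
  have h1 : hF.toLp F = 0 := by
    apply fourierBasis.repr.injective
    ext n
    rw [fourierBasis_repr, fourierCoeff_congr_ae hF.coeFn_toLp, h, map_zero]
    rfl
  have h2 := hF.coeFn_toLp
  rw [h1] at h2
  exact h2.symm.trans (Lp.coeFn_zero _ _ _)

lemma exists_g (lam E : ℝ) (α θ : UnitAddCircle) (u : lp (fun _ : ℤ => ℝ) 2)
    (hu : ∀ n : ℤ, u (n + 1) + u (n - 1) + lam * vp (θ + n • α) * u n = E * u n) (hne : u ≠ 0) :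
    ∃ (g : UnitAddCircle → ℂ) (ω : ℂ), Measurable g ∧ ‖ω‖ = 1 ∧
      (∀ᵐ x ∂hm, lam * (ω * g (x + α) + ω⁻¹ * g (x - α)) + vp x * g x = E * g x) ∧
      ¬ (g =ᵐ[hm] 0) := by
  have hmem : Memℓp (fun n => (u n : ℂ)) 2 := by
    have := lp.memℓp u
    rw [memℓp_gen_iff (by norm_num)] at this ⊢
    simpa using this
  set uc : lp (fun _ : ℤ => ℂ) 2 := ⟨fun n => (u n : ℂ), hmem⟩ with huc
  set G : Lp ℂ 2 hm := (fourierBasis (T := 1)).repr.symm uc with hG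
  have hc : ∀ n, fourierCoeff G n = u n := by
    intro n
    rw [← fourierBasis_repr, hG, LinearIsometryEquiv.apply_symm_apply]
  have hGm : MemLp G 2 hm := Lp.memLp G
  set ω : ℂ := fourier 1 θ with hω
  have hω1 : ‖ω‖ = 1 := fourier_norm1 _ _
  have hωi : ω⁻¹ = fourier (-1) θ := by
    rw [fourier_neg, Complex.inv_eq_conj hω1]
  refine ⟨G, ω, (Lp.stronglyMeasurable G).measurable, hω1, ?_, ?_⟩
  · have mT : ∀ a, MemLp (fun x => G (x + a)) 2 hm := fun a =>
      hGm.comp_measurePreserving (measurePreserving_add_right hm a)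
    have mM : ∀ k : ℤ, MemLp (fun x => (fourier k x : ℂ) * G x) 2 hm := fun k =>
      hGm.of_le (((map_continuous (fourier k)).aestronglyMeasurable).mul hGm.1)
        (Eventually.of_forall fun x => by rw [norm_mul, fourier_norm1, one_mul])
    have i1 := (mT α).const_mul (lam * ω)
    have i2 := (mT (-α)).const_mul (lam * ω⁻¹)
    have i3 := mM 1
    have i4 := mM (-1)
    have i5 := hGm.const_mul (-E : ℂ)
    have hz := coeff_zero _ ((((i1.add i2).add i3).add i4).add i5) (by
      intro n
      have j1 := i1.integrable (by norm_num)
      have j2 := i2.integrable (by norm_num)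
      have j3 := i3.integrable (by norm_num)
      have j4 := i4.integrable (by norm_num)
      have j5 := i5.integrable (by norm_num)
      rw [fourierCoeff.add (((j1.add j2).add j3).add j4) j5, Pi.add_apply,
        fourierCoeff.add ((j1.add j2).add j3) j4, Pi.add_apply,
        fourierCoeff.add (j1.add j2) j3, Pi.add_apply, fourierCoeff.add j1 j2, Pi.add_apply,
        fourierCoeff.const_mul, fourierCoeff.const_mul, fourierCoeff.const_mul,
        coeff_mod, coeff_mod, coeff_trans, coeff_trans, hc, hc, hc]
      have h1 := congrArg (fun r : ℝ => (r : ℂ)) (hu n)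
      simp only [Complex.ofReal_add, Complex.ofReal_mul, vp_eq, fourier_shift] at h1
      have h3 : (fourier n (-α) : ℂ) = fourier (-n) α := by
        rw [fourier_apply, fourier_apply]; simp
      rw [h3, hωi, sub_neg_eq_add]
      simp only [one_mul, neg_one_mul] at h1
      rw [← hω] at h1
      linear_combination h1)
    filter_upwards [hz] with x hx
    simp only [Pi.add_apply, Pi.zero_apply] at hx
    rw [vp_eq, sub_eq_add_neg]
    linear_combination hx
  · intro h0
    apply hne
    ext n
    have := hc n
    rw [fourierCoeff_congr_ae h0] at this
    simp [fourierCoeff] at this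
    simpa using this.symm


attribute [local instance] Matrix.linftyOpNormedRing Matrix.linftyOpNormedAlgebra

lemma erg {α : UnitAddCircle} (hα : Irr α) : Ergodic (fun x => x + α) hm := by
  have h1 : addOrderOf α = 0 := by
    by_contra h
    have h2 := addOrderOf_nsmul_eq_zero α
    refine hα (addOrderOf α) (by exact_mod_cast h) ?_
    rw [fourier_apply, natCast_zsmul, h2]; simp
  have h2 := AddCircle.ergodic_add_right.mpr h1
  rw [AddCircle.volume_eq_smul_haarAddCircle] at h2
  simpa using h2

lemma r_pos (lam E : ℝ) (hlam : 1 < lam) {α : UnitAddCircle} (hα : Irr α) (g : UnitAddCircle → ℂ) (ω : ℂ)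
    (hg : Measurable g) (hω : ‖ω‖ = 1)
    (heq : ∀ᵐ x ∂hm, lam * (ω * g (x + α) + ω⁻¹ * g (x - α)) + vp x * g x = E * g x)
    (hne : ¬ (g =ᵐ[hm] 0)) : ∀ᵐ x ∂hm, 0 < max ‖g x‖ ‖g (x - α)‖ := by
  have hω0 : ω ≠ 0 := by intro h; simp [h] at hω
  have hl0 : (lam : ℂ) ≠ 0 := by exact_mod_cast (by linarith : lam ≠ 0)
  set Z : Set UnitAddCircle := {x | g x = 0 ∧ g (x - α) = 0} with hZ
  have hg2 : Measurable fun x => g (x - α) := hg.comp (measurable_id.sub_const α)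
  have hZm : MeasurableSet Z :=
    (hg (measurableSet_singleton 0)).inter (hg2 (measurableSet_singleton 0))
  have hle : Z ≤ᵐ[hm] (fun x => x + α) ⁻¹' Z := by
    filter_upwards [heq] with x hx hxZ
    obtain ⟨h1, h2⟩ := (hxZ : g x = 0 ∧ g (x - α) = 0)
    rw [h1, h2] at hx
    have h3 : g (x + α) = 0 := by simpa [hω0, hl0] using hx
    exact (⟨h3, by rw [add_sub_cancel_right]; exact h1⟩ : g (x + α) = 0 ∧ g (x + α - α) = 0)
  rcases (erg hα).ae_empty_or_univ_of_ae_le_preimage hZm.nullMeasurableSet hle with h | h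
  · rw [ae_eq_empty] at h
    have : ∀ᵐ x ∂hm, x ∉ Z := measure_eq_zero_iff_ae_notMem.mp h
    filter_upwards [this] with x hx
    by_contra hc
    rw [lt_max_iff, not_or, norm_pos_iff, norm_pos_iff, not_not, not_not] at hc
    exact hx hc
  · exfalso
    apply hne
    filter_upwards [ae_eq_univ.mp h |> fun h => measure_eq_zero_iff_ae_notMem.mp h] with x hx
    rw [Set.mem_compl_iff, not_not] at hx
    exact hx.1

lemma bad_small (r : UnitAddCircle → ℝ) (hr : Measurable r) (hpos : ∀ᵐ x ∂hm, 0 < r x) (η : ℝ) (hη : 0 < η) :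
    ∃ δ : ℝ, 0 < δ ∧ hm.real {x | ¬ (δ ≤ r x ∧ r x ≤ δ⁻¹)} < η := by
  set B : ℕ → Set UnitAddCircle := fun k => {x | ¬ (1 / ((k : ℝ) + 1) ≤ r x ∧ r x ≤ (1 / ((k : ℝ) + 1))⁻¹)} with hB
  have hBm : ∀ k, MeasurableSet (B k) := fun k =>
    ((measurableSet_le measurable_const hr).inter (measurableSet_le hr measurable_const)).compl
  have hanti : Antitone B := by
    intro k l hkl x hx hc
    apply hx
    have hkl' : (k : ℝ) ≤ l := by exact_mod_cast hkl
    refine ⟨(one_div_le_one_div_of_le (by positivity) (by linarith)).trans hc.1, hc.2.trans ?_⟩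
    simp only [one_div, inv_inv]; linarith
  have ht := tendsto_measure_iInter_atTop (μ := hm) (s := B) (fun k => (hBm k).nullMeasurableSet) hanti ⟨0, measure_ne_top _ _⟩
  have h0 : hm (⋂ k, B k) = 0 := by
    refine measure_mono_null ?_ (ae_iff.mp hpos)
    intro x hx hp
    simp only [Set.mem_iInter] at hx
    obtain ⟨k, hk⟩ := exists_nat_ge (max (r x) (1 / r x))
    apply hx k
    have hk1 : r x ≤ k := (le_max_left _ _).trans hk
    have hk2 : 1 / r x ≤ k := (le_max_right _ _).trans hk
    refine ⟨?_, ?_⟩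
    · rw [div_le_iff₀ hp] at hk2
      rw [div_le_iff₀ (by positivity)]
      nlinarith
    · simp only [one_div, inv_inv]; linarith
  rw [h0] at ht
  have ht2 := (ENNReal.tendsto_toReal ENNReal.zero_ne_top).comp ht
  obtain ⟨k, hk⟩ := (ht2.eventually (gt_mem_nhds (by simpa using hη))).exists
  exact ⟨1 / ((k : ℝ) + 1), by positivity, hk⟩

open Classical in
lemma TT_gap (lam E : ℝ) (hlam : 1 < lam) (α : UnitAddCircle) (g : UnitAddCircle → ℂ) (ω : ℂ)
    (hω : ‖ω‖ = 1) (δ : ℝ) (hδ : 0 < δ) (x : UnitAddCircle)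
    (heq : ∀ n : ℕ, lam * (ω * g (x + n • α + α) + ω⁻¹ * g (x + n • α - α)) + vp (x + n • α) * g (x + n • α)
      = E * g (x + n • α)) (r : UnitAddCircle → ℝ) (hr : r = fun x => max ‖g x‖ ‖g (x - α)‖) (n : ℕ)
    (h0 : δ ≤ r x ∧ r x ≤ δ⁻¹) (hn : δ ≤ r (x + n • α) ∧ r (x + n • α) ≤ δ⁻¹) (K : ℝ) (hK : K = KC lam 1 E) :
    ‖TT lam 1 E α n x‖ ≤ 2 * (lam ^ n * ((((2 / δ / δ + 1) / δ + 2 * K * (2 / δ / δ) / δ) / δ + 2 / δ / δ) * ((n + 1) *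
      K ^ (∑ i ∈ Finset.range (n + 1), if (δ ≤ r (x + i • α) ∧ r (x + i • α) ≤ δ⁻¹) then 0 else 1)))) := by
  have hω0 : ω ≠ 0 := by intro h; simp [h] at hω
  have hl0 : (lam : ℂ) ≠ 0 := by exact_mod_cast (by linarith : lam ≠ 0)
  have hK1 : 1 ≤ K := hK ▸ KC_ge _ _ _
  set Ψ : ℕ → Fin 2 → ℂ := fun n => ![ω ^ n * g (x + n • α), ω ^ n * ω⁻¹ * g (x + n • α - α)] with hΨ
  have hΨr : ∀ n, ‖Ψ n‖ = r (x + n • α) := by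
    intro n
    rw [hr]
    apply le_antisymm
    · refine (pi_norm_le_iff_of_nonneg (by positivity)).mpr fun i => ?_
      fin_cases i
      · simp [hΨ, hω]
      · simp [hΨ, hω]
    · refine max_le ?_ ?_
      · have := norm_le_pi_norm (Ψ n) 0
        simpa [hΨ, hω] using this
      · have := norm_le_pi_norm (Ψ n) 1
        simpa [hΨ, hω] using this
  set A : ℕ → Matrix (Fin 2) (Fin 2) ℂ := fun i => (lam : ℂ)⁻¹ • Tm lam 1 E (x + i • α) with hA
  have key : ∀ j : Fin 2, ‖((lam : ℂ) ^ n)⁻¹ • (TT lam 1 E α n x).mulVec (Pi.single j 1)‖ ≤ _ := fun j =>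
    gap A K δ hK1 hδ
      (by
        intro i
        simp only [hA, Matrix.det_smul, Tm, Matrix.det_fin_two_of, Fintype.card_fin]
        field_simp; ring)
      (by
        intro i
        simp only [hA]
        rw [norm_smul, norm_inv, Complex.norm_real, Real.norm_eq_abs, abs_of_pos (by linarith), hK]
        calc lam⁻¹ * ‖Tm lam 1 E (x + i • α)‖ ≤ 1 * KC lam 1 E :=
              mul_le_mul (inv_le_one_of_one_le₀ hlam.le) (Tm_norm _ _ _ _) (norm_nonneg _) zero_le_one
          _ = _ := one_mul _)
      (fun n => ((lam : ℂ) ^ n)⁻¹ • (TT lam 1 E α n x).mulVec (Pi.single j 1)) Ψ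
      (by
        intro i
        simp only [hA, TT]
        rw [Matrix.smul_mulVec, Matrix.mulVec_smul, Matrix.mulVec_mulVec, smul_smul, pow_succ, mul_inv, mul_comm])
      (by
        intro i
        have h := heq i
        have e1 : x + (i + 1) • α = x + i • α + α := by rw [succ_nsmul]; abel
        simp only [hA, hΨ, Tm, e1, add_sub_cancel_right]
        ext k
        fin_cases k
        · simp [Matrix.smul_mulVec, Matrix.mulVec, dotProduct, Fin.sum_univ_two]
          field_simp
          field_simp at h
          rw [pow_succ]
          linear_combination (ω ^ i) * h
        · simp [Matrix.smul_mulVec, Matrix.mulVec, dotProduct, Fin.sum_univ_two]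
          field_simp
          ring)
      (by
        simp only [pow_zero, inv_one, one_smul, TT, Matrix.one_mulVec]
        refine (pi_norm_le_iff_of_nonneg zero_le_one).mpr fun i => ?_
        fin_cases i <;> fin_cases j <;> simp) n
      (by rw [hΨr]; simpa using h0) (by rw [hΨr]; exact hn)
  simp only [hΨr] at key
  refine norm_le_four _ _ fun i j => ?_
  have h1 := (norm_le_pi_norm _ i).trans (key j)
  rw [Matrix.mulVec_single_one, Pi.smul_apply, Matrix.col_apply, norm_smul, norm_inv, norm_pow,
    Complex.norm_real, Real.norm_eq_abs, abs_of_pos (by linarith : 0 < lam), inv_mul_le_iff₀ (by positivity)] at h1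
  exact h1


attribute [local instance] Matrix.linftyOpNormedRing Matrix.linftyOpNormedAlgebra

open Classical in
lemma TT_log (lam E : ℝ) (hlam : 1 < lam) (α : UnitAddCircle) (g : UnitAddCircle → ℂ) (ω : ℂ)
    (hω : ‖ω‖ = 1) (δ : ℝ) (hδ : 0 < δ) (r : UnitAddCircle → ℝ) (hr : r = fun x => max ‖g x‖ ‖g (x - α)‖)
    (b : UnitAddCircle → ℝ) (hb : b = Set.indicator {x | ¬ (δ ≤ r x ∧ r x ≤ δ⁻¹)} (fun _ => 1)) :
    ∃ D : ℝ, 0 ≤ D ∧ ∀ x, (∀ n : ℕ, lam * (ω * g (x + n • α + α) + ω⁻¹ * g (x + n • α - α))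
      + vp (x + n • α) * g (x + n • α) = E * g (x + n • α)) → ∀ n : ℕ,
      Real.log ‖TT lam 1 E α n x‖ ≤ n * Real.log lam + ((∑ i ∈ Finset.range (n + 1), b (x + i • α)) + n * b x + n * b (x + n • α))
        * Real.log (KC lam 1 E) + (D + Real.log (n + 1)) := by
  set K := KC lam 1 E with hK
  have hK1 : 1 ≤ K := KC_ge _ _ _
  have hlK : 0 ≤ Real.log K := Real.log_nonneg hK1
  have hll : 0 ≤ Real.log lam := Real.log_nonneg hlam.le
  set c := (((2 / δ / δ + 1) / δ + 2 * K * (2 / δ / δ) / δ) / δ + 2 / δ / δ) with hc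
  have hc0 : 0 < c := by positivity
  refine ⟨|Real.log (2 * c)|, abs_nonneg _, fun x heq n => ?_⟩
  have hb0 : ∀ y, 0 ≤ b y := fun y => by rw [hb]; exact Set.indicator_nonneg (fun _ _ => zero_le_one) y
  have hbs : 0 ≤ ∑ i ∈ Finset.range (n + 1), b (x + i • α) := Finset.sum_nonneg fun i _ => hb0 _
  have hln : 0 ≤ Real.log ((n : ℝ) + 1) := Real.log_nonneg (by linarith [Nat.cast_nonneg (α := ℝ) n])
  have hTT := TT_ge lam 1 hlam.le E α n x
  have habs := abs_nonneg (Real.log (2 * c))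
  have hnn : (0 : ℝ) ≤ n := Nat.cast_nonneg n
  have triv : Real.log ‖TT lam 1 E α n x‖ ≤ n * Real.log K := by
    rw [← Real.log_pow]
    exact Real.log_le_log (by linarith) (TT_le _ _ _ _ _ _)
  have hbad : ∀ y, ¬ (δ ≤ r y ∧ r y ≤ δ⁻¹) → b y = 1 := fun y hy => by
    rw [hb]; exact Set.indicator_of_mem (s := {x | ¬ (δ ≤ r x ∧ r x ≤ δ⁻¹)}) hy _
  have hgood : ∀ y, (δ ≤ r y ∧ r y ≤ δ⁻¹) → b y = 0 := fun y hy => by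
    rw [hb]; exact Set.indicator_of_notMem (s := {x | ¬ (δ ≤ r x ∧ r x ≤ δ⁻¹)}) (fun h => h hy) _
  have m1 := mul_nonneg hbs hlK
  have m2 := mul_nonneg (mul_nonneg hnn (hb0 x)) hlK
  have m3 := mul_nonneg (mul_nonneg hnn (hb0 (x + n • α))) hlK
  have m4 := mul_nonneg hnn hll
  by_cases h0 : δ ≤ r x ∧ r x ≤ δ⁻¹
  · by_cases hn : δ ≤ r (x + n • α) ∧ r (x + n • α) ≤ δ⁻¹
    · have h := TT_gap lam E hlam α g ω hω δ hδ x heq r hr n h0 hn K hK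
      set β : ℕ := ∑ i ∈ Finset.range (n + 1), if (δ ≤ r (x + i • α) ∧ r (x + i • α) ≤ δ⁻¹) then 0 else 1 with hβ
      have hβb : (β : ℝ) = ∑ i ∈ Finset.range (n + 1), b (x + i • α) := by
        rw [hβ]; push_cast
        refine Finset.sum_congr rfl fun i _ => ?_
        split_ifs with hi
        · rw [hgood _ hi]
        · rw [hbad _ hi]
      have h2 := Real.log_le_log (by linarith) h
      rw [← hc] at h2
      have e : 2 * (lam ^ n * (c * (((n : ℝ) + 1) * K ^ β))) = lam ^ n * K ^ β * (2 * c) * ((n : ℝ) + 1) := by ring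
      have k1 : (0:ℝ) < lam ^ n := by positivity
      have k2 : (0:ℝ) < K ^ β := by positivity
      rw [e, Real.log_mul (by positivity) (by positivity), Real.log_mul (by positivity) (by positivity),
        Real.log_mul (by positivity) (by positivity), Real.log_pow, Real.log_pow, hβb] at h2
      have := le_abs_self (Real.log (2 * c))
      linarith
    · rw [hbad _ hn] at m3 ⊢
      linarith
  · rw [hbad _ h0] at m2 ⊢
    linarith

lemma In_bound (lam E : ℝ) (hlam : 1 < lam) {α : UnitAddCircle} (hα : Irr α) (g : UnitAddCircle → ℂ) (ω : ℂ)
    (hg : Measurable g) (hω : ‖ω‖ = 1)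
    (heq : ∀ᵐ x ∂hm, lam * (ω * g (x + α) + ω⁻¹ * g (x - α)) + vp x * g x = E * g x)
    (hne : ¬ (g =ᵐ[hm] 0)) (ε : ℝ) (hε : 0 < ε) :
    ∃ m : ℕ, m ≠ 0 ∧ In lam 1 E α m / m ≤ Real.log lam + ε := by
  have hlK : 0 ≤ Real.log (KC lam 1 E) := Real.log_nonneg (KC_ge _ _ _)
  set LK := Real.log (KC lam 1 E) with hLK
  set r : UnitAddCircle → ℝ := fun x => max ‖g x‖ ‖g (x - α)‖ with hr
  have hg2 : Measurable fun x => g (x - α) := hg.comp (measurable_id.sub_const α)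
  have hrm : Measurable r := hg.norm.max hg2.norm
  obtain ⟨δ, hδ, hsmall⟩ := bad_small r hrm (r_pos lam E hlam hα g ω hg hω heq hne) (ε / (8 * (LK + 1))) (by positivity)
  set B : Set UnitAddCircle := {x | ¬ (δ ≤ r x ∧ r x ≤ δ⁻¹)} with hB
  have hBm : MeasurableSet B :=
    ((measurableSet_le measurable_const hrm).inter (measurableSet_le hrm measurable_const)).compl
  obtain ⟨D, hD, hmain⟩ := TT_log lam E hlam α g ω hω δ hδ r hr (Set.indicator B fun _ => 1) rfl
  set b : UnitAddCircle → ℝ := Set.indicator B fun _ => 1 with hb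
  have bint : Integrable b hm := (integrable_const 1).indicator hBm
  have bI : ∫ x, b x ∂hm = hm.real B := by
    rw [hb, integral_indicator hBm]; simp
  have bint' : ∀ a, Integrable (fun x => b (x + a)) hm := fun a => bint.comp_add_right a
  have bI' : ∀ a, ∫ x, b (x + a) ∂hm = hm.real B := fun a => by
    rw [integral_add_right_eq_self b a, bI]
  have hall : ∀ᵐ x ∂hm, ∀ n : ℕ, lam * (ω * g (x + n • α + α) + ω⁻¹ * g (x + n • α - α))
      + vp (x + n • α) * g (x + n • α) = E * g (x + n • α) := by
    rw [ae_all_iff]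
    intro n
    have hq := (measurePreserving_add_right hm (n • α)).quasiMeasurePreserving.ae heq
    exact hq
  have hIn : ∀ n : ℕ, In lam 1 E α n ≤ n * Real.log lam + (3 * n + 1) * hm.real B * LK + (D + Real.log (n + 1)) := by
    intro n
    have s1 : Integrable (fun x => ∑ i ∈ Finset.range (n + 1), b (x + i • α)) hm :=
      integrable_finsetSum _ fun i _ => bint' _
    have s2 : Integrable (fun x => n * b x) hm := bint.const_mul _
    have s3 : Integrable (fun x => n * b (x + n • α)) hm := (bint' _).const_mul _
    have s4 := ((s1.add s2).add s3).mul_const LK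
    have s5 := ((integrable_const (n * Real.log lam)).add s4).add (integrable_const (μ := hm) (D + Real.log (n + 1)))
    have hle : In lam 1 E α n ≤ _ := integral_mono_ae (logTT_int lam 1 hlam.le E α n) s5 (by
      filter_upwards [hall] with x hx
      exact hmain x hx n)
    refine hle.trans (le_of_eq ?_)
    rw [integral_add' ((integrable_const (n * Real.log lam)).add s4) (integrable_const _),
      integral_add' (integrable_const _) s4, integral_mul_const (μ := hm) LK, integral_add' (s1.add s2) s3, integral_add' s1 s2,
      integral_finsetSum _ (fun i _ => bint' _), integral_const_mul (n : ℝ) b, integral_const_mul (n : ℝ) (fun x => b (x + n • α)), bI, bI']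
    simp only [bI', integral_const, Finset.sum_const, Finset.card_range, probReal_univ, smul_eq_mul, nsmul_eq_mul]
    push_cast
    ring
  have hlog := (Real.isLittleO_log_id_atTop.bound (show 0 < ε / 8 by positivity))
  have hlog2 : ∀ᶠ n : ℕ in atTop, ‖Real.log ((n : ℝ) + 1)‖ ≤ ε / 8 * ‖id ((n : ℝ) + 1)‖ :=
    (tendsto_atTop_add_const_right _ 1 tendsto_natCast_atTop_atTop).eventually hlog
  have hD2 : ∀ᶠ n : ℕ in atTop, D / (ε / 4) ≤ n := tendsto_natCast_atTop_atTop.eventually_ge_atTop _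
  obtain ⟨n, ⟨h1, h2⟩, h3⟩ := ((hlog2.and hD2).and (eventually_ge_atTop 1)).exists
  refine ⟨n, by omega, ?_⟩
  have h3' : (1 : ℝ) ≤ n := by exact_mod_cast h3
  rw [div_le_iff₀ (by linarith)]
  refine (hIn n).trans ?_
  rw [div_le_iff₀ (by positivity)] at h2
  have h4 : Real.log ((n : ℝ) + 1) ≤ ε / 8 * (n + 1) := by
    refine (le_abs_self _).trans ?_
    simpa [abs_of_pos (show (0:ℝ) < n + 1 by positivity)] using h1
  have h5 : hm.real B * LK ≤ ε / 8 := by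
    rw [lt_div_iff₀ (by positivity)] at hsmall
    have := measureReal_nonneg (μ := hm) (s := B)
    nlinarith
  have h6 : (3 * n + 1) * (hm.real B * LK) ≤ (4 * n) * (ε / 8) :=
    mul_le_mul (by linarith) h5 (mul_nonneg measureReal_nonneg hlK) (by positivity)
  rw [mul_assoc]
  nlinarith

lemma TT_final (lam E : ℝ) (hlam : 1 < lam) {α θ : UnitAddCircle} (hα : Irr α) (u : lp (fun _ : ℤ => ℝ) 2)
    (hu : ∀ n : ℤ, u (n + 1) + u (n - 1) + lam * vp (θ + n • α) * u n = E * u n) (hne : u ≠ 0)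
    (ε : ℝ) (hε : 0 < ε) :
    ∃ C, 0 < C ∧ ∀ n x, ‖TT 1 lam E α n x‖ ≤ C * Real.exp (n * (Real.log lam + ε)) := by
  obtain ⟨g, ω, hg, hω, heq, hg0⟩ := exists_g lam E α θ u hu hne
  exact main_bound lam hlam E hα (fun ε hε => In_bound lam E hlam hα g ω hg hω heq hg0 ε hε) ε hε


attribute [local instance] Matrix.linftyOpNormedRing Matrix.linftyOpNormedAlgebra

lemma wron (u v : ℤ → ℝ) (E e S : ℝ) (k : ℤ) (hu : ∀ n, u (n + 1) + u (n - 1) + v n * u n = E * u n)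
    (he : ∀ n, |v n - v (k - n)| ≤ e) (hS : ∀ s : Finset ℤ, ∑ n ∈ s, u n ^ 2 ≤ S)
    (h0 : Tendsto u cofinite (nhds 0)) (c : ℤ) :
    |u c * u (k - (c + 1)) - u (c + 1) * u (k - c)| ≤ e * S := by
  have he0 : 0 ≤ e := (abs_nonneg _).trans (he 0)
  set W : ℤ → ℝ := fun n => u n * u (k - (n + 1)) - u (n + 1) * u (k - n) with hW
  have hinc : ∀ n, |W n - W (n + 1)| ≤ e * ((u (n + 1) ^ 2 + u (k - (n + 1)) ^ 2) / 2) := by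
    intro n
    have h1 := hu (n + 1)
    have h2 := hu (k - (n + 1))
    have e1 : n + 1 - 1 = n := by ring
    have e2 : k - (n + 1) + 1 = k - n := by ring
    have e3 : k - (n + 1) - 1 = k - (n + 1 + 1) := by ring
    rw [e1] at h1
    rw [e2, e3] at h2
    have : W n - W (n + 1) = -(v (n + 1) - v (k - (n + 1))) * (u (n + 1) * u (k - (n + 1))) := by
      simp only [hW]
      linear_combination (-u (n + 1)) * h2 + u (k - (n + 1)) * h1
    rw [this, abs_mul, abs_neg]
    refine mul_le_mul (he _) ?_ (abs_nonneg _) he0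
    rw [abs_le]
    constructor <;> nlinarith [sq_nonneg (u (n + 1) + u (k - (n + 1))), sq_nonneg (u (n + 1) - u (k - (n + 1)))]
  have hN : ∀ N : ℕ, |W c| ≤ |W (c + N)| + e * S := by
    intro N
    have h1 : |W c| ≤ |W (c + N)| + ∑ i ∈ Finset.range N, e * ((u (c + i + 1) ^ 2 + u (k - (c + i + 1)) ^ 2) / 2) := by
      induction N with
      | zero => simp
      | succ N ih =>
        rw [Finset.sum_range_succ]
        have h2 := hinc (c + N)
        have h3 := abs_sub_abs_le_abs_sub (W (c + N)) (W (c + N + 1))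
        have e4 : c + ((N + 1 : ℕ) : ℤ) = c + N + 1 := by push_cast; ring
        rw [e4]
        linarith
    refine h1.trans (add_le_add_right ?_ _)
    rw [← Finset.mul_sum]
    refine mul_le_mul_of_nonneg_left ?_ he0
    rw [← Finset.sum_div, Finset.sum_add_distrib]
    have a1 := hS ((Finset.range N).map ⟨fun i : ℕ => c + i + 1, fun a b h => by simpa using h⟩)
    have a2 := hS ((Finset.range N).map ⟨fun i : ℕ => k - (c + i + 1), fun a b h => by simpa using h⟩)
    rw [Finset.sum_map] at a1 a2
    have a1' : ∑ x ∈ Finset.range N, u (c + x + 1) ^ 2 ≤ S := a1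
    have a2' : ∑ x ∈ Finset.range N, u (k - (c + x + 1)) ^ 2 ≤ S := a2
    linarith
  have hW0 : Tendsto (fun N : ℕ => |W (c + N)| + e * S) atTop (nhds (0 + e * S)) := by
    refine Tendsto.add_const _ ?_
    have t1 : ∀ f : ℕ → ℤ, Function.Injective f → Tendsto (fun N => u (f N)) atTop (nhds 0) := fun f hf => by
      rw [← Nat.cofinite_eq_atTop]
      exact h0.comp hf.tendsto_cofinite
    have b1 := t1 (fun N => c + N) (fun a b h => by simpa using h)
    have b2 := t1 (fun N => k - (c + N + 1)) (fun a b h => by simpa using h)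
    have b3 := t1 (fun N => c + N + 1) (fun a b h => by simpa using h)
    have b4 := t1 (fun N => k - (c + N)) (fun a b h => by simpa using h)
    have := ((b1.mul b2).sub (b3.mul b4)).abs
    simpa [hW] using this
  have := ge_of_tendsto' hW0 hN
  rwa [zero_add] at this

lemma prop_bound (a b : ℝ) (z : ℂ) (α : UnitAddCircle) (C L : ℝ) (hL : 0 ≤ L) (hC : 0 ≤ C)
    (hT : ∀ (n : ℕ) x, ‖TT a b z α n x‖ ≤ C * Real.exp (n * L)) (η : ℝ) (hη : 0 ≤ η) (n : ℕ) :
    ∀ (x : UnitAddCircle) (P : ℕ → Fin 2 → ℂ),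
      (∀ j : ℕ, ‖P (j + 1) - (Tm a b z (x + j • α)).mulVec (P j)‖ ≤ η) →
      ‖P n - (TT a b z α n x).mulVec (P 0)‖ ≤ n * η * (C * Real.exp (n * L)) := by
  induction n with
  | zero => intro x P _; simp [TT]
  | succ n ih =>
    intro x P hP
    have h1 := ih (x + α) (fun j => P (j + 1)) (fun j => by
      have := hP (j + 1)
      have e : x + (j + 1) • α = x + α + j • α := by rw [succ_nsmul]; abel
      rwa [e] at this)
    have h2 : P (n + 1) - (TT a b z α (n + 1) x).mulVec (P 0) = (P (n + 1) - (TT a b z α n (x + α)).mulVec (P (0 + 1)))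
        + (TT a b z α n (x + α)).mulVec (P (0 + 1) - (Tm a b z (x + 0 • α)).mulVec (P 0)) := by
      rw [TT_succ', Matrix.mulVec_sub, Matrix.mulVec_mulVec, zero_nsmul, add_zero]; abel
    rw [h2]
    refine (norm_add_le _ _).trans ?_
    have h3 : ‖(TT a b z α n (x + α)).mulVec (P (0 + 1) - (Tm a b z (x + 0 • α)).mulVec (P 0))‖ ≤ C * Real.exp (n * L) * η :=
      (Matrix.linfty_opNorm_mulVec _ _).trans (mul_le_mul (hT _ _) (hP 0) (norm_nonneg _) (by positivity))
    have h4 : C * Real.exp (n * L) ≤ C * Real.exp ((n + 1 : ℕ) * L) := by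
      refine mul_le_mul_of_nonneg_left (Real.exp_le_exp.mpr ?_) hC
      push_cast; nlinarith
    have h5 : 0 ≤ n * η + η := by positivity
    have h6 := mul_le_mul_of_nonneg_left h4 h5
    refine (add_le_add h1 h3).trans ?_
    push_cast at h6 ⊢
    linarith

lemma prop_bound' (a b : ℝ) (z : ℂ) (α : UnitAddCircle) (C L : ℝ) (hL : 0 ≤ L) (hC : 0 ≤ C)
    (hT : ∀ (n : ℕ) x, ‖TT a b z α n x‖ ≤ C * Real.exp (n * L)) (η : ℝ) (hη : 0 ≤ η) (n : ℕ)
    (x : UnitAddCircle) (P : ℕ → Fin 2 → ℂ)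
    (h : ∀ j : ℕ, ‖P (j + 1) - (Tm a b z (x + j • α)).mulVec (P j)‖ ≤ η) :
    ‖P n‖ ≤ C * Real.exp (n * L) * (‖P 0‖ + n * η) := by
  have h1 := prop_bound a b z α C L hL hC hT η hη n x P h
  have h2 := (Matrix.linfty_opNorm_mulVec (TT a b z α n x) (P 0)).trans (mul_le_mul_of_nonneg_right (hT n x) (norm_nonneg _))
  have h3 := norm_le_norm_add_norm_sub' (P n) ((TT a b z α n x).mulVec (P 0))
  linarith

lemma real_prop (lam E : ℝ) (α θ : UnitAddCircle) (C L : ℝ) (hL : 0 ≤ L) (hC : 0 ≤ C)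
    (hT : ∀ (n : ℕ) x, ‖TT 1 lam E α n x‖ ≤ C * Real.exp (n * L)) (η d : ℝ) (w : ℤ → ℝ)
    (hw : ∀ n, |w (n + 1) + w (n - 1) + lam * vp (θ + n • α) * w n - E * w n| ≤ η) (m : ℤ)
    (h0 : |w m| ≤ d) (h1 : |w (m + 1)| ≤ d) (n : ℕ) :
    |w (m + n)| ≤ C * Real.exp (n * L) * (d + n * η) ∧ |w (m + n + 1)| ≤ C * Real.exp (n * L) * (d + n * η) := by
  have hη : 0 ≤ η := (abs_nonneg _).trans (hw 0)
  have hd : 0 ≤ d := (abs_nonneg _).trans h0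
  have hpos : 0 ≤ C * Real.exp (n * L) := by positivity
  set P : ℕ → Fin 2 → ℂ := fun j => ![(w (m + j + 1) : ℂ), (w (m + j) : ℂ)] with hP
  have key := prop_bound' 1 lam E α C L hL hC hT η hη n (θ + (m + 1) • α) P (by
    intro j
    refine (pi_norm_le_iff_of_nonneg hη).mpr fun i => ?_
    have e1 : θ + (m + 1) • α + j • α = θ + (m + j + 1) • α := by
      rw [← natCast_zsmul, add_assoc, ← add_zsmul]; congr 2; ring
    rw [e1]
    fin_cases i
    · have := hw (m + j + 1)
      have e2 : m + (j : ℤ) + 1 - 1 = m + j := by ring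
      rw [e2, ← Real.norm_eq_abs, ← Complex.norm_real] at this
      refine le_trans (le_of_eq ?_) this
      congr 1
      have e3 : m + ((j + 1 : ℕ) : ℤ) = m + j + 1 := by push_cast; ring
      simp [hP, Tm, Matrix.mulVec, dotProduct, Fin.sum_univ_two, ← add_assoc]
      ring
    · simpa [hP, Tm, Matrix.mulVec, dotProduct, Fin.sum_univ_two, ← add_assoc] using hη)
  have hP0 : ‖P 0‖ ≤ d := by
    refine (pi_norm_le_iff_of_nonneg hd).mpr fun i => ?_
    fin_cases i <;> simpa [hP]
  have key2 : ‖P n‖ ≤ C * Real.exp (n * L) * (d + n * η) :=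
    key.trans (mul_le_mul_of_nonneg_left (by linarith) hpos)
  refine ⟨?_, ?_⟩
  · have := (norm_le_pi_norm (P n) 1).trans key2
    simpa [hP] using this
  · have := (norm_le_pi_norm (P n) 0).trans key2
    simpa [hP] using this


attribute [local instance] Matrix.linftyOpNormedRing Matrix.linftyOpNormedAlgebra

lemma mul_small (a b q : ℝ) (hq : 0 ≤ q) (h : |a * b| ≤ q) : |a| ≤ √q ∨ |b| ≤ √q := by
  by_contra hc
  push Not at hc
  have h1 := Real.sqrt_nonneg q
  have h2 := Real.mul_self_sqrt hq
  rw [abs_mul] at h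
  nlinarith [hc.1, hc.2, mul_lt_mul'' hc.1 hc.2 h1 h1]

lemma center (u v : ℤ → ℝ) (E q V : ℝ) (k m : ℤ) (hk : k = 2 * m ∨ k = 2 * m + 1)
    (hu : ∀ n, u (n + 1) + u (n - 1) + v n * u n = E * u n) (hV : ∀ n, |v n| ≤ V) (hq : 0 ≤ q)
    (hW : |u m * u (k - (m + 1)) - u (m + 1) * u (k - m)| ≤ q) :
    ∃ σ : ℝ, |σ| = 1 ∧ |u m + σ * u (k - m)| ≤ (2 + |E| + V) * √q ∧
      |u (m + 1) + σ * u (k - (m + 1))| ≤ (2 + |E| + V) * √q := by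
  have hV0 : 0 ≤ V := (abs_nonneg _).trans (hV 0)
  have hE := abs_nonneg E
  have hs := Real.sqrt_nonneg q
  have h1s : √q ≤ (2 + |E| + V) * √q := by nlinarith
  have h2s : 2 * √q ≤ (2 + |E| + V) * √q := by nlinarith
  rcases hk with rfl | rfl
  · have e1 : 2 * m - (m + 1) = m - 1 := by ring
    have e2 : 2 * m - m = m := by ring
    rw [e1, e2] at hW ⊢
    have : u m * u (m - 1) - u (m + 1) * u m = u m * (u (m - 1) - u (m + 1)) := by ring
    rw [this] at hW
    rcases mul_small _ _ q hq hW with h | h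
    · refine ⟨1, by simp, ?_, ?_⟩
      · rw [one_mul, ← two_mul, abs_mul, abs_two]; linarith
      · have : u (m + 1) + 1 * u (m - 1) = (E - v m) * u m := by linear_combination hu m
        rw [this, abs_mul]
        refine mul_le_mul ?_ h (abs_nonneg _) (by positivity)
        have := abs_sub E (v m)
        have := hV m
        linarith
    · refine ⟨-1, by simp, ?_, ?_⟩
      · have : u m + -1 * u m = 0 := by ring
        rw [this, abs_zero]; positivity
      · have : u (m + 1) + -1 * u (m - 1) = -(u (m - 1) - u (m + 1)) := by ring
        rw [this, abs_neg]; linarith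
  · have e1 : 2 * m + 1 - (m + 1) = m := by ring
    have e2 : 2 * m + 1 - m = m + 1 := by ring
    rw [e1, e2] at hW ⊢
    have : u m * u m - u (m + 1) * u (m + 1) = (u m + u (m + 1)) * (u m - u (m + 1)) := by ring
    rw [this] at hW
    rcases mul_small _ _ q hq hW with h | h
    · refine ⟨1, by simp, ?_, ?_⟩
      · rw [one_mul]; linarith
      · rw [one_mul, add_comm]; linarith
    · refine ⟨-1, by simp, ?_, ?_⟩
      · rw [neg_one_mul, ← sub_eq_add_neg]; linarith
      · rw [neg_one_mul, ← sub_eq_add_neg, abs_sub_comm]; linarith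

lemma one_k (lam E : ℝ) (α θ : UnitAddCircle) (C L : ℝ) (hL : 0 ≤ L) (hC : 0 ≤ C)
    (hT : ∀ (n : ℕ) x, ‖TT 1 lam E α n x‖ ≤ C * Real.exp (n * L)) (u : ℤ → ℝ) (S M V e : ℝ) (k : ℤ)
    (hu : ∀ n : ℤ, u (n + 1) + u (n - 1) + lam * vp (θ + n • α) * u n = E * u n)
    (hS : ∀ s : Finset ℤ, ∑ n ∈ s, u n ^ 2 ≤ S) (hM : ∀ n, |u n| ≤ M)
    (h0 : Tendsto u cofinite (nhds 0)) (hV : ∀ n : ℤ, |lam * vp (θ + n • α)| ≤ V)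
    (he : ∀ n : ℤ, |lam * vp (θ + n • α) - lam * vp (θ + (k - n) • α)| ≤ e) :
    ∃ σ : ℝ, |σ| = 1 ∧ ∀ R, R = C * Real.exp ((|(k : ℝ)| / 2 + 1) * L) * ((2 + |E| + V) * √(e * S) + (|(k : ℝ)| / 2 + 1) * (e * M)) →
      |u (max 0 k) + σ * u (k - max 0 k)| ≤ R ∧ |u (max 0 k + 1) + σ * u (k - (max 0 k + 1))| ≤ R := by
  have he0 : 0 ≤ e := (abs_nonneg _).trans (he 0)
  have hS0 : 0 ≤ S := by simpa using hS ∅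
  have hM0 : 0 ≤ M := (abs_nonneg _).trans (hM 0)
  have hV0 : 0 ≤ V := (abs_nonneg _).trans (hV 0)
  have hE := abs_nonneg E
  have hk : k = 2 * (k / 2) ∨ k = 2 * (k / 2) + 1 := by omega
  set m := k / 2 with hmk
  have hW := wron u (fun n => lam * vp (θ + n • α)) E e S k hu he hS h0 m
  obtain ⟨σ, hσ, c1, c2⟩ := center u (fun n => lam * vp (θ + n • α)) E (e * S) V k m hk hu hV (by positivity) hW
  refine ⟨σ, hσ, ?_⟩
  rintro R rfl
  obtain ⟨n, hn⟩ : ∃ n : ℕ, max 0 k = m + n := ⟨(max 0 k - m).toNat, by omega⟩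
  have hnk : (n : ℝ) ≤ |(k : ℝ)| / 2 + 1 := by
    have : 2 * (n : ℤ) ≤ |k| + 2 := by
      rcases abs_cases k with h | h <;> omega
    have h2 : 2 * (n : ℝ) ≤ |(k : ℝ)| + 2 := by exact_mod_cast this
    linarith
  have key := real_prop lam E α θ C L hL hC hT (e * M) ((2 + |E| + V) * √(e * S))
    (fun n => u n + σ * u (k - n)) (by
      intro n
      have h1 := hu n
      have h2 := hu (k - n)
      have e2 : k - n + 1 = k - (n - 1) := by ring
      have e3 : k - n - 1 = k - (n + 1) := by ring
      rw [e2, e3] at h2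
      have : u (n + 1) + σ * u (k - (n + 1)) + (u (n - 1) + σ * u (k - (n - 1))) + lam * vp (θ + n • α) * (u n + σ * u (k - n))
          - E * (u n + σ * u (k - n)) = (lam * vp (θ + n • α) - lam * vp (θ + (k - n) • α)) * (σ * u (k - n)) := by
        linear_combination h1 + σ * h2
      rw [this, abs_mul, abs_mul, hσ, one_mul]
      exact mul_le_mul (he n) (hM _) (abs_nonneg _) he0) m c1 c2 n
  rw [hn]
  have hb : C * Real.exp (n * L) * ((2 + |E| + V) * √(e * S) + n * (e * M)) ≤
      C * Real.exp ((|(k : ℝ)| / 2 + 1) * L) * ((2 + |E| + V) * √(e * S) + (|(k : ℝ)| / 2 + 1) * (e * M)) := by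
    gcongr
  exact ⟨key.1.trans hb, key.2.trans hb⟩

lemma R_tendsto (C L L1 c1 S M Q : ℝ) (hL : L < L1) (hL1 : 0 < L1) (hc1 : 0 ≤ c1) (hS : 0 ≤ S) (hM : 0 ≤ M) (hC : 0 ≤ C) (hQ : 0 ≤ Q) (ρ : ℝ) (hρ : 0 < ρ) :
    ∀ᶠ k : ℤ in cofinite, ∀ e, 0 ≤ e → e ≤ c1 * Real.exp (-L1 * |(k : ℝ)|) →
      C * Real.exp ((|(k : ℝ)| / 2 + 1) * L) * (Q * √(e * S) + (|(k : ℝ)| / 2 + 1) * (e * M)) ≤ ρ := by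
  have hbase : Tendsto (fun x : ℝ => (x + 2) * Real.exp (-((L1 - L) / 2) * x)) atTop (nhds 0) := by
    have h1 := tendsto_rpow_mul_exp_neg_mul_atTop_nhds_zero 1 ((L1 - L) / 2) (by linarith)
    have h2 := tendsto_rpow_mul_exp_neg_mul_atTop_nhds_zero 0 ((L1 - L) / 2) (by linarith)
    have := h1.add (h2.const_mul 2)
    simp only [Real.rpow_one, Real.rpow_zero, one_mul, mul_zero, add_zero] at this
    exact this.congr fun x => by ring
  have hk : Tendsto (fun k : ℤ => |(k : ℝ)|) cofinite atTop :=
    (tendsto_norm_cocompact_atTop (E := ℝ)).comp Int.tendsto_coe_cofinite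
  set D := C * Real.exp L * (Q * √(c1 * S) + c1 * M) with hD
  have h3 := (hbase.const_mul D).comp hk
  rw [mul_zero] at h3
  filter_upwards [h3.eventually (gt_mem_nhds hρ)] with k hkρ e he0 he
  refine le_trans ?_ hkρ.le
  set x := |(k : ℝ)| with hx
  have hx0 : 0 ≤ x := abs_nonneg _
  simp only [Function.comp]
  have hsq : √(e * S) ≤ Real.exp (-L1 * x / 2) * √(c1 * S) := by
    rw [Real.sqrt_le_left (by positivity)]
    rw [mul_pow, Real.sq_sqrt (by positivity), ← Real.exp_nat_mul]
    have : ((2 : ℕ) : ℝ) * (-L1 * x / 2) = -L1 * x := by push_cast; ring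
    rw [this]
    nlinarith
  have he2 : e ≤ c1 * Real.exp (-L1 * x / 2) := by
    refine he.trans (mul_le_mul_of_nonneg_left (Real.exp_le_exp.mpr ?_) hc1)
    nlinarith [mul_nonneg hL1.le hx0]
  have h5 : Q * √(e * S) + (x / 2 + 1) * (e * M) ≤ (x + 2) * (Real.exp (-L1 * x / 2) * (Q * √(c1 * S) + c1 * M)) := by
    have g1 : Q * √(e * S) ≤ Q * (Real.exp (-L1 * x / 2) * √(c1 * S)) := by gcongr
    have g2 : e * M ≤ c1 * Real.exp (-L1 * x / 2) * M := by gcongr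
    have g3 : (x / 2 + 1) * (e * M) ≤ (x + 2) * (c1 * Real.exp (-L1 * x / 2) * M) :=
      mul_le_mul (by linarith) g2 (by positivity) (by linarith)
    have g4 : Q * (Real.exp (-L1 * x / 2) * √(c1 * S)) ≤ (x + 2) * (Q * (Real.exp (-L1 * x / 2) * √(c1 * S))) :=
      le_mul_of_one_le_left (by positivity) (by linarith)
    linarith
  calc C * Real.exp ((x / 2 + 1) * L) * (Q * √(e * S) + (x / 2 + 1) * (e * M))
      ≤ C * Real.exp ((x / 2 + 1) * L) * ((x + 2) * (Real.exp (-L1 * x / 2) * (Q * √(c1 * S) + c1 * M))) := by gcongr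
    _ = C * (Real.exp ((x / 2 + 1) * L) * Real.exp (-L1 * x / 2)) * ((x + 2) * (Q * √(c1 * S) + c1 * M)) := by ring
    _ = C * (Real.exp L * Real.exp (-((L1 - L) / 2) * x)) * ((x + 2) * (Q * √(c1 * S) + c1 * M)) := by
      rw [← Real.exp_add, ← Real.exp_add]; congr 3; ring
    _ = D * ((x + 2) * Real.exp (-((L1 - L) / 2) * x)) := by rw [hD]; ring

lemma irr_of_dioph {α : ℝ} (hα : IsDiophantine α) : Irr (α : UnitAddCircle) := by
  obtain ⟨κ, τ, hκ, hτ, h⟩ := hα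
  intro m hm0 hf
  have h1 := h m hm0
  have hpos : 0 < τ / |(m : ℝ)| ^ κ := by
    have : 0 < |(m : ℝ)| := abs_pos.mpr (by exact_mod_cast hm0)
    positivity
  rw [fourier_coe_apply, Complex.exp_eq_one_iff] at hf
  obtain ⟨n, hn⟩ := hf
  have hpi : (2 * π * Complex.I : ℂ) ≠ 0 := by simp [Real.pi_ne_zero]
  have h2 : (m * α : ℂ) = n := by
    have : (2 * π * Complex.I : ℂ) * (m * α) = (2 * π * Complex.I) * n := by
      simp only [Complex.ofReal_one, div_one] at hn
      linear_combination hn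
    exact mul_left_cancel₀ hpi this
  have h3 : (m : ℝ) * α = n := by exact_mod_cast h2
  rw [h3, distToInt, round_intCast, sub_self, abs_zero] at h1
  linarith

lemma pot_eq (lam α θ : ℝ) (n : ℤ) :
    lam * vp ((θ : UnitAddCircle) + n • (α : UnitAddCircle)) = amoPot lam α θ n := by
  have e : (θ : UnitAddCircle) + n • (α : UnitAddCircle) = ((θ + n * α : ℝ) : UnitAddCircle) := by
    rw [AddCircle.coe_add, ← AddCircle.coe_zsmul, zsmul_eq_mul]
  rw [e, vp, fourier_coe_apply, amoPot]
  have e2 : (2 * π * Complex.I * (1 : ℤ) * ((θ + n * α : ℝ) : ℂ) / (1 : ℝ) : ℂ) = ((2 * π * (θ + n * α) : ℝ) : ℂ) * Complex.I := by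
    push_cast; ring
  rw [e2, Complex.exp_ofReal_mul_I_re]
  ring

lemma sin_dist (y : ℝ) : |Real.sin (π * y)| ≤ π * distToInt y := by
  have e : π * y = π * (y - round y) + (round y : ℤ) * π := by ring
  rw [e, Real.sin_add_int_mul_pi, abs_mul, distToInt]
  have h1 : |(-1 : ℝ) ^ (round y)| = 1 := by rw [abs_zpow]; simp
  rw [h1, one_mul]
  refine (Real.abs_sin_le_abs).trans ?_
  rw [abs_mul, abs_of_pos Real.pi_pos]

lemma pot_diff (lam α θ : ℝ) (hlam : 0 < lam) (k n : ℤ) :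
    |amoPot lam α θ n - amoPot lam α θ (k - n)| ≤ 4 * lam * π * distToInt (2 * θ + k * α) := by
  have h := sin_dist (2 * θ + k * α)
  simp only [amoPot]
  rw [← mul_sub, Real.cos_sub_cos]
  have e : (2 * π * (θ + n * α) + 2 * π * (θ + ((k - n : ℤ) : ℝ) * α)) / 2 = π * (2 * θ + k * α) := by
    push_cast; ring
  rw [e]
  set s := Real.sin ((2 * π * (θ + n * α) - 2 * π * (θ + ((k - n : ℤ) : ℝ) * α)) / 2) with hs
  have h2 : |s| ≤ 1 := Real.abs_sin_le_one _
  rw [abs_mul, abs_mul, abs_mul, abs_mul, abs_neg, abs_two, abs_of_pos hlam]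
  have h3 := mul_le_mul h h2 (abs_nonneg _) ((abs_nonneg _).trans h)
  nlinarith

lemma freq_k (α θ L1 : ℝ) (hL1 : 0 < L1) (h : L1 < deltaPhase α θ) :
    ∃ᶠ k : ℤ in cofinite, distToInt (2 * θ + k * α) ≤ Real.exp (-L1 * |(k : ℝ)|) := by
  have h1 := frequently_lt_of_lt_limsup (f := cofinite) (isCoboundedUnder_le_of_le (cofinite : Filter ℤ) (x := 0) (fun k => by
      apply div_nonneg _ (abs_nonneg _)
      rw [neg_nonneg]
      refine Real.log_nonpos (abs_nonneg _) ?_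
      have := abs_sub_round (2 * θ + k * α)
      simp only [distToInt]; linarith)) h
  refine h1.mono fun k hk => ?_
  set d := distToInt (2 * θ + k * α) with hd
  have hd0 : 0 ≤ d := abs_nonneg _
  have hk0 : 0 < |(k : ℝ)| := by
    rcases (abs_nonneg (k : ℝ)).eq_or_lt with h0 | h0
    · rw [← h0, div_zero] at hk; linarith
    · exact h0
  rw [lt_div_iff₀ hk0] at hk
  rcases hd0.eq_or_lt with h0 | h0
  · rw [← h0]; positivity
  · rw [← Real.log_le_iff_le_exp h0]; linarith

lemma zero_of_two (u v : ℤ → ℝ) (E : ℝ) (hu : ∀ n, u (n + 1) + u (n - 1) + v n * u n = E * u n)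
    (h0 : u 0 = 0) (h1 : u 1 = 0) : ∀ n, u n = 0 := by
  have hp : ∀ n : ℕ, u n = 0 ∧ u (n + 1) = 0 := by
    intro n
    induction n with
    | zero => exact ⟨by simpa using h0, by simpa using h1⟩
    | succ n ih =>
      refine ⟨by exact_mod_cast ih.2, ?_⟩
      have := hu (n + 1)
      rw [add_sub_cancel_right, ih.1, ih.2] at this
      push_cast
      simpa using this
  have hn : ∀ n : ℕ, u (-n) = 0 ∧ u (-n + 1) = 0 := by
    intro n
    induction n with
    | zero => exact ⟨by simpa using h0, by simpa using h1⟩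
    | succ n ih =>
      have := hu (-n)
      rw [ih.1, ih.2] at this
      have e1 : -((n + 1 : ℕ) : ℤ) = -n - 1 := by push_cast; ring
      have e2 : -((n + 1 : ℕ) : ℤ) + 1 = -n := by push_cast; ring
      rw [e2, e1]
      refine ⟨?_, ih.1⟩
      simpa using this
  intro n
  obtain ⟨m, rfl | rfl⟩ := n.eq_nat_or_neg
  · exact (hp m).1
  · exact (hn m).1

theorem amo_no_point_spectrum
    (lam α θ : ℝ) (hlam : 1 < lam) (hα : IsDiophantine α)
    (hδ : Real.log lam < deltaPhase α θ)
    (E : ℝ) (u : lp (fun _ : ℤ => ℝ) 2)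
    (hu : IsEigenfunction (amoPot lam α θ) E (fun n => u n)) :
    u = 0 := by
  by_contra hne
  have hll : 0 < Real.log lam := Real.log_pos hlam
  obtain ⟨L1, hL1, hL1δ⟩ := exists_between hδ
  set ε := (L1 - Real.log lam) / 2 with hε
  have hε0 : 0 < ε := by rw [hε]; linarith
  have hu' : ∀ n : ℤ, u (n + 1) + u (n - 1) + lam * vp ((θ : UnitAddCircle) + n • (α : UnitAddCircle)) * u n = E * u n := by
    intro n; rw [pot_eq]; exact hu n
  obtain ⟨C, hC, hT⟩ := TT_final lam E hlam (irr_of_dioph hα) u hu' hne ε hε0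
  have hsum : Summable fun n => (u n) ^ 2 := by
    have h := (lp.memℓp u).summable (by norm_num)
    simpa using h
  set S := ∑' n, (u n) ^ 2 with hSdef
  have hS : ∀ s : Finset ℤ, ∑ n ∈ s, u n ^ 2 ≤ S := fun s => hsum.sum_le_tsum s fun i _ => sq_nonneg _
  have hS0 : 0 ≤ S := by simpa using hS ∅
  have hM : ∀ n, |u n| ≤ √S := fun n => by
    apply Real.abs_le_sqrt
    simpa using hS {n}
  have ht : Tendsto (fun n => u n) cofinite (nhds 0) := by
    have h1 := hsum.tendsto_cofinite_zero
    have h2 := (Real.continuous_sqrt.tendsto 0).comp h1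
    rw [Real.sqrt_zero] at h2
    rw [tendsto_zero_iff_abs_tendsto_zero]
    refine h2.congr fun n => ?_
    simp [Real.sqrt_sq_eq_abs]
  have hV : ∀ n : ℤ, |lam * vp ((θ : UnitAddCircle) + n • (α : UnitAddCircle))| ≤ 2 * lam := fun n => by
    rw [abs_mul, abs_of_pos (by linarith)]
    nlinarith [vp_abs ((θ : UnitAddCircle) + n • (α : UnitAddCircle))]
  have key : ∀ ρ : ℝ, 0 < ρ → |u 0| ≤ 2 * ρ ∧ (|u (-1)| ≤ 2 * ρ ∨ |u 1| ≤ 2 * ρ) := by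
    intro ρ hρ
    have f := freq_k α θ L1 (by linarith) hL1δ
    have hR := R_tendsto C (Real.log lam + ε) L1 (4 * lam * π) S (√S) (2 + |E| + 2 * lam) (by rw [hε]; linarith)
      (by linarith) (by positivity) hS0 (Real.sqrt_nonneg _) hC.le (by positivity) ρ hρ
    have hu0 : ∀ᶠ n in cofinite, |u n| ≤ ρ := by
      have := ((tendsto_zero_iff_abs_tendsto_zero _).mp ht).eventually (gt_mem_nhds hρ)
      exact this.mono fun n hn => le_of_lt hn
    have hup : ∀ᶠ n : ℤ in cofinite, |u (n + 1)| ≤ ρ :=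
      ((add_left_injective (1 : ℤ)).tendsto_cofinite).eventually hu0
    have hum : ∀ᶠ n : ℤ in cofinite, |u (n - 1)| ≤ ρ :=
      ((sub_left_injective (b := (1 : ℤ))).tendsto_cofinite).eventually hu0
    obtain ⟨k, hk, ⟨⟨hRk, a1⟩, a2⟩, a3⟩ := (f.and_eventually (((hR.and hu0).and hup).and hum)).exists
    set e := 4 * lam * π * distToInt (2 * θ + k * α) with he
    have hdn : 0 ≤ distToInt (2 * θ + k * α) := abs_nonneg _
    have he0 : 0 ≤ e := by positivity
    have hee : e ≤ 4 * lam * π * Real.exp (-L1 * |(k : ℝ)|) := mul_le_mul_of_nonneg_left hk (by positivity)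
    obtain ⟨σ, hσ, hfin⟩ := one_k lam E α θ C (Real.log lam + ε) (by linarith) hC.le hT (fun n => u n) S (√S) (2 * lam) e k
      hu' hS hM ht hV (fun n => by rw [pot_eq, pot_eq]; exact pot_diff lam α θ (by linarith) k n)
    obtain ⟨b1, b2⟩ := hfin _ rfl
    have b1' := b1.trans (hRk e he0 hee)
    have b2' := b2.trans (hRk e he0 hee)
    have tri : ∀ a b : ℝ, |a + σ * b| ≤ ρ → |a| ≤ ρ → |b| ≤ 2 * ρ := fun a b h1 h2 => by
      have h3 : |σ * b| ≤ |a + σ * b| + |a| := by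
        have := abs_sub (a + σ * b) a
        rwa [add_sub_cancel_left] at this
      rw [abs_mul, hσ, one_mul] at h3
      linarith
    have tri2 : ∀ a b : ℝ, |a + σ * b| ≤ ρ → |b| ≤ ρ → |a| ≤ 2 * ρ := fun a b h1 h2 => by
      have h3 : |a| ≤ |a + σ * b| + |σ * b| := by
        have := abs_sub (a + σ * b) (σ * b)
        rwa [add_sub_cancel_right] at this
      rw [abs_mul σ, hσ, one_mul] at h3
      linarith
    rcases le_total 0 k with h0 | h0
    · rw [max_eq_right h0] at b1' b2'
      have e1 : k - k = 0 := by ring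
      have e2 : k - (k + 1) = -1 := by ring
      rw [e1] at b1'
      rw [e2] at b2'
      exact ⟨tri _ _ b1' a1, Or.inl (tri _ _ b2' a2)⟩
    · rw [max_eq_left h0] at b1' b2'
      have e1 : k - 0 = k := by ring
      have e2 : k - (0 + 1) = k - 1 := by ring
      rw [e1] at b1'
      rw [e2] at b2'
      exact ⟨tri2 _ _ b1' a1, Or.inr (by simpa using tri2 _ _ b2' a3)⟩
  have z0 : u 0 = 0 := by
    rw [← abs_nonpos_iff]
    refine le_of_forall_pos_le_add fun ρ hρ => ?_
    have := (key (ρ / 2) (by linarith)).1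
    linarith
  have hpm : |u (-1)| = |u 1| := by
    have h := hu 0
    simp only [zero_add, zero_sub, z0, mul_zero, add_zero] at h
    have : u (-1) = -u 1 := by linarith
    rw [this, abs_neg]
  have z1 : u 1 = 0 := by
    rw [← abs_nonpos_iff]
    refine le_of_forall_pos_le_add fun ρ hρ => ?_
    rcases (key (ρ / 2) (by linarith)).2 with h | h
    · rw [hpm] at h; linarith
    · linarith
  apply hne
  ext n
  exact zero_of_two (fun n => u n) _ E hu z0 z1 n
end
end
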